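/- Let q ≥ 4 be an even integer, λ = 2cos(π/q), 1/2 ≤ α ≤ 1/λ, and set ℒ_α = min{ λ/(λ+2), λ(2 − αλ²)/(4 − λ²) } and C_{q,α} = 1/log((1 + cos(π/q))/sin(π/q)). For x ∈ [λ(α−1), αλ] with T_α^n(x) ≠ 0 for all n ≥ 0, define the approximation coefficients Θ_n(x) = S_n²·|x − R_n/S_n|, where R_n/S_n are the α-Rosen convergents of x. Then for Lebesgue-almost every such x and for every c ≥ 1/ℒ_α, the limit lim_{N→∞} (1/N)·#{ n : 1 ≤ n ≤ N, Θ_n(x) < 1/c } exists and equals λ·C_{q,α}/c. -/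

import Mathlib

open Set MeasureTheory

/-- The digit function `d(x) = ⌊|1/(xλ)| + 1 - α⌋` of the α-Rosen continued fraction. -/
noncomputable def dfun (lam α x : ℝ) : ℤ := ⌊|1 / (x * lam)| + 1 - α⌋

/-- The α-Rosen continued fraction map `T_α`. -/
noncomputable def Tmap (lam α x : ℝ) : ℝ :=
  if x = 0 then 0 else |1 / x| - lam * (dfun lam α x : ℝ)

/-- The two-dimensional natural extension map `𝒯_α(x, y) = (T_α(x), 1/(d(x)λ + ε(x)y))`. -/
noncomputable def Tnat (lam α : ℝ) (z : ℝ × ℝ) : ℝ × ℝ :=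
  (Tmap lam α z.1, 1 / ((dfun lam α z.1 : ℝ) * lam + Real.sign z.1 * z.2))

open scoped Classical

/-- The pair `(Rₙ, R_{n-1})` of numerators of the α-Rosen convergents of `x`. -/
noncomputable def Rpair (lam α x : ℝ) : ℕ → ℝ × ℝ
  | 0 => (0, 1)
  | n + 1 =>
    ((dfun lam α ((Tmap lam α)^[n] x) : ℝ) * lam * (Rpair lam α x n).1
        + Real.sign ((Tmap lam α)^[n] x) * (Rpair lam α x n).2,
      (Rpair lam α x n).1)

/-- The pair `(Sₙ, S_{n-1})` of denominators of the α-Rosen convergents of `x`. -/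
noncomputable def Spair (lam α x : ℝ) : ℕ → ℝ × ℝ
  | 0 => (1, 0)
  | n + 1 =>
    ((dfun lam α ((Tmap lam α)^[n] x) : ℝ) * lam * (Spair lam α x n).1
        + Real.sign ((Tmap lam α)^[n] x) * (Spair lam α x n).2,
      (Spair lam α x n).1)

/-- The approximation coefficients `Θₙ(x) = Sₙ² |x - Rₙ/Sₙ|`. -/
noncomputable def Theta (lam α x : ℝ) (n : ℕ) : ℝ :=
  (Spair lam α x n).1 ^ 2 * |x - (Rpair lam α x n).1 / (Spair lam α x n).1|

/-!
The natural extension `𝒯(t, v) = (T_α t, 1/(d λ + ε v))` is a piecewise Möbius bijection, up to null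
sets, of a staircase domain onto itself and preserves the density `1/(1 + tv)²`. The coefficient
`Θ_n(x)` is the value of `|t/(1 + tv)|` at the `n`-th point of the orbit of `(x, 0)`, and below the
threshold `ℒ_α` the set `|t/(1 + tv)| < κ` has measure `λκ`, while the total mass is `1/C_{q,α}`. So
the theorem is the pointwise ergodic theorem along the orbit of `(x, 0)`.

Orbits over the same first coordinate approach each other, so the Birkhoff averages of an observable
that is Lipschitz along fibres depend only on the first coordinate, and their upper limits are
`T_α`-invariant. Ergodicity of `T_α` comes from the group generated by `x ↦ x + λ` and
`x ↦ 1/x`: a `T_α`-invariant function extends to the line as a function invariant under this group,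
and inverse branches of bounded distortion, along which the group moves a fixed interval into small
neighbourhoods of almost every point, give a zero-one law by Lebesgue density. The maximal ergodic
theorem then bounds the upper limits by the mean.
-/

/-! ### The maximal ergodic theorem -/

section MaximalErgodic

variable {X : Type*} {T : X → X} {f : X → ℝ}

/-- The maximal function `max (0, S₁ f, …, Sₙ f)` of the Birkhoff sums of `f` along `T`, written
through the recursion `Mₙ₊₁ = max (0, f + Mₙ ∘ T)` that drives the maximal ergodic theorem. -/
noncomputable def birkhoffMax (T : X → X) (f : X → ℝ) : ℕ → X → ℝ
  | 0 => fun _ => 0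
  | n + 1 => fun x => max 0 (f x + birkhoffMax T f n (T x))

lemma birkhoffMax_nonneg (T : X → X) (f : X → ℝ) (n : ℕ) (x : X) : 0 ≤ birkhoffMax T f n x := by
  cases n <;> simp [birkhoffMax]

lemma birkhoffMax_le_succ (T : X → X) (f : X → ℝ) (n : ℕ) :
    ∀ x, birkhoffMax T f n x ≤ birkhoffMax T f (n + 1) x := by
  induction n with
  | zero => exact fun x => birkhoffMax_nonneg T f 1 x
  | succ n ih => exact fun x => max_le_max le_rfl (by linarith [ih (T x)])

lemma birkhoffSum_le_birkhoffMax (T : X → X) (f : X → ℝ) (n : ℕ) :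
    ∀ x, birkhoffSum T f n x ≤ birkhoffMax T f n x := by
  induction n with
  | zero => simp [birkhoffMax]
  | succ n ih =>
    intro x
    rw [birkhoffSum_succ']
    exact le_max_of_le_right (by linarith [ih (T x)])

lemma birkhoffMax_sub_comp_le {n : ℕ} {x : X} (hx : 0 < birkhoffMax T f (n + 1) x) :
    birkhoffMax T f (n + 1) x - birkhoffMax T f (n + 1) (T x) ≤ f x := by
  have hmax : birkhoffMax T f (n + 1) x = f x + birkhoffMax T f n (T x) :=
    max_eq_right ((lt_max_iff.mp hx).resolve_left (lt_irrefl 0)).le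
  linarith [birkhoffMax_le_succ T f n (T x)]

variable [MeasurableSpace X] {μ : Measure X}

lemma integrable_birkhoffMax (hT : MeasurePreserving T μ μ) (hf : Integrable f μ) (n : ℕ) :
    Integrable (birkhoffMax T f n) μ := by
  induction n with
  | zero => exact integrable_zero _ _ _
  | succ n ih => exact (integrable_zero X ℝ μ).sup (hf.add (hT.integrable_comp_of_integrable ih))

lemma measurable_birkhoffMax (hT : Measurable T) (hf : Measurable f) (n : ℕ) :
    Measurable (birkhoffMax T f n) := by
  induction n with
  | zero => exact measurable_const
  | succ n ih => exact measurable_const.max (hf.add (ih.comp hT))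

lemma measurable_birkhoffSum (hT : Measurable T) (hf : Measurable f) (n : ℕ) :
    Measurable (birkhoffSum T f n) :=
  Finset.measurable_fun_sum _ fun k _ => hf.comp (hT.iterate k)

lemma setIntegral_birkhoffMax_pos_nonneg (hT : MeasurePreserving T μ μ) (hfm : Measurable f)
    (hf : Integrable f μ) (n : ℕ) : 0 ≤ ∫ x in {x | 0 < birkhoffMax T f (n + 1) x}, f x ∂μ := by
  set M := birkhoffMax T f (n + 1)
  set E := {x | 0 < M x}
  have hE : MeasurableSet E :=
    measurableSet_lt measurable_const (measurable_birkhoffMax hT.measurable hfm (n + 1))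
  have hM : Integrable M μ := integrable_birkhoffMax hT hf (n + 1)
  have hMT : Integrable (M ∘ T) μ := hT.integrable_comp_of_integrable hM
  have hM_E : ∫ x in E, M x ∂μ = ∫ x, M x ∂μ :=
    setIntegral_eq_integral_of_forall_compl_eq_zero fun x hx =>
      le_antisymm (not_lt.mp hx) (birkhoffMax_nonneg T f (n + 1) x)
  have hMT_E : ∫ x in E, (M ∘ T) x ∂μ ≤ ∫ x, (M ∘ T) x ∂μ :=
    setIntegral_le_integral hMT (.of_forall fun x => birkhoffMax_nonneg T f _ _)
  have hinv : ∫ x, (M ∘ T) x ∂μ = ∫ x, M x ∂μ := by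
    have hmap := integral_map hT.measurable.aemeasurable (f := M)
      (by rw [hT.map_eq]; exact hM.aestronglyMeasurable)
    rw [hT.map_eq] at hmap
    exact hmap.symm
  calc 0 ≤ ∫ x in E, M x ∂μ - ∫ x in E, (M ∘ T) x ∂μ := by linarith
    _ = ∫ x in E, (M x - (M ∘ T) x) ∂μ := (integral_sub hM.integrableOn hMT.integrableOn).symm
    _ ≤ ∫ x in E, f x ∂μ := setIntegral_mono_on (hM.sub hMT).integrableOn hf.integrableOn hE
        fun x hx => birkhoffMax_sub_comp_le hx

theorem integral_nonneg_of_ae_exists_birkhoffSum_pos (hT : MeasurePreserving T μ μ)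
    (hfm : Measurable f) (hf : Integrable f μ) (hpos : ∀ᵐ x ∂μ, ∃ n, 0 < birkhoffSum T f n x) :
    0 ≤ ∫ x, f x ∂μ := by
  set E : ℕ → Set X := fun n => {x | 0 < birkhoffMax T f (n + 1) x}
  have hE : ∀ n, MeasurableSet (E n) := fun n =>
    measurableSet_lt measurable_const (measurable_birkhoffMax hT.measurable hfm (n + 1))
  have hmono : Monotone E := monotone_nat_of_le_succ fun n x hx =>
    lt_of_lt_of_le hx (birkhoffMax_le_succ T f (n + 1) x)
  have hcover : (⋃ n, E n) =ᵐ[μ] univ := by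
    refine Filter.eventuallyEq_univ.mpr ?_
    filter_upwards [hpos] with x hx
    obtain ⟨n, hn⟩ := hx
    exact mem_iUnion.mpr ⟨n, hn.trans_le
      ((birkhoffSum_le_birkhoffMax T f n x).trans (birkhoffMax_le_succ T f n x))⟩
  have hlim := tendsto_setIntegral_of_monotone hE hmono (f := f) (μ := μ) hf.integrableOn
  rw [setIntegral_congr_set hcover, setIntegral_univ] at hlim
  exact ge_of_tendsto' hlim (setIntegral_birkhoffMax_pos_nonneg hT hfm hf)

end MaximalErgodic

/-! ### Angular parametrization -/

/-- The ratio `sin θ / sin (θ + 2β)`. The shift `θ ↦ θ + 2β` acts on it as the Möbius map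
`s ↦ 1 / (2 cos 2β - s)`, so it linearizes the orbits of the end points of `T_α`. -/
noncomputable def sineRatio (β θ : ℝ) : ℝ := Real.sin θ / Real.sin (θ + 2 * β)

section SineRatio

variable {β x y : ℝ}

lemma sineRatio_sub (hx : Real.sin (x + 2 * β) ≠ 0) (hy : Real.sin (y + 2 * β) ≠ 0) :
    sineRatio β y - sineRatio β x = Real.sin (2 * β) * Real.sin (y - x) /
      (Real.sin (x + 2 * β) * Real.sin (y + 2 * β)) := by
  unfold sineRatio
  rw [div_sub_div _ _ hy hx, mul_comm (Real.sin (x + 2 * β))]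
  congr 1
  rw [Real.sin_add, Real.sin_add, Real.sin_sub]
  ring

lemma strictMonoOn_sineRatio (hβ : 0 < Real.sin (2 * β)) :
    StrictMonoOn (sineRatio β) (Ioo (-(2 * β)) (Real.pi - 2 * β)) := by
  intro x hx y hy hxy
  have hsin_x : 0 < Real.sin (x + 2 * β) :=
    Real.sin_pos_of_pos_of_lt_pi (by linarith [hx.1]) (by linarith [hx.2])
  have hsin_y : 0 < Real.sin (y + 2 * β) :=
    Real.sin_pos_of_pos_of_lt_pi (by linarith [hy.1]) (by linarith [hy.2])
  have hsin_sub : 0 < Real.sin (y - x) :=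
    Real.sin_pos_of_pos_of_lt_pi (by linarith) (by linarith [hx.1, hy.2])
  rw [← sub_pos, sineRatio_sub hsin_x.ne' hsin_y.ne']
  positivity

lemma sineRatio_add_two_mul (hx : Real.sin (x + 2 * β) ≠ 0) :
    sineRatio β (x + 2 * β) = 1 / (2 * Real.cos (2 * β) - sineRatio β x) := by
  have hsin : Real.sin (x + 2 * β + 2 * β) =
      2 * Real.cos (2 * β) * Real.sin (x + 2 * β) - Real.sin x := by
    nth_rw 3 [show x = x + 2 * β - 2 * β by ring]
    rw [Real.sin_add (x + 2 * β), Real.sin_sub]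
    ring
  unfold sineRatio
  rw [hsin, sub_div' hx, one_div_div]

lemma neg_sineRatio_sub_two_mul (hx : Real.sin x ≠ 0) :
    -sineRatio β (x - 2 * β) = -1 / (-sineRatio β x) - 2 * Real.cos (2 * β) := by
  have hsin : Real.sin (x - 2 * β) =
      2 * Real.cos (2 * β) * Real.sin x - Real.sin (x + 2 * β) := by
    rw [Real.sin_add, Real.sin_sub]; ring
  unfold sineRatio
  rw [hsin, sub_add_cancel, neg_div_neg_eq, one_div_div]
  field_simp
  ring

end SineRatio

/-- The parameters of the `α`-Rosen map in angular form: `q = 2p`, and `α` is encoded by the angle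
`δ ∈ [0, π/(4p)]` with `λα = cos (π/q - δ) / cos δ`; `δ = 0` is `α = 1/2` and `δ = π/(4p)` is
`α = 1/λ`. -/
structure RosenParam where
  p : ℕ
  δ : ℝ
  two_le_p : 2 ≤ p
  δ_nonneg : 0 ≤ δ
  δ_le : δ ≤ Real.pi / (4 * p)

namespace RosenParam

/-- The angle `π/(2q)`. -/
noncomputable def β (P : RosenParam) : ℝ := Real.pi / (4 * P.p)

/-- The constant `λ = 2 cos (π/q)`. -/
noncomputable def lam (P : RosenParam) : ℝ := 2 * Real.cos (2 * P.β)

/-- The parameter `α` of the map `T_α`. -/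
noncomputable def α (P : RosenParam) : ℝ := Real.cos (2 * P.β - P.δ) / Real.cos P.δ / P.lam

/-- The interval `[λ(α - 1), λα]` on which `T_α` acts. -/
def interval (P : RosenParam) : Set ℝ := Icc (P.lam * (P.α - 1)) (P.lam * P.α)

variable (P : RosenParam)

lemma two_le_p_cast : (2 : ℝ) ≤ P.p := by exact_mod_cast P.two_le_p

lemma two_mul_β : 2 * P.β = Real.pi / (2 * P.p) := by
  rw [β, mul_div_assoc', show (4 * P.p : ℝ) = 2 * (2 * P.p) by ring,
    mul_div_mul_left _ _ two_ne_zero]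

lemma two_mul_p_mul_β : 2 * P.p * P.β = Real.pi / 2 := by
  have := P.two_le_p_cast
  unfold β
  field_simp
  ring

lemma δ_le_β : P.δ ≤ P.β := P.δ_le

lemma lam_eq : P.lam = 2 * Real.cos (2 * P.β) := rfl

lemma β_pos : 0 < P.β := by
  have := P.two_le_p_cast
  have := Real.pi_pos
  unfold β
  positivity

lemma eight_mul_β_le_pi : 8 * P.β ≤ Real.pi := by
  nlinarith [P.two_mul_p_mul_β, P.two_le_p_cast, P.β_pos]

lemma sin_two_mul_β_pos : 0 < Real.sin (2 * P.β) :=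
  Real.sin_pos_of_pos_of_lt_pi (by linarith [P.β_pos])
    (by linarith [P.β_pos, P.eight_mul_β_le_pi])

lemma cos_δ_pos : 0 < Real.cos P.δ :=
  Real.cos_pos_of_mem_Ioo ⟨by linarith [P.δ_nonneg, Real.pi_pos],
    by linarith [P.δ_le_β, P.β_pos, P.eight_mul_β_le_pi]⟩

lemma sin_δ_nonneg : 0 ≤ Real.sin P.δ :=
  Real.sin_nonneg_of_nonneg_of_le_pi P.δ_nonneg
    (by linarith [P.δ_le_β, P.β_pos, P.eight_mul_β_le_pi])

lemma sin_two_mul_β_add_δ_pos : 0 < Real.sin (2 * P.β + P.δ) :=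
  Real.sin_pos_of_pos_of_lt_pi (by linarith [P.β_pos, P.δ_nonneg])
    (by linarith [P.δ_le_β, P.β_pos, P.eight_mul_β_le_pi])

lemma sin_two_mul_β_sub_δ_pos : 0 < Real.sin (2 * P.β - P.δ) :=
  Real.sin_pos_of_pos_of_lt_pi (by linarith [P.β_pos, P.δ_le_β])
    (by linarith [P.δ_nonneg, P.β_pos, P.eight_mul_β_le_pi])

lemma lam_pos : 0 < P.lam := by
  have := Real.cos_pos_of_mem_Ioo (x := 2 * P.β)
    ⟨by linarith [P.β_pos, Real.pi_pos], by linarith [P.eight_mul_β_le_pi, P.β_pos]⟩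
  linarith [P.lam_eq]

lemma lam_mul_α : P.lam * P.α = Real.cos (2 * P.β - P.δ) / Real.cos P.δ :=
  mul_div_cancel₀ _ P.lam_pos.ne'

lemma lam_lt_two : P.lam < 2 := by
  have := Real.cos_lt_cos_of_nonneg_of_le_pi le_rfl
    (by linarith [P.eight_mul_β_le_pi, P.β_pos]) (show 0 < 2 * P.β by linarith [P.β_pos])
  rw [Real.cos_zero] at this
  linarith [P.lam_eq]

lemma seven_fifths_lt_lam : 1.4 < P.lam := by
  have hcos : Real.cos (Real.pi / 4) ≤ Real.cos (2 * P.β) :=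
    Real.cos_le_cos_of_nonneg_of_le_pi (by linarith [P.β_pos]) (by linarith [Real.pi_pos])
      (by linarith [P.eight_mul_β_le_pi])
  rw [Real.cos_pi_div_four] at hcos
  have hsqrt : 1.4 < √2 := Real.lt_sqrt_of_sq_lt (by norm_num)
  linarith [P.lam_eq]

lemma lam_mul_α_le_one : P.lam * P.α ≤ 1 := by
  rw [P.lam_mul_α, div_le_one P.cos_δ_pos]
  exact Real.cos_le_cos_of_nonneg_of_le_pi P.δ_nonneg
    (by linarith [P.eight_mul_β_le_pi, P.δ_nonneg, P.β_pos]) (by linarith [P.δ_le_β])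

lemma half_lam_le_lam_mul_α : P.lam / 2 ≤ P.lam * P.α := by
  rw [P.lam_mul_α, P.lam_eq, le_div_iff₀ P.cos_δ_pos, Real.cos_sub]
  nlinarith [P.sin_two_mul_β_pos, P.sin_δ_nonneg]

lemma half_le_α : 1 / 2 ≤ P.α := by
  nlinarith [P.half_lam_le_lam_mul_α, P.lam_pos]

lemma α_lt_one : P.α < 1 := by
  nlinarith [P.lam_mul_α_le_one, P.seven_fifths_lt_lam]

lemma abs_le_of_mem_interval {x : ℝ} (hx : x ∈ P.interval) : |x| ≤ P.lam * P.α :=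
  abs_le.mpr ⟨by linarith [hx.1, P.half_lam_le_lam_mul_α], hx.2⟩

section Existence

-- For given `α` the angle is `δ = arctan ((2α - 1) cot b)` with `b = π/q`.
lemma cos_sub_arctan_div_cos_arctan {b α : ℝ} (hb : Real.sin b ≠ 0) :
    Real.cos (b - Real.arctan ((2 * α - 1) * Real.cos b / Real.sin b)) /
      Real.cos (Real.arctan ((2 * α - 1) * Real.cos b / Real.sin b)) = 2 * Real.cos b * α := by
  set u := (2 * α - 1) * Real.cos b / Real.sin b with hu
  have hcos : Real.cos (Real.arctan u) ≠ 0 := (Real.cos_arctan_pos u).ne'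
  have hsin : Real.sin (Real.arctan u) = u * Real.cos (Real.arctan u) := by
    rw [← div_eq_iff hcos, ← Real.tan_eq_sin_div_cos, Real.tan_arctan]
  rw [Real.cos_sub, hsin, hu]
  field_simp
  ring

lemma mul_cot_le_tan_half {b α : ℝ} (hb0 : 0 < b) (hbpi : b < Real.pi)
    (hα : 2 * Real.cos b * α ≤ 1) :
    (2 * α - 1) * Real.cos b / Real.sin b ≤ Real.tan (b / 2) := by
  have hsin : 0 < Real.sin b := Real.sin_pos_of_pos_of_lt_pi hb0 hbpi
  have hcos : 0 < Real.cos (b / 2) := Real.cos_pos_of_mem_Ioo ⟨by linarith, by linarith⟩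
  have hsin2 : Real.sin b = 2 * Real.sin (b / 2) * Real.cos (b / 2) := by
    rw [← Real.sin_two_mul]; ring_nf
  have hcos2 : 1 - Real.cos b = 2 * Real.sin (b / 2) ^ 2 := by
    have h := Real.cos_two_mul (b / 2)
    rw [mul_div_cancel₀ b two_ne_zero] at h
    linarith [Real.sin_sq_add_cos_sq (b / 2)]
  rw [Real.tan_eq_sin_div_cos, div_le_div_iff₀ hsin hcos]
  calc _ ≤ 2 * Real.sin (b / 2) ^ 2 * Real.cos (b / 2) :=
        mul_le_mul_of_nonneg_right (by linarith) hcos.le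
    _ = _ := by rw [hsin2]; ring

lemma exists_eq (q : ℕ) (hq : 4 ≤ q) (hqeven : Even q) (lam α : ℝ)
    (hlam : lam = 2 * Real.cos (Real.pi / q)) (hα1 : 1 / 2 ≤ α) (hα2 : α ≤ 1 / lam) :
    ∃ P : RosenParam, q = 2 * P.p ∧ P.lam = lam ∧ P.α = α := by
  obtain ⟨p, hp⟩ := hqeven
  have hp2 : (2 : ℝ) ≤ p := by exact_mod_cast (by omega : 2 ≤ p)
  have hb : Real.pi / q = 2 * (Real.pi / (4 * p)) := by rw [hp]; push_cast; field_simp; ring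
  have hβ0 : 0 < Real.pi / (4 * p) := by have := Real.pi_pos; positivity
  have hβ : 8 * (Real.pi / (4 * p)) ≤ Real.pi := by
    rw [mul_div_assoc', div_le_iff₀ (by positivity)]
    nlinarith [Real.pi_pos]
  rw [hb] at hlam
  set β := Real.pi / (4 * p)
  have hsin : 0 < Real.sin (2 * β) :=
    Real.sin_pos_of_pos_of_lt_pi (by linarith) (by linarith)
  have hcos : 0 < Real.cos (2 * β) := Real.cos_pos_of_mem_Ioo ⟨by linarith, by linarith⟩
  have hlam0 : 0 < lam := by rw [hlam]; linarith
  have hα : 2 * Real.cos (2 * β) * α ≤ 1 := by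
    rwa [le_div_iff₀ hlam0, mul_comm, hlam] at hα2
  have htan := mul_cot_le_tan_half (by linarith) (by linarith) hα
  rw [mul_div_cancel_left₀ β two_ne_zero] at htan
  refine ⟨⟨p, Real.arctan ((2 * α - 1) * Real.cos (2 * β) / Real.sin (2 * β)), by omega,
    Real.arctan_nonneg.mpr (div_nonneg (mul_nonneg (by linarith) hcos.le) hsin.le),
    (Real.arctan_mono htan).trans_eq (Real.arctan_tan (by linarith) (by linarith))⟩,
    by simp only; omega, hlam.symm, ?_⟩
  change _ / _ / (2 * Real.cos (2 * β)) = α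
  rw [div_eq_iff (by positivity)]
  exact (cos_sub_arctan_div_cos_arctan hsin.ne').trans (mul_comm _ _)

end Existence

/-- The angles parametrizing the orbits of the two end points of the interval; even `m` belongs to
the orbit of `-λα` and odd `m` to that of `λ(α - 1)`. -/
noncomputable def angle (m : ℕ) : ℝ :=
  (2 * P.p - 2 - m) * P.β + (if Even m then P.δ else P.β - P.δ)

/-- The points at which the fibre height of the natural extension domain jumps. They interlace the
orbits of `-λα` and `λ(α - 1)` under `t ↦ -1/t - λ`. -/
noncomputable def breakpoint (m : ℕ) : ℝ := -sineRatio P.β (P.angle m)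

/-- The fibre height of the natural extension domain to the right of `breakpoint m`. -/
noncomputable def height (m : ℕ) : ℝ := sineRatio P.β (m * P.β)

lemma angle_add_two (m : ℕ) : P.angle (m + 2) = P.angle m - 2 * P.β := by
  have heven : Even (m + 2) ↔ Even m := by simp [Nat.even_add]
  simp only [angle, heven]
  push_cast
  ring

lemma antitone_angle : Antitone P.angle := by
  refine antitone_nat_of_succ_le fun m => ?_
  have := P.δ_nonneg
  have := P.δ_le_β
  by_cases hm : Even m
  · have hm' : ¬Even (m + 1) := by simpa [Nat.even_add_one] using hm
    simp only [angle, hm, hm', if_true, if_false]; push_cast; linarith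
  · have hm' : Even (m + 1) := by simpa [Nat.even_add_one] using hm
    simp only [angle, hm, hm', if_true, if_false]; push_cast; linarith

lemma angle_zero : P.angle 0 = Real.pi / 2 - 2 * P.β + P.δ := by
  simp only [angle, Even.zero, if_true, Nat.cast_zero]
  linarith [P.two_mul_p_mul_β]

lemma angle_one : P.angle 1 = Real.pi / 2 - 2 * P.β - P.δ := by
  simp only [angle, Nat.not_even_one, if_false, Nat.cast_one]
  linarith [P.two_mul_p_mul_β]

lemma angle_penult : P.angle (2 * P.p - 2) = P.δ := by
  have hp := P.two_le_p
  have heven : Even (2 * P.p - 2) := ⟨P.p - 1, by omega⟩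
  simp only [angle, heven, if_true]
  push_cast [Nat.cast_sub (show 2 ≤ 2 * P.p by omega)]
  ring

lemma angle_last : P.angle (2 * P.p - 1) = -P.δ := by
  have hp := P.two_le_p
  have hodd : ¬Even (2 * P.p - 1) := Nat.not_even_iff_odd.mpr ⟨P.p - 1, by omega⟩
  simp only [angle, hodd, if_false]
  push_cast [Nat.cast_sub (show 1 ≤ 2 * P.p by omega)]
  ring

lemma angle_antepenult : P.angle (2 * P.p - 3) = 2 * P.β - P.δ := by
  have h := P.angle_add_two (2 * P.p - 3)
  rw [show 2 * P.p - 3 + 2 = 2 * P.p - 1 by have := P.two_le_p; omega, P.angle_last] at h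
  linarith

lemma angle_mem_Ioo {m : ℕ} (hm : m ≤ 2 * P.p - 1) :
    P.angle m ∈ Ioo (-(2 * P.β)) (Real.pi - 2 * P.β) := by
  have hlast := P.antitone_angle hm
  have hzero := P.antitone_angle (Nat.zero_le m)
  rw [P.angle_last] at hlast
  rw [P.angle_zero] at hzero
  exact ⟨by linarith [P.δ_le_β, P.β_pos],
    by linarith [P.δ_le_β, P.β_pos, P.eight_mul_β_le_pi]⟩

lemma breakpoint_mono {m n : ℕ} (hmn : m ≤ n) (hn : n ≤ 2 * P.p - 1) :
    P.breakpoint m ≤ P.breakpoint n :=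
  neg_le_neg ((strictMonoOn_sineRatio P.sin_two_mul_β_pos).monotoneOn (P.angle_mem_Ioo hn)
    (P.angle_mem_Ioo (hmn.trans hn)) (P.antitone_angle hmn))

lemma breakpoint_zero : P.breakpoint 0 = -(P.lam * P.α) := by
  rw [breakpoint, sineRatio, P.angle_zero, P.lam_mul_α,
    show Real.pi / 2 - 2 * P.β + P.δ + 2 * P.β = P.δ + Real.pi / 2 by ring,
    show Real.pi / 2 - 2 * P.β + P.δ = Real.pi / 2 - (2 * P.β - P.δ) by ring,
    Real.sin_pi_div_two_sub, Real.sin_add_pi_div_two]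

lemma breakpoint_one : P.breakpoint 1 = P.lam * (P.α - 1) := by
  rw [breakpoint, sineRatio, P.angle_one, mul_sub, P.lam_mul_α, P.lam_eq,
    show Real.pi / 2 - 2 * P.β - P.δ + 2 * P.β = Real.pi / 2 - P.δ by ring,
    show Real.pi / 2 - 2 * P.β - P.δ = Real.pi / 2 - (2 * P.β + P.δ) by ring,
    Real.sin_pi_div_two_sub, Real.sin_pi_div_two_sub, Real.cos_add, Real.cos_sub]
  have := P.cos_δ_pos.ne'
  field_simp
  ring

lemma breakpoint_penult :
    P.breakpoint (2 * P.p - 2) = -(Real.sin P.δ / Real.sin (2 * P.β + P.δ)) := by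
  rw [breakpoint, sineRatio, P.angle_penult, add_comm]

lemma breakpoint_last :
    P.breakpoint (2 * P.p - 1) = Real.sin P.δ / Real.sin (2 * P.β - P.δ) := by
  rw [breakpoint, sineRatio, P.angle_last, Real.sin_neg, neg_div, neg_neg, neg_add_eq_sub]

lemma breakpoint_neg {m : ℕ} (hm : m ≤ 2 * P.p - 3) : P.breakpoint m < 0 := by
  have hangle := P.antitone_angle hm
  rw [P.angle_antepenult] at hangle
  have hlt := (P.angle_mem_Ioo (by omega : m ≤ 2 * P.p - 1)).2
  have := P.δ_le_β
  have := P.β_pos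
  rw [breakpoint, sineRatio, neg_lt_zero]
  exact div_pos (Real.sin_pos_of_pos_of_lt_pi (by linarith) (by linarith))
    (Real.sin_pos_of_pos_of_lt_pi (by linarith) (by linarith))

lemma breakpoint_add_two {m : ℕ} (hm : m ≤ 2 * P.p - 3) :
    P.breakpoint (m + 2) = -1 / P.breakpoint m - P.lam := by
  rw [breakpoint, breakpoint, P.angle_add_two]
  refine neg_sineRatio_sub_two_mul fun hsin => ?_
  simpa [breakpoint, sineRatio, hsin] using P.breakpoint_neg hm

lemma breakpoint_two : P.breakpoint 2 = 1 / (P.lam * P.α) - P.lam := by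
  simpa [P.breakpoint_zero, neg_div_neg_eq] using P.breakpoint_add_two (m := 0) (by omega)

lemma breakpoint_penult_nonpos : P.breakpoint (2 * P.p - 2) ≤ 0 := by
  rw [P.breakpoint_penult, neg_nonpos]
  exact div_nonneg P.sin_δ_nonneg P.sin_two_mul_β_add_δ_pos.le

lemma breakpoint_last_nonneg : 0 ≤ P.breakpoint (2 * P.p - 1) := by
  rw [P.breakpoint_last]
  exact div_nonneg P.sin_δ_nonneg P.sin_two_mul_β_sub_δ_pos.le

-- Equivalently `1 / b₂ₚ₋₁ + 1 / b₂ₚ₋₂ = -λ`: the two end point orbits meet again after `2p` steps.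
lemma breakpoint_last_add_penult :
    P.breakpoint (2 * P.p - 1) + P.breakpoint (2 * P.p - 2)
      + P.lam * P.breakpoint (2 * P.p - 1) * P.breakpoint (2 * P.p - 2) = 0 := by
  rw [P.breakpoint_penult, P.breakpoint_last]
  have := P.sin_two_mul_β_add_δ_pos.ne'
  have := P.sin_two_mul_β_sub_δ_pos.ne'
  field_simp
  rw [Real.sin_add, Real.sin_sub, P.lam_eq]
  ring

lemma breakpoint_last_le : P.breakpoint (2 * P.p - 1) ≤ P.lam * P.α := by
  rw [P.breakpoint_last, P.lam_mul_α, div_le_div_iff₀ P.sin_two_mul_β_sub_δ_pos P.cos_δ_pos]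
  have hsin : Real.sin (2 * P.δ) ≤ Real.sin (2 * (2 * P.β - P.δ)) :=
    Real.sin_le_sin_of_le_of_le_pi_div_two (by linarith [P.δ_nonneg, Real.pi_pos])
      (by linarith [P.δ_nonneg, P.eight_mul_β_le_pi]) (by linarith [P.δ_le_β])
  rw [Real.sin_two_mul, Real.sin_two_mul] at hsin
  linarith

lemma mul_β_le {m : ℕ} (hm : m ≤ 2 * P.p - 1) : (m : ℝ) * P.β ≤ Real.pi / 2 - P.β := by
  have hcast : (m : ℝ) + 1 ≤ 2 * P.p := by
    exact_mod_cast (by have := P.two_le_p; omega : m + 1 ≤ 2 * P.p)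
  nlinarith [P.two_mul_p_mul_β, P.β_pos]

lemma mul_β_mem_Ioo {m : ℕ} (hm : m ≤ 2 * P.p - 1) :
    (m : ℝ) * P.β ∈ Ioo (-(2 * P.β)) (Real.pi - 2 * P.β) := by
  have := P.mul_β_le hm
  have := P.β_pos
  have : 0 ≤ (m : ℝ) * P.β := by positivity
  exact ⟨by linarith, by linarith [P.eight_mul_β_le_pi]⟩

lemma height_mono {m n : ℕ} (hmn : m ≤ n) (hn : n ≤ 2 * P.p - 1) : P.height m ≤ P.height n :=
  (strictMonoOn_sineRatio P.sin_two_mul_β_pos).monotoneOn (P.mul_β_mem_Ioo (hmn.trans hn))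
    (P.mul_β_mem_Ioo hn) (mul_le_mul_of_nonneg_right (by exact_mod_cast hmn) P.β_pos.le)

lemma height_zero : P.height 0 = 0 := by simp [height, sineRatio]

lemma height_one : P.height 1 = 1 / (P.lam + 1) := by
  have hsin : Real.sin (P.β + 2 * P.β) = Real.sin P.β * (P.lam + 1) := by
    rw [show P.β + 2 * P.β = 3 * P.β by ring, Real.sin_three_mul, P.lam_eq, Real.cos_two_mul,
      Real.cos_sq']
    ring
  have : 0 < Real.sin P.β :=
    Real.sin_pos_of_pos_of_lt_pi P.β_pos (by linarith [P.β_pos, P.eight_mul_β_le_pi])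
  have := P.lam_pos
  rw [height, sineRatio, Nat.cast_one, one_mul, hsin]
  field_simp

lemma height_add_two {m : ℕ} (hm : m ≤ 2 * P.p - 1) :
    P.height (m + 2) = 1 / (P.lam - P.height m) := by
  have hmem := P.mul_β_mem_Ioo hm
  have hsin : 0 < Real.sin (m * P.β + 2 * P.β) :=
    Real.sin_pos_of_pos_of_lt_pi (by linarith [hmem.1]) (by linarith [hmem.2])
  rw [height, height, P.lam_eq, ← sineRatio_add_two_mul hsin.ne']
  push_cast
  ring_nf

lemma height_two : P.height 2 = 1 / P.lam := by
  simpa [P.height_zero] using P.height_add_two (m := 0) (by omega)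

lemma height_penult : P.height (2 * P.p - 2) = P.lam / 2 := by
  have hangle : ((2 * P.p - 2 : ℕ) : ℝ) * P.β = Real.pi / 2 - 2 * P.β := by
    push_cast [Nat.cast_sub (show 2 ≤ 2 * P.p by have := P.two_le_p; omega)]
    linarith [P.two_mul_p_mul_β]
  rw [height, sineRatio, hangle, sub_add_cancel, Real.sin_pi_div_two_sub, Real.sin_pi_div_two,
    P.lam_eq]
  ring

lemma height_last : P.height (2 * P.p - 1) = 1 := by
  have hangle : ((2 * P.p - 1 : ℕ) : ℝ) * P.β = Real.pi / 2 - P.β := by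
    push_cast [Nat.cast_sub (show 1 ≤ 2 * P.p by have := P.two_le_p; omega)]
    linarith [P.two_mul_p_mul_β]
  rw [height, sineRatio, hangle, show Real.pi / 2 - P.β + 2 * P.β = P.β + Real.pi / 2 by ring,
    Real.sin_pi_div_two_sub, Real.sin_add_pi_div_two, div_self]
  exact (Real.cos_pos_of_mem_Ioo ⟨by linarith [P.β_pos, Real.pi_pos],
    by linarith [P.β_pos, P.eight_mul_β_le_pi]⟩).ne'

lemma height_antepenult : P.height (2 * P.p - 3) = P.lam - 1 := by
  have h := P.height_add_two (m := 2 * P.p - 3) (by omega)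
  rw [show 2 * P.p - 3 + 2 = 2 * P.p - 1 by have := P.two_le_p; omega, P.height_last,
    eq_comm, one_div, inv_eq_one] at h
  linarith

lemma height_nonneg {m : ℕ} (hm : m ≤ 2 * P.p - 1) : 0 ≤ P.height m :=
  P.height_zero.symm.trans_le (P.height_mono (Nat.zero_le m) hm)

lemma height_le_one {m : ℕ} (hm : m ≤ 2 * P.p - 1) : P.height m ≤ 1 :=
  (P.height_mono hm le_rfl).trans_eq P.height_last

end RosenParam

/-! ### The natural extension -/

section Digits

variable {lam α x v : ℝ}

lemma Tmap_of_ne (hx : x ≠ 0) : Tmap lam α x = |1 / x| - lam * (dfun lam α x : ℝ) := by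
  simp [Tmap, hx]

lemma Tnat_of_pos (hx : 0 < x) :
    Tnat lam α (x, v) = (1 / x - lam * dfun lam α x, 1 / (dfun lam α x * lam + v)) := by
  simp only [Tnat, Tmap_of_ne hx.ne', abs_of_pos (one_div_pos.mpr hx), Real.sign_of_pos hx, one_mul]

lemma Tnat_of_neg (hx : x < 0) :
    Tnat lam α (x, v) = (-1 / x - lam * dfun lam α x, 1 / (dfun lam α x * lam - v)) := by
  simp only [Tnat, Tmap_of_ne hx.ne, abs_of_neg (one_div_neg.mpr hx), Real.sign_of_neg hx,
    neg_one_mul, neg_div, ← sub_eq_add_neg]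

lemma Tmap_mem_Ico (hlam : 0 < lam) (hx : x ≠ 0) :
    Tmap lam α x ∈ Ico (lam * (α - 1)) (lam * α) := by
  rw [Tmap_of_ne hx]
  have habs : |1 / x| = lam * |1 / (x * lam)| := by
    rw [← div_div, abs_div _ lam, abs_of_pos hlam, mul_div_cancel₀ _ hlam.ne']
  have hle : (dfun lam α x : ℝ) ≤ |1 / (x * lam)| + 1 - α := Int.floor_le _
  have hlt : |1 / (x * lam)| + 1 - α < (dfun lam α x : ℝ) + 1 := Int.lt_floor_add_one _
  rw [habs]
  constructor <;> nlinarith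

end Digits

namespace RosenParam

/-- The domain of the natural extension of the `α`-Rosen map: the region over the interval below
the step function with value `height m` from `breakpoint m` on. -/
def domain (P : RosenParam) : Set (ℝ × ℝ) :=
  {z | z.1 ∈ P.interval ∧ 0 ≤ z.2 ∧
    ∃ m, 1 ≤ m ∧ m ≤ 2 * P.p - 1 ∧ P.breakpoint m ≤ z.1 ∧ z.2 ≤ P.height m}

variable (P : RosenParam) {t v w x : ℝ}

lemma Tmap_mem_interval (x : ℝ) : Tmap P.lam P.α x ∈ P.interval := by
  have := P.lam_pos
  by_cases hx : x = 0
  · have : Tmap P.lam P.α x = 0 := if_pos hx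
    rw [this]
    exact ⟨by nlinarith [P.α_lt_one], by nlinarith [P.half_le_α]⟩
  · exact Ico_subset_Icc_self (Tmap_mem_Ico P.lam_pos hx)

lemma one_le_dfun (hx : x ≠ 0) (hxI : x ∈ P.interval) : 1 ≤ dfun P.lam P.α x := by
  have habs : 0 < |x| * P.lam := mul_pos (abs_pos.mpr hx) P.lam_pos
  have hα : P.α ≤ |1 / (x * P.lam)| := by
    rw [abs_div, abs_mul, abs_one, abs_of_pos P.lam_pos, le_div_iff₀ habs]
    have := P.abs_le_of_mem_interval hxI
    nlinarith [P.lam_mul_α_le_one, P.half_le_α, P.lam_pos]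
  rw [dfun, Int.le_floor]
  push_cast
  linarith

lemma domain_subset : P.domain ⊆ P.interval ×ˢ Icc 0 1 := by
  rintro z ⟨hx, hv, m, -, hm, -, hle⟩
  exact ⟨hx, hv, hle.trans (P.height_le_one hm)⟩

lemma mk_zero_mem_domain (hx : x ∈ P.interval) : (x, (0 : ℝ)) ∈ P.domain := by
  have hp := P.two_le_p
  exact ⟨hx, le_rfl, 1, le_rfl, by omega, P.breakpoint_one.trans_le hx.1,
    P.height_nonneg (by omega)⟩

lemma mk_one_div_mem_domain_of_lam_add_one_le (hx : x ∈ P.interval) (hw : P.lam + 1 ≤ w) :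
    (x, 1 / w) ∈ P.domain := by
  have hp := P.two_le_p
  have hlam := P.lam_pos
  refine ⟨hx, one_div_nonneg.mpr (by linarith), 1, le_rfl, by omega,
    P.breakpoint_one.trans_le hx.1, ?_⟩
  rw [P.height_one]
  exact one_div_le_one_div_of_le (by linarith) hw

lemma mk_one_div_mem_domain_of_lam_le (hx : x ∈ P.interval)
    (hxb : 1 / (P.lam * P.α) - P.lam ≤ x) (hw : P.lam ≤ w) : (x, 1 / w) ∈ P.domain := by
  have hp := P.two_le_p
  have hlam := P.lam_pos
  refine ⟨hx, one_div_nonneg.mpr (by linarith), 2, by omega, by omega,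
    P.breakpoint_two.trans_le hxb, ?_⟩
  rw [P.height_two]
  exact one_div_le_one_div_of_le hlam hw

lemma snd_le_half_lam_of_lt_breakpoint_last (hz : (t, v) ∈ P.domain)
    (ht : t < P.breakpoint (2 * P.p - 1)) : v ≤ P.lam / 2 := by
  obtain ⟨-, -, m, -, hm, hbt, hvm⟩ := hz
  have hm' : m ≠ 2 * P.p - 1 := by rintro rfl; exact absurd hbt (not_le.mpr ht)
  exact (hvm.trans (P.height_mono (by omega) (by omega))).trans_eq P.height_penult

lemma exists_height_index_of_lt_breakpoint_penult (hz : (t, v) ∈ P.domain)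
    (ht : t < P.breakpoint (2 * P.p - 2)) :
    ∃ m, m ≤ 2 * P.p - 3 ∧ P.breakpoint m ≤ t ∧ v ≤ P.height m := by
  obtain ⟨-, -, m, -, hm, hbt, hvm⟩ := hz
  refine ⟨m, ?_, hbt, hvm⟩
  by_contra hm'
  exact absurd ((P.breakpoint_mono (by omega) hm).trans hbt) (not_le.mpr ht)

lemma snd_le_of_lt_breakpoint_penult (hz : (t, v) ∈ P.domain)
    (ht : t < P.breakpoint (2 * P.p - 2)) : v ≤ P.lam - 1 := by
  obtain ⟨m, hm, -, hvm⟩ := P.exists_height_index_of_lt_breakpoint_penult hz ht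
  exact (hvm.trans (P.height_mono hm (by omega))).trans_eq P.height_antepenult

lemma one_sub_half_lam_le (hx : x ∈ P.interval) (hv : v ∈ Icc (0 : ℝ) 1) :
    1 - P.lam / 2 ≤ 1 + x * v := by
  nlinarith [hx.1, hv.1, hv.2, P.half_lam_le_lam_mul_α, P.lam_pos]

lemma one_add_mul_pos (hx : x ∈ P.interval) (hv : v ∈ Icc (0 : ℝ) 1) : 0 < 1 + x * v := by
  linarith [P.one_sub_half_lam_le hx hv, P.lam_lt_two]

section Invariance

lemma breakpoint_last_pos_of_penult_neg (h : P.breakpoint (2 * P.p - 2) < 0) :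
    0 < P.breakpoint (2 * P.p - 1) := by
  refine P.breakpoint_last_nonneg.lt_of_ne fun h0 => h.ne ?_
  simpa [← h0] using P.breakpoint_last_add_penult

lemma one_div_breakpoint_penult (h : P.breakpoint (2 * P.p - 2) < 0) :
    1 / P.breakpoint (2 * P.p - 2) = -(1 / P.breakpoint (2 * P.p - 1) + P.lam) := by
  have := P.breakpoint_last_pos_of_penult_neg h
  have := P.breakpoint_last_add_penult
  have := h.ne
  field_simp
  linarith

lemma one_div_add_lam_le_of_breakpoint_penult_le (ht : t < 0)
    (hbt : P.breakpoint (2 * P.p - 2) ≤ t) : 1 / (P.lam * P.α) + P.lam ≤ -1 / t := by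
  have hneg := hbt.trans_lt ht
  have hlast : 1 / (P.lam * P.α) ≤ 1 / P.breakpoint (2 * P.p - 1) :=
    one_div_le_one_div_of_le (P.breakpoint_last_pos_of_penult_neg hneg) P.breakpoint_last_le
  have hinv : 1 / t ≤ 1 / P.breakpoint (2 * P.p - 2) :=
    one_div_le_one_div_of_neg_of_le ht hbt
  rw [P.one_div_breakpoint_penult hneg] at hinv
  rw [neg_div]
  linarith

lemma Tnat_mem_domain_of_pos (hz : (t, v) ∈ P.domain) (ht : 0 < t) :
    Tnat P.lam P.α (t, v) ∈ P.domain := by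
  obtain ⟨htI, hv, -⟩ := P.domain_subset hz
  have hT : (Tnat P.lam P.α (t, v)).1 ∈ P.interval := P.Tmap_mem_interval t
  have hlam := P.seven_fifths_lt_lam
  rw [Tnat_of_pos ht] at hT ⊢
  rcases (P.one_le_dfun ht.ne' htI).eq_or_lt with hd | hd
  · rw [← hd] at hT ⊢
    push_cast at hT ⊢
    refine P.mk_one_div_mem_domain_of_lam_le hT ?_ (by linarith [hv])
    linarith [one_div_le_one_div_of_le ht htI.2]
  · have hd' : (2 : ℝ) ≤ dfun P.lam P.α t := by exact_mod_cast hd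
    exact P.mk_one_div_mem_domain_of_lam_add_one_le hT (by nlinarith [hv])

lemma Tnat_mem_domain_of_lt_breakpoint_penult (hz : (t, v) ∈ P.domain)
    (ht : t < P.breakpoint (2 * P.p - 2)) : Tnat P.lam P.α (t, v) ∈ P.domain := by
  have htneg : t < 0 := ht.trans_le P.breakpoint_penult_nonpos
  obtain ⟨htI, -⟩ := P.domain_subset hz
  have hT : (Tnat P.lam P.α (t, v)).1 ∈ P.interval := P.Tmap_mem_interval t
  have hlam := P.seven_fifths_lt_lam
  rw [Tnat_of_neg htneg] at hT ⊢
  rcases (P.one_le_dfun htneg.ne htI).eq_or_lt with hd | hd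
  · rw [← hd] at hT ⊢
    push_cast at hT ⊢
    obtain ⟨m, hm, hbt, hvm⟩ := P.exists_height_index_of_lt_breakpoint_penult hz ht
    have hm1 := P.height_le_one (by omega : m ≤ 2 * P.p - 1)
    have hp := P.two_le_p
    rw [one_mul]
    refine ⟨hT, one_div_nonneg.mpr (by linarith), m + 2, by omega, by omega, ?_, ?_⟩
    · rw [P.breakpoint_add_two hm, neg_div, neg_div]
      linarith [one_div_le_one_div_of_neg_of_le htneg hbt]
    · rw [P.height_add_two (by omega)]
      exact one_div_le_one_div_of_le (by linarith) (by linarith)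
  · have hd' : (2 : ℝ) ≤ dfun P.lam P.α t := by exact_mod_cast hd
    have hv := P.snd_le_of_lt_breakpoint_penult hz ht
    exact P.mk_one_div_mem_domain_of_lam_add_one_le hT (by nlinarith)

lemma Tnat_mem_domain_of_breakpoint_penult_le (hz : (t, v) ∈ P.domain) (ht : t < 0)
    (hbt : P.breakpoint (2 * P.p - 2) ≤ t) : Tnat P.lam P.α (t, v) ∈ P.domain := by
  obtain ⟨htI, -⟩ := P.domain_subset hz
  have hT : (Tnat P.lam P.α (t, v)).1 ∈ P.interval := P.Tmap_mem_interval t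
  have hlam := P.seven_fifths_lt_lam
  have hinv := P.one_div_add_lam_le_of_breakpoint_penult_le ht hbt
  have hv : v ≤ P.lam / 2 :=
    P.snd_le_half_lam_of_lt_breakpoint_last hz (ht.trans_le P.breakpoint_last_nonneg)
  have hTlt := (Tmap_mem_Ico (α := P.α) P.lam_pos ht.ne).2
  rw [Tmap_of_ne ht.ne, abs_of_neg (one_div_neg.mpr ht), ← neg_div] at hTlt
  have hd1 : dfun P.lam P.α t ≠ 1 := by
    intro hd
    rw [hd] at hTlt
    push_cast at hTlt
    have hα1 : 1 ≤ 1 / (P.lam * P.α) :=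
      one_le_one_div (by linarith [P.half_lam_le_lam_mul_α]) P.lam_mul_α_le_one
    linarith [P.lam_mul_α_le_one]
  have hd2 : 2 ≤ dfun P.lam P.α t := by have := P.one_le_dfun ht.ne htI; omega
  rw [Tnat_of_neg ht] at hT ⊢
  rcases hd2.eq_or_lt with hd | hd
  · rw [← hd] at hT ⊢
    push_cast at hT ⊢
    exact P.mk_one_div_mem_domain_of_lam_le hT (by linarith) (by linarith)
  · have hd' : (3 : ℝ) ≤ dfun P.lam P.α t := by exact_mod_cast hd
    exact P.mk_one_div_mem_domain_of_lam_add_one_le hT (by nlinarith)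

lemma Tnat_mem_domain {z : ℝ × ℝ} (hz : z ∈ P.domain) (hne : z.1 ≠ 0) :
    Tnat P.lam P.α z ∈ P.domain := by
  rcases hne.lt_or_gt with ht | ht
  · rcases lt_or_ge z.1 (P.breakpoint (2 * P.p - 2)) with hbt | hbt
    · exact P.Tnat_mem_domain_of_lt_breakpoint_penult hz hbt
    · exact P.Tnat_mem_domain_of_breakpoint_penult_le hz ht hbt
  · exact P.Tnat_mem_domain_of_pos hz ht

end Invariance

section Injectivity

/-- The points off the finitely many exceptional lines and the discontinuities of the digit, on
which the natural extension map is injective and differentiable. -/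
def regularSet : Set (ℝ × ℝ) :=
  {z | z.1 ≠ 0 ∧ z.1 ≠ P.breakpoint (2 * P.p - 2) ∧ z.2 ≠ 0 ∧ z.2 ≠ 1 ∧ z.2 ≠ P.lam / 2 ∧
    |1 / (z.1 * P.lam)| + 1 - P.α ≠ (dfun P.lam P.α z.1 : ℝ)}

variable {t₁ v₁ t₂ v₂ : ℝ}

lemma lt_breakpoint_penult_of_one_div_eq (hbt : P.breakpoint (2 * P.p - 1) ≤ t₁)
    (hneg : t₂ < 0) (ht : t₂ ≠ P.breakpoint (2 * P.p - 2)) (hinv : 1 / t₂ = -(1 / t₁ + P.lam)) :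
    t₂ < P.breakpoint (2 * P.p - 2) := by
  refine lt_of_le_of_ne ?_ ht
  rcases P.breakpoint_penult_nonpos.eq_or_lt with h0 | h0
  · exact h0 ▸ hneg.le
  · have := one_div_le_one_div_of_le (P.breakpoint_last_pos_of_penult_neg h0) hbt
    refine (one_div_le_one_div_of_neg h0 hneg).mp ?_
    rw [P.one_div_breakpoint_penult h0, hinv]
    linarith

-- If points with `t₁ > 0 > t₂` had the same image, their digits would differ by one, so that
-- `v₁ + v₂ = λ`; the step heights of the domain leave no room for this off the exceptional lines.
lemma Tnat_ne_of_pos_of_neg (hz₁ : (t₁, v₁) ∈ P.domain ∩ P.regularSet)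
    (hz₂ : (t₂, v₂) ∈ P.domain ∩ P.regularSet) (hpos : 0 < t₁) (hneg : t₂ < 0) :
    Tnat P.lam P.α (t₁, v₁) ≠ Tnat P.lam P.α (t₂, v₂) := by
  obtain ⟨hz₁, -, -, hv₁0, hv₁1, hv₁l, -⟩ := hz₁
  obtain ⟨hz₂, -, ht₂, -⟩ := hz₂
  intro heq
  simp only [Tnat_of_pos hpos, Tnat_of_neg hneg, Prod.mk.injEq, neg_div, one_div, inv_inj] at heq
  obtain ⟨hT, hv⟩ := heq
  obtain ⟨-, hv₁nn, hv₁le⟩ := P.domain_subset hz₁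
  obtain ⟨-, hv₂nn, hv₂le⟩ := P.domain_subset hz₂
  have hv₁pos : 0 < v₁ := hv₁nn.lt_of_ne (Ne.symm hv₁0)
  have hlam := P.seven_fifths_lt_lam
  have hlt1 : (dfun P.lam P.α t₁ : ℝ) < dfun P.lam P.α t₂ := by nlinarith
  have hlt2 : (dfun P.lam P.α t₂ : ℝ) < dfun P.lam P.α t₁ + 2 := by nlinarith
  have hd : dfun P.lam P.α t₂ = dfun P.lam P.α t₁ + 1 := by
    have h1 : dfun P.lam P.α t₁ < dfun P.lam P.α t₂ := by exact_mod_cast hlt1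
    have h2 : dfun P.lam P.α t₂ < dfun P.lam P.α t₁ + 2 := by exact_mod_cast hlt2
    omega
  rw [hd] at hT hv
  push_cast at hT hv
  have hsum : v₁ + v₂ = P.lam := by linarith
  have hv₂half : v₂ ≤ P.lam / 2 :=
    P.snd_le_half_lam_of_lt_breakpoint_last hz₂ (hneg.trans_le P.breakpoint_last_nonneg)
  have hv₁half : P.lam / 2 < v₁ := lt_of_le_of_ne (by linarith [hsum]) (Ne.symm hv₁l)
  have ht₁ : P.breakpoint (2 * P.p - 1) ≤ t₁ := le_of_not_gt fun h =>
    absurd (P.snd_le_half_lam_of_lt_breakpoint_last hz₁ h) (not_le.mpr hv₁half)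
  have ht₂lt := P.lt_breakpoint_penult_of_one_div_eq ht₁ hneg ht₂ (by
    rw [one_div, one_div]; linarith)
  exact hv₁1 (by linarith [P.snd_le_of_lt_breakpoint_penult hz₂ ht₂lt])

lemma eq_of_abs_mul_lam_sub_le {d e : ℤ} (h : |(d : ℝ) * P.lam - e * P.lam| ≤ 1) : d = e := by
  have hlam := P.seven_fifths_lt_lam
  rw [abs_le] at h
  have h1 : (d : ℝ) < e + 1 := by nlinarith
  have h2 : (e : ℝ) < d + 1 := by nlinarith
  have h1' : d < e + 1 := by exact_mod_cast h1
  have h2' : e < d + 1 := by exact_mod_cast h2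
  omega

lemma injOn_Tnat : InjOn (Tnat P.lam P.α) (P.domain ∩ P.regularSet) := by
  rintro ⟨t₁, v₁⟩ hz₁ ⟨t₂, v₂⟩ hz₂ heq
  obtain ⟨-, hv₁nn, hv₁le⟩ := P.domain_subset hz₁.1
  obtain ⟨-, hv₂nn, hv₂le⟩ := P.domain_subset hz₂.1
  simp only at hv₁nn hv₁le hv₂nn hv₂le
  rcases hz₁.2.1.lt_or_gt with ht₁ | ht₁ <;> rcases hz₂.2.1.lt_or_gt with ht₂ | ht₂
  · simp only [Tnat_of_neg ht₁, Tnat_of_neg ht₂, Prod.mk.injEq, neg_div, one_div, inv_inj] at heq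
    have hd := P.eq_of_abs_mul_lam_sub_le
      (abs_le.mpr ⟨by linarith, by linarith⟩ : |(dfun P.lam P.α t₁ : ℝ) * P.lam -
        dfun P.lam P.α t₂ * P.lam| ≤ 1)
    rw [hd, sub_left_inj, neg_inj, inv_inj] at heq
    exact Prod.ext heq.1 (by simpa using heq.2)
  · exact (P.Tnat_ne_of_pos_of_neg hz₂ hz₁ ht₂ ht₁ heq.symm).elim
  · exact (P.Tnat_ne_of_pos_of_neg hz₁ hz₂ ht₁ ht₂ heq).elim
  · simp only [Tnat_of_pos ht₁, Tnat_of_pos ht₂, Prod.mk.injEq, one_div, inv_inj] at heq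
    have hd := P.eq_of_abs_mul_lam_sub_le
      (abs_le.mpr ⟨by linarith, by linarith⟩ : |(dfun P.lam P.α t₁ : ℝ) * P.lam -
        dfun P.lam P.α t₂ * P.lam| ≤ 1)
    rw [hd, sub_left_inj, inv_inj] at heq
    exact Prod.ext heq.1 (by simpa using heq.2)

end Injectivity

end RosenParam

section ChangeOfVariables

variable {E : Type*} [NormedAddCommGroup E] [NormedSpace ℝ E] [FiniteDimensional ℝ E]
  [MeasurableSpace E] [BorelSpace E] {μ : Measure E} [μ.IsAddHaarMeasure]

-- Injectivity only yields that the push-forward is dominated by the measure; the masses being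
-- equal and finite, the two coincide, so surjectivity need not be checked.
theorem measurePreserving_of_injOn_of_abs_det_mul_eq {T : E → E} {T' : E → E →L[ℝ] E}
    {ρ : E → ENNReal} {s A : Set E} [IsFiniteMeasure ((μ.withDensity ρ).restrict s)]
    (hT : Measurable T) (hs : MeasurableSet s) (hA : MeasurableSet A) (hAs : A ⊆ s)
    (hsA : ∀ᵐ x ∂μ, x ∈ s → x ∈ A) (hT' : ∀ x ∈ A, HasFDerivWithinAt T (T' x) A x)
    (hinj : InjOn T A) (hmaps : MapsTo T A s)
    (hρ : ∀ x ∈ A, ENNReal.ofReal |(T' x).det| * ρ (T x) = ρ x) :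
    MeasurePreserving T ((μ.withDensity ρ).restrict s) ((μ.withDensity ρ).restrict s) := by
  refine ⟨hT, Measure.eq_of_le_of_measure_univ_eq (Measure.le_iff.mpr fun B hB => ?_) ?_⟩
  · set C := T ⁻¹' B ∩ A
    have hC : MeasurableSet C := (hT hB).inter hA
    have hCA : C ⊆ A := inter_subset_right
    have hae : (T ⁻¹' B ∩ s : Set E) =ᵐ[μ] C := by
      filter_upwards [hsA] with x hx
      exact propext ⟨fun h => ⟨h.1, hx h.2⟩, fun h => ⟨h.1, hAs h.2⟩⟩
    rw [Measure.map_apply hT hB, Measure.restrict_apply (hT hB), Measure.restrict_apply hB,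
      withDensity_apply _ ((hT hB).inter hs), withDensity_apply _ (hB.inter hs)]
    calc ∫⁻ x in T ⁻¹' B ∩ s, ρ x ∂μ = ∫⁻ x in C, ρ x ∂μ := setLIntegral_congr hae
      _ = ∫⁻ x in C, ENNReal.ofReal |(T' x).det| * ρ (T x) ∂μ :=
        setLIntegral_congr_fun hC fun x hx => (hρ x (hCA hx)).symm
      _ = ∫⁻ y in T '' C, ρ y ∂μ :=
        (lintegral_image_eq_lintegral_abs_det_fderiv_mul _ hC
          (fun x hx => (hT' x (hCA hx)).mono hCA) (hinj.mono hCA) _).symm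
      _ ≤ ∫⁻ y in B ∩ s, ρ y ∂μ :=
        lintegral_mono_set (image_subset_iff.mpr fun x hx => ⟨hx.1, hmaps hx.2⟩)
  · rw [Measure.map_apply hT MeasurableSet.univ, preimage_univ]

end ChangeOfVariables

section NaturalExtension

variable {lam α x : ℝ} {z : ℝ × ℝ}

/-- The density `1 / (1 + t v)²` of the invariant measure of the natural extension. -/
noncomputable def invariantDensity (z : ℝ × ℝ) : ENNReal :=
  ENNReal.ofReal (1 / (1 + z.1 * z.2) ^ 2)

lemma measurable_invariantDensity : Measurable invariantDensity := by
  unfold invariantDensity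
  fun_prop

lemma measurable_real_sign : Measurable Real.sign :=
  Measurable.ite measurableSet_Iio measurable_const
    (Measurable.ite measurableSet_Ioi measurable_const measurable_const)

lemma measurable_dfun (lam α : ℝ) : Measurable (dfun lam α) := by
  have h : Measurable fun x : ℝ => 1 / (x * lam) := by fun_prop
  exact ((h.norm.add_const 1).sub_const α).floor

lemma measurable_dfun_cast (lam α : ℝ) : Measurable fun x => (dfun lam α x : ℝ) :=
  (measurable_from_top (f := fun n : ℤ => (n : ℝ))).comp (measurable_dfun lam α)

lemma measurable_Tmap (lam α : ℝ) : Measurable (Tmap lam α) := by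
  have h : Measurable fun x : ℝ => 1 / x := by fun_prop
  exact Measurable.ite (measurableSet_singleton 0) measurable_const
    (h.norm.sub ((measurable_dfun_cast lam α).const_mul lam))

lemma measurable_Tnat (lam α : ℝ) : Measurable (Tnat lam α) :=
  ((measurable_Tmap lam α).comp measurable_fst).prodMk
    (measurable_const.div ((((measurable_dfun_cast lam α).comp measurable_fst).mul_const lam).add
      ((measurable_real_sign.comp measurable_fst).mul measurable_snd)))

lemma abs_one_div_eq_sign_div (x : ℝ) : |1 / x| = Real.sign x / x := by
  rcases lt_trichotomy x 0 with h | rfl | h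
  · rw [Real.sign_of_neg h, abs_of_neg (one_div_neg.mpr h), neg_div]
  · simp
  · rw [Real.sign_of_pos h, abs_of_pos (one_div_pos.mpr h)]

lemma real_sign_mul_self (hx : x ≠ 0) : Real.sign x * Real.sign x = 1 := by
  rcases hx.lt_or_gt with h | h
  · rw [Real.sign_of_neg h, neg_one_mul, neg_neg]
  · rw [Real.sign_of_pos h, one_mul]

lemma real_sign_eventuallyEq (hx : x ≠ 0) : ∀ᶠ s in nhds x, Real.sign s = Real.sign x := by
  rcases hx.lt_or_gt with h | h
  · filter_upwards [Iio_mem_nhds h] with s hs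
    rw [Real.sign_of_neg h, Real.sign_of_neg hs]
  · filter_upwards [Ioi_mem_nhds h] with s hs
    rw [Real.sign_of_pos h, Real.sign_of_pos hs]

lemma dfun_eventuallyEq (hlam : lam ≠ 0) (hx : x ≠ 0)
    (hreg : |1 / (x * lam)| + 1 - α ≠ (dfun lam α x : ℝ)) :
    ∀ᶠ s in nhds x, dfun lam α s = dfun lam α x := by
  have hc : ContinuousAt (fun s : ℝ => |1 / (s * lam)| + 1 - α) x := by
    have : ContinuousAt (fun s : ℝ => 1 / (s * lam)) x :=
      continuousAt_const.div (by fun_prop) (mul_ne_zero hx hlam)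
    exact (this.abs.add continuousAt_const).sub continuousAt_const
  have hmem : |1 / (x * lam)| + 1 - α ∈ Ioo (dfun lam α x : ℝ) (dfun lam α x + 1) :=
    ⟨(Int.floor_le _).lt_of_ne hreg.symm, Int.lt_floor_add_one _⟩
  filter_upwards [hc.eventually (Ioo_mem_nhds hmem.1 hmem.2)] with s hs
  exact Int.floor_eq_iff.mpr ⟨hs.1.le, hs.2⟩

lemma countable_setOf_eq_dfun (hlam : lam ≠ 0) :
    {x : ℝ | |1 / (x * lam)| + 1 - α = (dfun lam α x : ℝ)}.Countable := by
  refine ((countable_range fun n : ℤ => 1 / (lam * (n - 1 + α))).union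
    (countable_range fun n : ℤ => 1 / (lam * -(n - 1 + α)))).mono fun x hx => ?_
  have habs : |1 / (x * lam)| = dfun lam α x - 1 + α := by linarith [show _ = _ from hx]
  have hinv {c : ℝ} (hc : 1 / (x * lam) = c) : 1 / (lam * c) = x := by
    rw [← hc, mul_one_div, mul_comm x, ← div_div, div_self hlam, one_div_one_div]
  exact (eq_or_eq_neg_of_abs_eq habs).imp (fun h => ⟨_, hinv h⟩) fun h => ⟨_, hinv h⟩

/-- The derivative of the natural extension, off the boundaries of its branches. -/
noncomputable def TnatDeriv (lam α : ℝ) (z : ℝ × ℝ) : (ℝ × ℝ) →L[ℝ] (ℝ × ℝ) :=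
  (ContinuousLinearMap.toSpanSingleton ℝ (-Real.sign z.1 / z.1 ^ 2)).prodMap
    (ContinuousLinearMap.toSpanSingleton ℝ
      (-Real.sign z.1 / ((dfun lam α z.1 : ℝ) * lam + Real.sign z.1 * z.2) ^ 2))

lemma hasFDerivAt_Tnat (hlam : lam ≠ 0) (hz : z.1 ≠ 0)
    (hreg : |1 / (z.1 * lam)| + 1 - α ≠ (dfun lam α z.1 : ℝ))
    (hden : (dfun lam α z.1 : ℝ) * lam + Real.sign z.1 * z.2 ≠ 0) :
    HasFDerivAt (Tnat lam α) (TnatDeriv lam α z) z := by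
  set e := Real.sign z.1
  set d : ℝ := (dfun lam α z.1 : ℝ)
  have hfst : HasDerivAt (fun s : ℝ => e / s - lam * d) (-e / z.1 ^ 2) z.1 := by
    simpa [div_eq_mul_inv] using ((hasDerivAt_inv hz).const_mul e).sub_const (lam * d)
  have hsnd : HasDerivAt (fun s : ℝ => 1 / (d * lam + e * s)) (-e / (d * lam + e * z.2) ^ 2)
      z.2 := by
    have h : HasDerivAt (fun s : ℝ => d * lam + e * s) e z.2 := by
      simpa using ((hasDerivAt_id z.2).const_mul e).const_add (d * lam)
    simpa only [one_div] using h.fun_inv hden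
  have hfst_tendsto : Filter.Tendsto Prod.fst (nhds z) (nhds z.1) := continuous_fst.tendsto z
  refine (HasFDerivAt.prodMap (p := z) hfst.hasFDerivAt hsnd.hasFDerivAt).congr_of_eventuallyEq ?_
  filter_upwards [hfst_tendsto.eventually (dfun_eventuallyEq hlam hz hreg),
    hfst_tendsto.eventually (real_sign_eventuallyEq hz),
    hfst_tendsto.eventually (isOpen_ne.mem_nhds hz)] with w hd he hw
  simp only [Tnat, Tmap_of_ne hw, abs_one_div_eq_sign_div, hd, he, Prod.map, e, d]

lemma abs_det_TnatDeriv (hz : z.1 ≠ 0) :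
    |(TnatDeriv lam α z).det| =
      1 / (z.1 * ((dfun lam α z.1 : ℝ) * lam + Real.sign z.1 * z.2)) ^ 2 := by
  have hdet : (TnatDeriv lam α z).det = (-Real.sign z.1 / z.1 ^ 2) *
      (-Real.sign z.1 / ((dfun lam α z.1 : ℝ) * lam + Real.sign z.1 * z.2) ^ 2) := by
    rw [TnatDeriv, ContinuousLinearMap.det, ContinuousLinearMap.coe_prodMap, LinearMap.det_prodMap,
      LinearMap.det_ring, LinearMap.det_ring]
    simp
  rw [hdet, div_mul_div_comm, neg_mul_neg, real_sign_mul_self hz, ← mul_pow,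
    abs_of_nonneg (by positivity)]

lemma one_add_Tnat_fst_mul_snd (hz : z.1 ≠ 0)
    (hden : (dfun lam α z.1 : ℝ) * lam + Real.sign z.1 * z.2 ≠ 0) :
    1 + (Tnat lam α z).1 * (Tnat lam α z).2 = Real.sign z.1 * (1 + z.1 * z.2) /
      (z.1 * ((dfun lam α z.1 : ℝ) * lam + Real.sign z.1 * z.2)) := by
  simp only [Tnat, Tmap_of_ne hz, abs_one_div_eq_sign_div]
  generalize Real.sign z.1 = e at hden ⊢
  generalize hg : (dfun lam α z.1 : ℝ) * lam + e * z.2 = g at hden ⊢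
  field_simp
  linear_combination (-z.1) * hg

lemma abs_det_TnatDeriv_mul_invariantDensity (hz : z.1 ≠ 0)
    (hden : (dfun lam α z.1 : ℝ) * lam + Real.sign z.1 * z.2 ≠ 0) :
    ENNReal.ofReal |(TnatDeriv lam α z).det| * invariantDensity (Tnat lam α z) =
      invariantDensity z := by
  simp only [invariantDensity]
  rw [← ENNReal.ofReal_mul (abs_nonneg _), abs_det_TnatDeriv hz, one_add_Tnat_fst_mul_snd hz hden,
    div_pow, mul_pow (Real.sign z.1), sq (Real.sign z.1), real_sign_mul_self hz, one_mul,
    one_div_div, div_mul_div_cancel₀ (pow_ne_zero 2 (mul_ne_zero hz hden))]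

end NaturalExtension

namespace RosenParam

variable (P : RosenParam)

/-- The (unnormalized) invariant measure of the natural extension. -/
noncomputable def measure : Measure (ℝ × ℝ) :=
  (volume.withDensity invariantDensity).restrict P.domain

lemma measurableSet_domain : MeasurableSet P.domain := by
  have hdom : P.domain = Prod.fst ⁻¹' P.interval ∩ ({z : ℝ × ℝ | 0 ≤ z.2} ∩
      ⋃ m ∈ {m : ℕ | 1 ≤ m ∧ m ≤ 2 * P.p - 1},
        {z | P.breakpoint m ≤ z.1} ∩ {z | z.2 ≤ P.height m}) := by
    ext z
    simp only [domain, mem_ofPred_eq, mem_inter_iff, mem_preimage, mem_iUnion, exists_prop,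
      and_assoc]
  rw [hdom]
  exact (measurable_fst measurableSet_Icc).inter
    ((measurableSet_le measurable_const measurable_snd).inter
      (MeasurableSet.biUnion (to_countable _) fun m _ =>
        (measurableSet_le measurable_const measurable_fst).inter
          (measurableSet_le measurable_snd measurable_const)))

lemma measure_apply {A : Set (ℝ × ℝ)} (hA : MeasurableSet A) :
    P.measure A = ∫⁻ z in A ∩ P.domain, invariantDensity z := by
  rw [measure, Measure.restrict_apply hA, withDensity_apply _ (hA.inter P.measurableSet_domain)]

lemma measure_absolutelyContinuous : P.measure ≪ volume :=
  Measure.absolutelyContinuous_of_le Measure.restrict_le_self |>.trans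
    (withDensity_absolutelyContinuous _ _)

lemma ae_mem_domain : ∀ᵐ z ∂P.measure, z ∈ P.domain :=
  ae_restrict_mem P.measurableSet_domain

instance isFiniteMeasure_measure : IsFiniteMeasure P.measure := by
  refine ⟨?_⟩
  rw [P.measure_apply MeasurableSet.univ, univ_inter]
  have hdensity : ∀ z ∈ P.domain,
      invariantDensity z ≤ ENNReal.ofReal (1 / (1 - P.lam / 2) ^ 2) := fun z hz => by
    have hpos : 0 < 1 - P.lam / 2 := by linarith [P.lam_lt_two]
    have := P.one_sub_half_lam_le (P.domain_subset hz).1 (P.domain_subset hz).2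
    exact ENNReal.ofReal_le_ofReal (by gcongr)
  have hvol : volume P.domain < ⊤ :=
    (measure_mono P.domain_subset).trans_lt (isCompact_Icc.prod isCompact_Icc).measure_lt_top
  refine (setLIntegral_mono measurable_const hdensity).trans_lt ?_
  rw [setLIntegral_const]
  exact ENNReal.mul_lt_top ENNReal.ofReal_lt_top hvol

lemma denominator_pos {z : ℝ × ℝ} (hz : z ∈ P.domain) (hne : z.1 ≠ 0) :
    0 < (dfun P.lam P.α z.1 : ℝ) * P.lam + Real.sign z.1 * z.2 := by
  obtain ⟨hI, hv⟩ := P.domain_subset hz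
  have hd : (1 : ℝ) ≤ dfun P.lam P.α z.1 := by exact_mod_cast P.one_le_dfun hne hI
  have hlam := P.seven_fifths_lt_lam
  rcases hne.lt_or_gt with h | h
  · rw [Real.sign_of_neg h]; nlinarith [hv.2]
  · rw [Real.sign_of_pos h]; nlinarith [hv.1]

lemma ae_mem_regularSet : ∀ᵐ z : ℝ × ℝ, z ∈ P.regularSet := by
  have hfst : ∀ᵐ z : ℝ × ℝ, z.1 ∉ ({0, P.breakpoint (2 * P.p - 2)} : Set ℝ) ∪
      {x | |1 / (x * P.lam)| + 1 - P.α = (dfun P.lam P.α x : ℝ)} :=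
    Measure.quasiMeasurePreserving_fst.ae (((Set.toFinite _).countable.union
      (countable_setOf_eq_dfun P.lam_pos.ne')).ae_notMem volume)
  have hsnd : ∀ᵐ z : ℝ × ℝ, z.2 ∉ ({0, 1, P.lam / 2} : Set ℝ) :=
    Measure.quasiMeasurePreserving_snd.ae ((Set.toFinite _).countable.ae_notMem volume)
  filter_upwards [hfst, hsnd] with z h1 h2
  simp only [mem_union, mem_insert_iff, mem_singleton_iff, mem_ofPred_eq, not_or] at h1 h2
  exact ⟨h1.1.1, h1.1.2, h2.1, h2.2.1, h2.2.2, h1.2⟩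

lemma measurableSet_regularSet : MeasurableSet P.regularSet := by
  have hfst (c : ℝ) : MeasurableSet {z : ℝ × ℝ | z.1 ≠ c} :=
    (measurableSet_eq_fun measurable_fst measurable_const).compl
  have hsnd (c : ℝ) : MeasurableSet {z : ℝ × ℝ | z.2 ≠ c} :=
    (measurableSet_eq_fun measurable_snd measurable_const).compl
  have habs : Measurable fun z : ℝ × ℝ => 1 / (z.1 * P.lam) := by fun_prop
  exact (hfst _).inter ((hfst _).inter ((hsnd _).inter ((hsnd _).inter ((hsnd _).inter
    (measurableSet_eq_fun ((habs.norm.add_const 1).sub_const P.α)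
      ((measurable_dfun_cast P.lam P.α).comp measurable_fst)).compl))))

theorem measurePreserving_Tnat :
    MeasurePreserving (Tnat P.lam P.α) P.measure P.measure := by
  have : IsFiniteMeasure ((volume.withDensity invariantDensity).restrict P.domain) :=
    P.isFiniteMeasure_measure
  have hden : ∀ z ∈ P.domain ∩ P.regularSet, _ := fun z hz => (P.denominator_pos hz.1 hz.2.1).ne'
  exact measurePreserving_of_injOn_of_abs_det_mul_eq (measurable_Tnat _ _) P.measurableSet_domain
    (P.measurableSet_domain.inter P.measurableSet_regularSet) inter_subset_left
    (P.ae_mem_regularSet.mono fun z hreg hdom => ⟨hdom, hreg⟩)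
    (fun z hz => (hasFDerivAt_Tnat P.lam_pos.ne' hz.2.1 hz.2.2.2.2.2.2
      (hden z hz)).hasFDerivWithinAt)
    P.injOn_Tnat (fun z hz => P.Tnat_mem_domain hz.1 hz.2.1)
    fun z hz => abs_det_TnatDeriv_mul_invariantDensity hz.2.1 (hden z hz)

end RosenParam

/-! ### Mass of horizontal slices -/

section SliceCoordinate

variable {a b u v w : ℝ}

/-- The coordinate `t / (1 + t v)` on the horizontal slice at height `v`; in it the invariant
density becomes Lebesgue measure, and its absolute value is the approximation coefficient. -/
noncomputable def sliceCoord (v t : ℝ) : ℝ := t / (1 + t * v)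

lemma one_add_mul_pos_of_le (hv : 0 ≤ v) (ha : 0 < 1 + a * v) (hab : a ≤ b) : 0 < 1 + b * v :=
  ha.trans_le (by gcongr)

lemma one_add_mul_pos_of_mem_Icc (ha : 0 < 1 + a * w) (hv : v ∈ Icc 0 w) : 0 < 1 + a * v := by
  rcases le_total 0 a with h | h
  · have := mul_nonneg h hv.1
    linarith
  · have := mul_le_mul_of_nonpos_left hv.2 h
    linarith

lemma hasDerivAt_sliceCoord (ha : 1 + a * v ≠ 0) :
    HasDerivAt (sliceCoord v) (1 / (1 + a * v) ^ 2) a := by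
  have h : HasDerivAt (fun s : ℝ => 1 + s * v) v a := by
    simpa using ((hasDerivAt_id a).mul_const v).const_add 1
  exact ((hasDerivAt_id a).div h ha).congr_deriv (by simp)

lemma sliceCoord_sub (ha : 1 + a * v ≠ 0) (hb : 1 + b * v ≠ 0) :
    sliceCoord v b - sliceCoord v a = (b - a) / ((1 + b * v) * (1 + a * v)) := by
  rw [sliceCoord, sliceCoord, div_sub_div _ _ hb ha]
  congr 1
  ring

lemma strictMonoOn_sliceCoord (hv : 0 ≤ v) (ha : 0 < 1 + a * v) :
    StrictMonoOn (sliceCoord v) (Ici a) := by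
  intro s hs t ht hst
  have hs' := one_add_mul_pos_of_le hv ha hs
  have ht' := one_add_mul_pos_of_le hv ha ht
  rw [← sub_pos, sliceCoord_sub hs'.ne' ht'.ne']
  exact div_pos (sub_pos.mpr hst) (mul_pos ht' hs')

lemma measurable_sliceCoord : Measurable fun z : ℝ × ℝ => sliceCoord z.2 z.1 := by
  unfold sliceCoord
  fun_prop

lemma lintegral_invariantDensity_slice (hv : 0 ≤ v) (ha : 0 < 1 + a * v) (hab : a ≤ b) {B : Set ℝ}
    (hB : MeasurableSet B) :
    ∫⁻ t in Icc a b ∩ sliceCoord v ⁻¹' B, invariantDensity (t, v) =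
      volume (Icc (sliceCoord v a) (sliceCoord v b) ∩ B) := by
  have hpos : ∀ t ∈ Icc a b, 0 < 1 + t * v := fun t ht => one_add_mul_pos_of_le hv ha ht.1
  have hderiv : ∀ t ∈ Icc a b, HasDerivAt (sliceCoord v) (1 / (1 + t * v) ^ 2) t := fun t ht =>
    hasDerivAt_sliceCoord (hpos t ht).ne'
  have hmono : StrictMonoOn (sliceCoord v) (Icc a b) :=
    (strictMonoOn_sliceCoord hv ha).mono Icc_subset_Ici_self
  have himage : sliceCoord v '' Icc a b = Icc (sliceCoord v a) (sliceCoord v b) :=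
    ContinuousOn.image_Icc_of_monotoneOn hab
      (fun t ht => (hderiv t ht).continuousAt.continuousWithinAt) hmono.monotoneOn
  have hmeas : MeasurableSet (Icc a b ∩ sliceCoord v ⁻¹' B) :=
    measurableSet_Icc.inter
      ((measurable_sliceCoord.comp (measurable_id.prodMk measurable_const)) hB)
  have hchange := lintegral_image_eq_lintegral_abs_deriv_mul hmeas
    (fun t ht => (hderiv t ht.1).hasDerivWithinAt) (hmono.injOn.mono inter_subset_left) fun _ => 1
  rw [image_inter_preimage, himage, setLIntegral_one] at hchange
  rw [hchange]
  refine setLIntegral_congr_fun hmeas fun t _ => ?_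
  simp only [invariantDensity, mul_one]
  rw [abs_of_nonneg (by positivity)]

lemma lintegral_sliceCoord_sub (ha : 0 < 1 + a * w) (hab : a ≤ b) (hu : 0 ≤ u) (huw : u ≤ w) :
    ∫⁻ v in Ioc u w, ENNReal.ofReal (sliceCoord v b - sliceCoord v a) =
      ENNReal.ofReal (Real.log ((1 + b * w) / (1 + a * w)) -
        Real.log ((1 + b * u) / (1 + a * u))) := by
  have hpos {v : ℝ} (hv : v ∈ Icc u w) : 0 < 1 + a * v :=
    one_add_mul_pos_of_mem_Icc ha ⟨hu.trans hv.1, hv.2⟩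
  have hpos' {v : ℝ} (hv : v ∈ Icc u w) : 0 < 1 + b * v :=
    one_add_mul_pos_of_le (hu.trans hv.1) (hpos hv) hab
  have hcont : ContinuousOn (fun v => sliceCoord v b - sliceCoord v a) (Icc u w) :=
    (continuousOn_const.div (by fun_prop) fun v hv => (hpos' hv).ne').sub
      (continuousOn_const.div (by fun_prop) fun v hv => (hpos hv).ne')
  have hint : IntegrableOn (fun v => sliceCoord v b - sliceCoord v a) (Ioc u w) :=
    (hcont.integrableOn_compact isCompact_Icc).mono_set Ioc_subset_Icc_self
  have hlog {c v : ℝ} (hcv : 0 < 1 + c * v) :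
      HasDerivAt (fun s => Real.log (1 + c * s)) (sliceCoord v c) v := by
    have h : HasDerivAt (fun s : ℝ => 1 + c * s) c v := by
      simpa using ((hasDerivAt_id v).const_mul c).const_add 1
    exact h.log hcv.ne'
  rw [← ofReal_integral_eq_lintegral_ofReal hint, ← intervalIntegral.integral_of_le huw,
    intervalIntegral.integral_eq_sub_of_hasDerivAt (f := fun v => Real.log (1 + b * v) -
      Real.log (1 + a * v)) (fun v hv => ?_)
      ((intervalIntegrable_iff_integrableOn_Ioc_of_le huw).mpr hint),
    Real.log_div (hpos' (right_mem_Icc.mpr huw)).ne' ha.ne',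
    Real.log_div (hpos' (left_mem_Icc.mpr huw)).ne' (hpos (left_mem_Icc.mpr huw)).ne']
  · rw [uIcc_of_le huw] at hv
    exact (hlog (hpos' hv)).sub (hlog (hpos hv))
  · filter_upwards [ae_restrict_mem measurableSet_Ioc] with v hv
    exact sub_nonneg.mpr ((strictMonoOn_sliceCoord (hu.trans hv.1.le)
      (hpos ⟨hv.1.le, hv.2⟩)).monotoneOn self_mem_Ici hab hab)

lemma one_add_div_one_add_mono (ha : 0 < 1 + a * w) (hab : a ≤ b) (hu : 0 ≤ u) (huw : u ≤ w) :
    (1 + b * u) / (1 + a * u) ≤ (1 + b * w) / (1 + a * w) := by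
  rw [div_le_div_iff₀ (one_add_mul_pos_of_mem_Icc ha ⟨hu, huw⟩) ha]
  nlinarith [mul_nonneg (sub_nonneg.mpr hab) (sub_nonneg.mpr huw)]

end SliceCoordinate

lemma one_sub_sineRatio_mul_sineRatio {β θ φ : ℝ} (hθ : Real.sin (θ + 2 * β) ≠ 0)
    (hφ : Real.sin (φ + 2 * β) ≠ 0) :
    1 - sineRatio β θ * sineRatio β φ = Real.sin (2 * β) * Real.sin (θ + φ + 2 * β) /
      (Real.sin (θ + 2 * β) * Real.sin (φ + 2 * β)) := by
  rw [sineRatio, sineRatio, div_mul_div_comm, eq_div_iff (mul_ne_zero hθ hφ), sub_mul, one_mul,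
    div_mul_cancel₀ _ (mul_ne_zero hθ hφ)]
  simp only [Real.sin_add, Real.cos_add]
  linear_combination (Real.sin θ * Real.sin φ) * Real.sin_sq_add_cos_sq (2 * β)

namespace RosenParam

variable (P : RosenParam) {m : ℕ} {v : ℝ} {B : Set ℝ}

lemma breakpoint_mem_interval (hm1 : 1 ≤ m) (hm : m ≤ 2 * P.p - 1) :
    P.breakpoint m ∈ P.interval :=
  ⟨P.breakpoint_one ▸ P.breakpoint_mono hm1 hm,
    (P.breakpoint_mono hm le_rfl).trans P.breakpoint_last_le⟩

/-- The mass of the slice of the natural extension domain at height `v`, restricted to the points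
whose slice coordinate lies in `B`. -/
noncomputable def sliceMeasure (B : Set ℝ) (v : ℝ) : ENNReal :=
  ∫⁻ t in {t | (t, v) ∈ P.domain ∧ sliceCoord v t ∈ B}, invariantDensity (t, v)

lemma mk_mem_domain_iff (hm1 : 1 ≤ m) (hm : m ≤ 2 * P.p - 1)
    (hv : v ∈ Ioc (P.height (m - 1)) (P.height m)) {t : ℝ} :
    (t, v) ∈ P.domain ↔ t ∈ Icc (P.breakpoint m) (P.lam * P.α) := by
  constructor
  · rintro ⟨htI, -, k, -, hk, hbt, hvk⟩
    refine ⟨(P.breakpoint_mono ?_ hk).trans hbt, htI.2⟩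
    by_contra! hkm
    exact (hv.1.trans_le hvk).not_ge (P.height_mono (by omega) (by omega))
  · intro ht
    exact ⟨⟨(P.breakpoint_mem_interval hm1 hm).1.trans ht.1, ht.2⟩,
      (P.height_nonneg (by omega)).trans hv.1.le, m, hm1, hm, ht.1, hv.2⟩

lemma one_add_breakpoint_mul_pos (hm1 : 1 ≤ m) (hm : m ≤ 2 * P.p - 1) (hv : v ∈ Icc (0 : ℝ) 1) :
    0 < 1 + P.breakpoint m * v :=
  P.one_add_mul_pos (P.breakpoint_mem_interval hm1 hm) hv

lemma mem_Icc_of_mem_Ioc_height (hm : m ≤ 2 * P.p - 1)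
    (hv : v ∈ Ioc (P.height (m - 1)) (P.height m)) : v ∈ Icc (0 : ℝ) 1 :=
  ⟨(P.height_nonneg (by omega)).trans hv.1.le, hv.2.trans (P.height_le_one hm)⟩

lemma sliceMeasure_eq (hB : MeasurableSet B) (hm1 : 1 ≤ m) (hm : m ≤ 2 * P.p - 1)
    (hv : v ∈ Ioc (P.height (m - 1)) (P.height m)) :
    P.sliceMeasure B v =
      volume (Icc (sliceCoord v (P.breakpoint m)) (sliceCoord v (P.lam * P.α)) ∩ B) := by
  have hv01 := P.mem_Icc_of_mem_Ioc_height hm hv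
  rw [← lintegral_invariantDensity_slice hv01.1 (P.one_add_breakpoint_mul_pos hm1 hm hv01)
    (P.breakpoint_mem_interval hm1 hm).2 hB, sliceMeasure]
  simp only [P.mk_mem_domain_iff hm1 hm hv]
  rfl

lemma measure_setOf_sliceCoord_mem (hB : MeasurableSet B) :
    P.measure {z | sliceCoord z.2 z.1 ∈ B} = ∫⁻ v in Ioc 0 1, P.sliceMeasure B v := by
  have hS : MeasurableSet ({z : ℝ × ℝ | sliceCoord z.2 z.1 ∈ B} ∩ P.domain) :=
    (measurable_sliceCoord hB).inter P.measurableSet_domain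
  have hslice (v : ℝ) : P.sliceMeasure B v = ∫⁻ t,
      ({z : ℝ × ℝ | sliceCoord z.2 z.1 ∈ B} ∩ P.domain).indicator invariantDensity (t, v) := by
    have hSv : MeasurableSet {t | (t, v) ∈ P.domain ∧ sliceCoord v t ∈ B} :=
      (hS.congr (inter_comm _ _)).preimage (measurable_id.prodMk measurable_const)
    rw [sliceMeasure, ← lintegral_indicator hSv]
    simp only [indicator, mem_ofPred_eq, mem_inter_iff, and_comm]
  have hpre : MeasurableSet {z : ℝ × ℝ | sliceCoord z.2 z.1 ∈ B} := measurable_sliceCoord hB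
  rw [P.measure_apply hpre, ← lintegral_indicator hS,
    Measure.volume_eq_prod,
    lintegral_prod_symm _ (measurable_invariantDensity.indicator hS).aemeasurable,
    ← lintegral_indicator measurableSet_Ioc]
  simp only [← hslice]
  refine lintegral_congr_ae ?_
  filter_upwards [Measure.ae_ne volume (0 : ℝ)] with v hv
  by_cases hv1 : v ∈ Ioc (0 : ℝ) 1
  · rw [indicator_of_mem hv1]
  · have hempty : {t | (t, v) ∈ P.domain ∧ sliceCoord v t ∈ B} = ∅ := by
      refine eq_empty_of_forall_notMem fun t ht => hv1 ?_
      obtain ⟨-, hv01⟩ := P.domain_subset ht.1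
      exact ⟨hv01.1.lt_of_ne hv.symm, hv01.2⟩
    rw [indicator_of_notMem hv1, sliceMeasure, hempty, Measure.restrict_empty,
      lintegral_zero_measure]

section TotalMass

lemma cos_β_sub_δ_pos : 0 < Real.cos (P.β - P.δ) :=
  Real.cos_pos_of_mem_Ioo ⟨by linarith [P.δ_le_β, Real.pi_pos],
    by linarith [P.δ_nonneg, P.β_pos, P.eight_mul_β_le_pi]⟩

lemma sin_add_two_mul_β_pos (hm : m ≤ 2 * P.p - 1) : 0 < Real.sin (m * P.β + 2 * P.β) :=
  Real.sin_pos_of_pos_of_lt_pi (by linarith [(P.mul_β_mem_Ioo hm).1])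
    (by linarith [(P.mul_β_mem_Ioo hm).2])

lemma one_add_breakpoint_mul_height {k : ℕ} (hm : m ≤ 2 * P.p - 1) (hk : k ≤ 2 * P.p - 1) :
    1 + P.breakpoint m * P.height k =
      Real.sin (2 * P.β) * Real.sin (P.angle m + k * P.β + 2 * P.β) /
        (Real.sin (P.angle m + 2 * P.β) * Real.sin (k * P.β + 2 * P.β)) := by
  have hangle := P.angle_mem_Ioo hm
  rw [breakpoint, height, neg_mul, ← sub_eq_add_neg,
    one_sub_sineRatio_mul_sineRatio _ (P.sin_add_two_mul_β_pos hk).ne']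
  exact (Real.sin_pos_of_pos_of_lt_pi (by linarith [hangle.1]) (by linarith [hangle.2])).ne'

/-- The parity-dependent part of `telescopeFactor`. -/
noncomputable def parityFactor (m : ℕ) : ℝ :=
  if Even m then 1 else Real.cos P.δ / Real.cos (P.β - P.δ)

/-- The product of the ratios `(1 + bₖ Hₖ₋₁) / (1 + bₖ Hₖ)` over `1 ≤ k ≤ m`, for the breakpoints
`bₖ` and heights `Hₖ`, in closed form. -/
noncomputable def telescopeFactor (m : ℕ) : ℝ :=
  P.parityFactor m * (Real.sin (m * P.β + 2 * P.β) / Real.sin (2 * P.β))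

lemma parityFactor_succ_mul_sin (m : ℕ) :
    P.parityFactor (m + 1) * Real.sin (P.angle (m + 1) + (m + 1 : ℕ) * P.β + 2 * P.β) =
      P.parityFactor m * Real.sin (P.angle (m + 1) + m * P.β + 2 * P.β) := by
  have hb := P.two_mul_p_mul_β
  have := P.cos_β_sub_δ_pos.ne'
  by_cases heven : Even m
  · have hodd : ¬Even (m + 1) := by simpa [Nat.even_add_one] using heven
    have h1 : P.angle (m + 1) + (m + 1 : ℕ) * P.β + 2 * P.β = P.β - P.δ + Real.pi / 2 := by
      simp only [angle, hodd, if_false]; push_cast; linear_combination hb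
    have h2 : P.angle (m + 1) + m * P.β + 2 * P.β = Real.pi / 2 - P.δ := by
      simp only [angle, hodd, if_false]; push_cast; linear_combination hb
    rw [h1, h2, parityFactor, parityFactor, if_neg hodd, if_pos heven,
      Real.sin_add_pi_div_two, Real.sin_pi_div_two_sub, div_mul_cancel₀ _ this, one_mul]
  · have heven' : Even (m + 1) := by simpa [Nat.even_add_one] using heven
    have h1 : P.angle (m + 1) + (m + 1 : ℕ) * P.β + 2 * P.β = P.δ + Real.pi / 2 := by
      simp only [angle, heven', if_true]; push_cast; linear_combination hb
    have h2 : P.angle (m + 1) + m * P.β + 2 * P.β = Real.pi / 2 - (P.β - P.δ) := by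
      simp only [angle, heven', if_true]; push_cast; linear_combination hb
    rw [h1, h2, parityFactor, parityFactor, if_pos heven', if_neg heven,
      Real.sin_add_pi_div_two, Real.sin_pi_div_two_sub, div_mul_cancel₀ _ this, one_mul]

lemma telescopeFactor_zero : P.telescopeFactor 0 = 1 := by
  simp [telescopeFactor, parityFactor, P.sin_two_mul_β_pos.ne']

lemma telescopeFactor_succ (hm : m + 1 ≤ 2 * P.p - 1) :
    P.telescopeFactor (m + 1) * (1 + P.breakpoint (m + 1) * P.height (m + 1)) =
      P.telescopeFactor m * (1 + P.breakpoint (m + 1) * P.height m) := by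
  have hsin := P.parityFactor_succ_mul_sin m
  have h1 := (P.sin_add_two_mul_β_pos hm).ne'
  have h2 := (P.sin_add_two_mul_β_pos (by omega : m ≤ 2 * P.p - 1)).ne'
  have h3 := P.sin_two_mul_β_pos.ne'
  rw [P.one_add_breakpoint_mul_height hm hm, P.one_add_breakpoint_mul_height hm (by omega),
    telescopeFactor, telescopeFactor]
  generalize Real.sin (P.angle (m + 1) + (m + 1 : ℕ) * P.β + 2 * P.β) = x at hsin ⊢
  generalize Real.sin (P.angle (m + 1) + m * P.β + 2 * P.β) = y at hsin ⊢
  generalize Real.sin ((m + 1 : ℕ) * P.β + 2 * P.β) = x' at h1 ⊢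
  generalize Real.sin (m * P.β + 2 * P.β) = y' at h2 ⊢
  field_simp
  rw [hsin]

lemma one_add_lam_mul_α_mul_pos (hv : 0 ≤ v) : 0 < 1 + P.lam * P.α * v := by
  have := P.half_lam_le_lam_mul_α
  have := P.lam_pos
  have : 0 ≤ P.lam * P.α := by linarith
  positivity

lemma one_add_mul_telescopeFactor_succ (hm : m + 1 ≤ 2 * P.p - 1) :
    (1 + P.lam * P.α * P.height (m + 1)) * P.telescopeFactor (m + 1) =
      (1 + P.lam * P.α * P.height m) * P.telescopeFactor m *
        ((1 + P.lam * P.α * P.height (m + 1)) / (1 + P.breakpoint (m + 1) * P.height (m + 1)) /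
          ((1 + P.lam * P.α * P.height m) / (1 + P.breakpoint (m + 1) * P.height m))) := by
  have hH := P.height_nonneg (m := m) (by omega)
  have hH' := P.height_nonneg hm
  have h1 := (P.one_add_lam_mul_α_mul_pos hH).ne'
  have h2 := (P.one_add_breakpoint_mul_pos (by omega) hm ⟨hH', P.height_le_one hm⟩).ne'
  have h3 := (P.one_add_breakpoint_mul_pos (by omega) hm ⟨hH, P.height_le_one (by omega)⟩).ne'
  rw [eq_div_iff_mul_eq h2 |>.mpr (P.telescopeFactor_succ hm)]
  field_simp

lemma one_le_and_lintegral_sliceMeasure_univ (hm : m ≤ 2 * P.p - 1) :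
    1 ≤ (1 + P.lam * P.α * P.height m) * P.telescopeFactor m ∧
    ∫⁻ v in Ioc 0 (P.height m), P.sliceMeasure univ v =
      ENNReal.ofReal (Real.log ((1 + P.lam * P.α * P.height m) * P.telescopeFactor m)) := by
  induction m with
  | zero => simp [height_zero, telescopeFactor_zero]
  | succ m ih =>
    obtain ⟨hone, hint⟩ := ih (by omega)
    have hmono := P.height_mono m.le_succ hm
    have hH := P.height_nonneg (m := m) (by omega)
    have hle := (P.breakpoint_mem_interval (by omega) hm).2
    have hpos' := P.one_add_breakpoint_mul_pos (by omega) hm ⟨hH.trans hmono, P.height_le_one hm⟩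
    have hratio := one_add_div_one_add_mono hpos' hle hH hmono
    have hY : 0 < (1 + P.lam * P.α * P.height m) / (1 + P.breakpoint (m + 1) * P.height m) :=
      div_pos (P.one_add_lam_mul_α_mul_pos hH)
        (one_add_mul_pos_of_mem_Icc hpos' ⟨hH, hmono⟩)
    have hX := hY.trans_le hratio
    have hstep : ∫⁻ v in Ioc (P.height m) (P.height (m + 1)), P.sliceMeasure univ v =
        ∫⁻ v in Ioc (P.height m) (P.height (m + 1)),
          ENNReal.ofReal (sliceCoord v (P.lam * P.α) - sliceCoord v (P.breakpoint (m + 1))) :=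
      setLIntegral_congr_fun measurableSet_Ioc fun v hv => by
        rw [P.sliceMeasure_eq MeasurableSet.univ (by omega) hm hv, inter_univ, Real.volume_Icc]
    rw [P.one_add_mul_telescopeFactor_succ hm, Real.log_mul (by positivity) (div_pos hX hY).ne',
      Real.log_div hX.ne' hY.ne']
    refine ⟨one_le_mul_of_one_le_of_one_le hone ((one_le_div₀ hY).mpr hratio), ?_⟩
    rw [← Ioc_union_Ioc_eq_Ioc hH hmono,
      lintegral_union measurableSet_Ioc (Ioc_disjoint_Ioc_of_le le_rfl), hint, hstep,
      lintegral_sliceCoord_sub hpos' hle hH hmono, ENNReal.ofReal_add (Real.log_nonneg hone)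
      (sub_nonneg.mpr (Real.log_le_log hY hratio))]

lemma one_add_lam_mul_α_mul_telescopeFactor_last :
    (1 + P.lam * P.α) * P.telescopeFactor (2 * P.p - 1) =
      (1 + Real.cos (2 * P.β)) / Real.sin (2 * P.β) := by
  have hodd : ¬Even (2 * P.p - 1) :=
    Nat.not_even_iff_odd.mpr ⟨P.p - 1, by have := P.two_le_p; omega⟩
  have hsin : ((2 * P.p - 1 : ℕ) : ℝ) * P.β + 2 * P.β = P.β + Real.pi / 2 := by
    push_cast [Nat.cast_sub (show 1 ≤ 2 * P.p by have := P.two_le_p; omega)]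
    linear_combination P.two_mul_p_mul_β
  have hcos : (1 + P.lam * P.α) * Real.cos P.δ = 2 * Real.cos P.β * Real.cos (P.β - P.δ) := by
    rw [P.lam_mul_α, one_add_div P.cos_δ_pos.ne', div_mul_cancel₀ _ P.cos_δ_pos.ne',
      Real.two_mul_cos_mul_cos]
    ring_nf
  have := P.cos_β_sub_δ_pos.ne'
  rw [telescopeFactor, parityFactor, if_neg hodd, hsin, Real.sin_add_pi_div_two, ← mul_assoc,
    mul_div_assoc', mul_div_assoc', hcos, mul_div_cancel_right₀ _ this, Real.cos_two_mul]
  ring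

theorem measure_univ : P.measure univ =
    ENNReal.ofReal (Real.log ((1 + Real.cos (2 * P.β)) / Real.sin (2 * P.β))) := by
  have h := (P.one_le_and_lintegral_sliceMeasure_univ le_rfl).2
  rw [P.height_last, mul_one, P.one_add_lam_mul_α_mul_telescopeFactor_last] at h
  rw [← h, ← P.measure_setOf_sliceCoord_mem MeasurableSet.univ]
  simp only [mem_univ, ofPred_true]

lemma log_one_add_cos_div_sin_pos :
    0 < Real.log ((1 + Real.cos (2 * P.β)) / Real.sin (2 * P.β)) := by
  refine Real.log_pos ((one_lt_div P.sin_two_mul_β_pos).mpr ?_)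
  linarith [P.lam_eq, P.lam_pos, Real.sin_le_one (2 * P.β)]

lemma measureReal_univ : P.measure.real univ =
    Real.log ((1 + Real.cos (2 * P.β)) / Real.sin (2 * P.β)) := by
  rw [measureReal_def, measure_univ, ENNReal.toReal_ofReal P.log_one_add_cos_div_sin_pos.le]

lemma measureReal_univ_pos : 0 < P.measure.real univ :=
  P.measureReal_univ ▸ P.log_one_add_cos_div_sin_pos

end TotalMass

end RosenParam

/-- The length of the part of the window `(-κ, κ)` to the right of `s`. -/
noncomputable def tailLength (κ s : ℝ) : ENNReal := volume (Ici s ∩ Ioo (-κ) κ)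

lemma antitone_tailLength (κ : ℝ) : Antitone (tailLength κ) := fun _ _ h =>
  measure_mono (inter_subset_inter_left _ (Ici_subset_Ici.mpr h))

lemma volume_Ioo_neg_self (κ : ℝ) : volume (Ioo (-κ) κ) = ENNReal.ofReal (2 * κ) := by
  rw [Real.volume_Ioo, sub_neg_eq_add, two_mul]

lemma tailLength_le (κ s : ℝ) : tailLength κ s ≤ ENNReal.ofReal (2 * κ) :=
  (measure_mono inter_subset_right).trans_eq (volume_Ioo_neg_self κ)

lemma tailLength_eq_of_le_neg {κ s : ℝ} (h : s ≤ -κ) :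
    tailLength κ s = ENNReal.ofReal (2 * κ) := by
  rw [tailLength, inter_eq_right.mpr fun t (ht : t ∈ Ioo (-κ) κ) => mem_Ici.mpr (h.trans ht.1.le),
    volume_Ioo_neg_self]

lemma tailLength_add_tailLength_neg (κ s : ℝ) :
    tailLength κ s + tailLength κ (-s) = ENNReal.ofReal (2 * κ) := by
  have hreflect : tailLength κ (-s) = volume (Ioo (-κ) κ ∩ Iic s) := by
    rw [tailLength, ← Measure.measure_preimage_neg]
    congr 1
    ext t
    simp only [mem_inter_iff, mem_preimage, mem_Ici, mem_Ioo, mem_Iic, neg_le_neg_iff, neg_lt,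
      neg_lt_neg_iff]
    tauto
  rw [hreflect, tailLength, inter_comm, ← volume_Ioo_neg_self,
    ← measure_inter_add_sdiff (Ioo (-κ) κ) (measurableSet_Ici (a := s)), Set.sdiff_eq, compl_Ici,
    measure_congr ((ae_eq_refl _).inter (Iio_ae_eq_Iic (a := s)))]

lemma volume_Icc_inter_Ioo_le {κ s r : ℝ} : volume (Icc s r ∩ Ioo (-κ) κ) ≤ tailLength κ s :=
  measure_mono (inter_subset_inter_left _ Icc_subset_Ici_self)

lemma volume_Icc_inter_Ioo_eq {κ s r : ℝ} (hr : κ ≤ r) :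
    volume (Icc s r ∩ Ioo (-κ) κ) = tailLength κ s :=
  congrArg volume (Subset.antisymm (inter_subset_inter_left _ Icc_subset_Ici_self)
    fun _ ht => ⟨⟨ht.1, ht.2.2.le.trans hr⟩, ht.2⟩)

namespace RosenParam

variable (P : RosenParam) {κ v : ℝ} {m : ℕ}

lemma Ioc_height_penult :
    Ioc (P.height (2 * P.p - 2 - 1)) (P.height (2 * P.p - 2)) = Ioc (P.lam - 1) (P.lam / 2) := by
  rw [P.height_penult, Nat.sub_sub, P.height_antepenult]

lemma Ioc_height_last :
    Ioc (P.height (2 * P.p - 1 - 1)) (P.height (2 * P.p - 1)) = Ioc (P.lam / 2) 1 := by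
  rw [P.height_last, Nat.sub_sub, P.height_penult]

lemma exists_mem_Ioc_height {M : ℕ} (hv0 : 0 < v) (hv : v ≤ P.height M) :
    ∃ m, 1 ≤ m ∧ m ≤ M ∧ v ∈ Ioc (P.height (m - 1)) (P.height m) := by
  have hex : ∃ m, v ≤ P.height m := ⟨M, hv⟩
  have hne : Nat.find hex ≠ 0 := by
    intro h
    have := Nat.find_spec hex
    rw [h, P.height_zero] at this
    exact hv0.not_ge this
  exact ⟨_, Nat.one_le_iff_ne_zero.mpr hne, Nat.find_min' hex hv,
    not_le.mp (Nat.find_min hex (Nat.sub_one_lt hne)), Nat.find_spec hex⟩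

lemma sliceMeasure_Ioo_le (hm1 : 1 ≤ m) (hm : m ≤ 2 * P.p - 1)
    (hv : v ∈ Ioc (P.height (m - 1)) (P.height m)) :
    P.sliceMeasure (Ioo (-κ) κ) v ≤ tailLength κ (sliceCoord v (P.breakpoint m)) := by
  rw [P.sliceMeasure_eq measurableSet_Ioo hm1 hm hv]
  exact volume_Icc_inter_Ioo_le

lemma le_sliceCoord_lam_mul_α (h : κ ≤ P.lam / (P.lam + 2)) (hv : v ∈ Icc (0 : ℝ) 1) :
    κ ≤ sliceCoord v (P.lam * P.α) := by
  have hlam := P.lam_pos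
  refine h.trans ?_
  rw [sliceCoord, div_le_div_iff₀ (by linarith) (P.one_add_lam_mul_α_mul_pos hv.1)]
  nlinarith [P.half_lam_le_lam_mul_α,
    mul_nonneg (hlam.le.trans (by linarith [P.half_lam_le_lam_mul_α] : P.lam ≤ 2 * (P.lam * P.α)))
      (sub_nonneg.mpr hv.2)]

lemma sliceMeasure_Ioo_eq (h : κ ≤ P.lam / (P.lam + 2)) (hm1 : 1 ≤ m) (hm : m ≤ 2 * P.p - 1)
    (hv : v ∈ Ioc (P.height (m - 1)) (P.height m)) :
    P.sliceMeasure (Ioo (-κ) κ) v = tailLength κ (sliceCoord v (P.breakpoint m)) := by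
  rw [P.sliceMeasure_eq measurableSet_Ioo hm1 hm hv,
    volume_Icc_inter_Ioo_eq (P.le_sliceCoord_lam_mul_α h (P.mem_Icc_of_mem_Ioc_height hm hv))]

lemma sliceCoord_breakpoint_last (hv : v ∈ Ioc (P.lam - 1) (P.lam / 2)) :
    sliceCoord (P.lam - v) (P.breakpoint (2 * P.p - 1)) =
      -sliceCoord v (P.breakpoint (2 * P.p - 2)) := by
  have hp := P.two_le_p
  have h1 := P.seven_fifths_lt_lam
  have h2 := P.lam_lt_two
  have hpenult := P.one_add_breakpoint_mul_pos (m := 2 * P.p - 2) (by omega) (by omega)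
    (v := v) ⟨by linarith [hv.1], by linarith [hv.2]⟩
  have hlast := P.one_add_breakpoint_mul_pos (m := 2 * P.p - 1) (by omega) le_rfl
    (v := P.lam - v) ⟨by linarith [hv.2], by linarith [hv.1]⟩
  rw [sliceCoord, sliceCoord, ← neg_div, div_eq_div_iff hlast.ne' hpenult.ne']
  linear_combination P.breakpoint_last_add_penult

lemma measurable_tailLength_sliceCoord (κ t : ℝ) :
    Measurable fun v => tailLength κ (sliceCoord v t) :=
  (antitone_tailLength κ).measurable.comp (measurable_sliceCoord.comp measurable_prodMk_left)

/- The reflection `v ↦ lam - v` exchanges the two topmost levels and negates the left endpoint of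
the slice, so that the two deficits cancel. -/
lemma lintegral_tailLength_penult_add_last (κ : ℝ) :
    (∫⁻ v in Ioc (P.lam - 1) (P.lam / 2),
        tailLength κ (sliceCoord v (P.breakpoint (2 * P.p - 2)))) +
      ∫⁻ v in Ioc (P.lam / 2) 1, tailLength κ (sliceCoord v (P.breakpoint (2 * P.p - 1))) =
      ENNReal.ofReal (2 * κ) * ENNReal.ofReal (1 - P.lam / 2) := by
  set f := fun v => tailLength κ (sliceCoord v (P.breakpoint (2 * P.p - 1)))
  have hreflect : ∫⁻ v in Ioc (P.lam / 2) 1, f v =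
      ∫⁻ v in Ioc (P.lam - 1) (P.lam / 2), f (P.lam - v) := by
    have hpre : (fun v => P.lam - v) ⁻¹' Ioc (P.lam / 2) 1 = Ico (P.lam - 1) (P.lam / 2) := by
      rw [preimage_const_sub_Ioc, sub_half]
    rw [← lintegral_indicator measurableSet_Ioc, ← lintegral_sub_left_eq_self _ P.lam,
      setLIntegral_congr Ico_ae_eq_Ioc.symm, ← hpre,
      ← lintegral_indicator (measurableSet_Ioc.preimage (by fun_prop))]
    rfl
  have hcancel : ∀ v ∈ Ioc (P.lam - 1) (P.lam / 2),
      tailLength κ (sliceCoord v (P.breakpoint (2 * P.p - 2))) + f (P.lam - v) =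
        ENNReal.ofReal (2 * κ) := fun v hv => by
    simp only [f, P.sliceCoord_breakpoint_last hv, tailLength_add_tailLength_neg]
  rw [hreflect, ← lintegral_add_left (measurable_tailLength_sliceCoord _ _),
    setLIntegral_congr_fun measurableSet_Ioc hcancel, setLIntegral_const, Real.volume_Ioc]
  ring_nf

lemma ofReal_lam_mul_eq (hκ : 0 ≤ κ) :
    ENNReal.ofReal (P.lam * κ) = (∫⁻ _ in Ioc 0 (P.lam - 1), ENNReal.ofReal (2 * κ)) +
      ((∫⁻ v in Ioc (P.lam - 1) (P.lam / 2),
        tailLength κ (sliceCoord v (P.breakpoint (2 * P.p - 2)))) +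
      ∫⁻ v in Ioc (P.lam / 2) 1, tailLength κ (sliceCoord v (P.breakpoint (2 * P.p - 1)))) := by
  have h1 := P.seven_fifths_lt_lam
  have h2 := P.lam_lt_two
  rw [P.lintegral_tailLength_penult_add_last, setLIntegral_const, Real.volume_Ioc, ← mul_add,
    ← ENNReal.ofReal_add (by linarith) (by linarith), ← ENNReal.ofReal_mul (by linarith)]
  ring_nf

lemma lintegral_Ioc_zero_one_eq (f : ℝ → ENNReal) :
    ∫⁻ v in Ioc 0 1, f v = (∫⁻ v in Ioc 0 (P.lam - 1), f v) +
      ((∫⁻ v in Ioc (P.lam - 1) (P.lam / 2), f v) + ∫⁻ v in Ioc (P.lam / 2) 1, f v) := by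
  have h1 := P.seven_fifths_lt_lam
  have h2 := P.lam_lt_two
  rw [← lintegral_union measurableSet_Ioc (Ioc_disjoint_Ioc_of_le le_rfl),
    Ioc_union_Ioc_eq_Ioc (by linarith) (by linarith),
    ← lintegral_union measurableSet_Ioc (Ioc_disjoint_Ioc_of_le le_rfl),
    Ioc_union_Ioc_eq_Ioc (by linarith) (by linarith)]

theorem measure_sliceCoord_mem_Ioo_le (hκ : 0 ≤ κ) :
    P.measure {z : ℝ × ℝ | sliceCoord z.2 z.1 ∈ Ioo (-κ) κ} ≤ ENNReal.ofReal (P.lam * κ) := by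
  have hp := P.two_le_p
  rw [P.measure_setOf_sliceCoord_mem measurableSet_Ioo, P.ofReal_lam_mul_eq hκ,
    P.lintegral_Ioc_zero_one_eq]
  refine add_le_add ?_ (add_le_add ?_ ?_)
  · refine setLIntegral_mono measurable_const fun v hv => ?_
    obtain ⟨m, hm1, hm, hvm⟩ := P.exists_mem_Ioc_height hv.1 (hv.2.trans P.height_antepenult.ge)
    exact (P.sliceMeasure_Ioo_le hm1 (by omega) hvm).trans (tailLength_le _ _)
  · exact setLIntegral_mono (measurable_tailLength_sliceCoord _ _) fun v hv =>
      P.sliceMeasure_Ioo_le (by omega) (by omega) (P.Ioc_height_penult.ge hv)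
  · exact setLIntegral_mono (measurable_tailLength_sliceCoord _ _) fun v hv =>
      P.sliceMeasure_Ioo_le (by omega) le_rfl (P.Ioc_height_last.ge hv)

section Threshold

lemma two_sub_α_mul_lam_sq_mul_cos_δ : (2 - P.α * P.lam ^ 2) * Real.cos P.δ =
    2 * Real.sin (2 * P.β) * Real.sin (2 * P.β - P.δ) := by
  have hc := P.cos_δ_pos.ne'
  rw [show P.α * P.lam ^ 2 = P.lam * (P.lam * P.α) by ring, P.lam_mul_α, P.lam_eq, Real.cos_sub,
    Real.sin_sub]
  field_simp
  linear_combination (-Real.cos P.δ) * Real.sin_sq_add_cos_sq (2 * P.β)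

lemma two_sub_α_mul_lam_sq_pos : 0 < 2 - P.α * P.lam ^ 2 := by
  have : 0 < (2 - P.α * P.lam ^ 2) * Real.cos P.δ := by
    rw [P.two_sub_α_mul_lam_sq_mul_cos_δ]
    have := P.sin_two_mul_β_pos
    have := P.sin_two_mul_β_sub_δ_pos
    positivity
  exact pos_of_mul_pos_left this P.cos_δ_pos.le

lemma breakpoint_last_eq :
    P.breakpoint (2 * P.p - 1) = P.lam * (2 * P.α - 1) / (2 - P.α * P.lam ^ 2) := by
  have hc := P.cos_δ_pos.ne'
  have hs := P.sin_two_mul_β_pos.ne'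
  have hs' := P.sin_two_mul_β_sub_δ_pos.ne'
  have hnum : P.lam * (2 * P.α - 1) * Real.cos P.δ = 2 * Real.sin (2 * P.β) * Real.sin P.δ := by
    rw [show P.lam * (2 * P.α - 1) = 2 * (P.lam * P.α) - P.lam by ring, P.lam_mul_α, P.lam_eq,
      Real.cos_sub]
    field_simp
    ring
  rw [← mul_div_mul_right _ _ hc, hnum, P.two_sub_α_mul_lam_sq_mul_cos_δ, P.breakpoint_last]
  field_simp

lemma four_sub_lam_sq_pos : 0 < 4 - P.lam ^ 2 := by nlinarith [P.lam_pos, P.lam_lt_two]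

lemma breakpoint_last_add_two_div_lam : P.breakpoint (2 * P.p - 1) + 2 / P.lam =
    (4 - P.lam ^ 2) / (P.lam * (2 - P.α * P.lam ^ 2)) := by
  rw [P.breakpoint_last_eq, div_add_div _ _ P.two_sub_α_mul_lam_sq_pos.ne' P.lam_pos.ne',
    mul_comm P.lam (2 - P.α * P.lam ^ 2)]
  ring_nf

lemma lam_sub_height : P.lam - P.height (2 * P.p - 4) = 2 / P.lam := by
  have hrec := P.height_add_two (m := 2 * P.p - 4) (by omega)
  rw [show 2 * P.p - 4 + 2 = 2 * P.p - 2 by have := P.two_le_p; omega, P.height_penult] at hrec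
  rw [← one_div_one_div (P.lam - _), ← hrec, one_div_div]

lemma mul_breakpoint_add_two_add_lam_sub_le (hκ : 0 ≤ κ) (h1 : κ ≤ P.lam / (P.lam + 2))
    (h2 : κ ≤ P.lam * (2 - P.α * P.lam ^ 2) / (4 - P.lam ^ 2)) (hm1 : 1 ≤ m)
    (hm : m ≤ 2 * P.p - 3) (hv : v ∈ Ioc (P.height (m - 1)) (P.height m)) :
    κ * (P.breakpoint (m + 2) + P.lam - v) ≤ 1 := by
  have hlam := P.lam_pos
  have hlam2 := P.lam_lt_two
  rcases hm.eq_or_lt with hlast | hlt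
  · have hheight := P.lam_sub_height
    have hv1 := hv.1
    rw [show m - 1 = 2 * P.p - 4 by omega] at hv1
    have hle : P.breakpoint (m + 2) + P.lam - v ≤
        (4 - P.lam ^ 2) / (P.lam * (2 - P.α * P.lam ^ 2)) := by
      rw [← P.breakpoint_last_add_two_div_lam, show m + 2 = 2 * P.p - 1 by omega]
      linarith
    refine (mul_le_mul_of_nonneg_left hle hκ).trans ?_
    rwa [mul_div_assoc', div_le_one (mul_pos hlam P.two_sub_α_mul_lam_sq_pos),
      ← le_div_iff₀ P.four_sub_lam_sq_pos]
  · have hb : P.breakpoint (m + 2) ≤ 0 :=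
      (P.breakpoint_mono (by omega) (by omega)).trans P.breakpoint_penult_nonpos
    have hκ2 : κ * 2 ≤ 1 := by
      rw [le_div_iff₀ (by linarith)] at h1
      nlinarith
    nlinarith [(P.mem_Icc_of_mem_Ioc_height (by omega) hv).1]

lemma sliceCoord_breakpoint_le_neg (hκ : 0 ≤ κ) (h1 : κ ≤ P.lam / (P.lam + 2))
    (h2 : κ ≤ P.lam * (2 - P.α * P.lam ^ 2) / (4 - P.lam ^ 2)) (hm1 : 1 ≤ m)
    (hm : m ≤ 2 * P.p - 3) (hv : v ∈ Ioc (P.height (m - 1)) (P.height m)) :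
    sliceCoord v (P.breakpoint m) ≤ -κ := by
  have hneg := P.breakpoint_neg hm
  have hbound := P.mul_breakpoint_add_two_add_lam_sub_le hκ h1 h2 hm1 hm hv
  rw [P.breakpoint_add_two hm, sub_add_cancel] at hbound
  rw [sliceCoord, div_le_iff₀ (P.one_add_breakpoint_mul_pos hm1 (by omega)
    (P.mem_Icc_of_mem_Ioc_height (by omega) hv))]
  have hscaled := mul_le_mul_of_nonpos_right hbound hneg.le
  rw [mul_assoc, sub_mul, div_mul_cancel₀ _ hneg.ne] at hscaled
  linarith

end Threshold

theorem measure_sliceCoord_mem_Ioo_eq (hκ : 0 ≤ κ) (h1 : κ ≤ P.lam / (P.lam + 2))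
    (h2 : κ ≤ P.lam * (2 - P.α * P.lam ^ 2) / (4 - P.lam ^ 2)) :
    P.measure {z : ℝ × ℝ | sliceCoord z.2 z.1 ∈ Ioo (-κ) κ} = ENNReal.ofReal (P.lam * κ) := by
  have hp := P.two_le_p
  rw [P.measure_setOf_sliceCoord_mem measurableSet_Ioo, P.ofReal_lam_mul_eq hκ,
    P.lintegral_Ioc_zero_one_eq]
  refine congrArg₂ _ ?_ (congrArg₂ _ ?_ ?_)
  · refine setLIntegral_congr_fun measurableSet_Ioc fun v hv => ?_
    obtain ⟨m, hm1, hm, hvm⟩ := P.exists_mem_Ioc_height hv.1 (hv.2.trans P.height_antepenult.ge)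
    exact (P.sliceMeasure_Ioo_eq h1 hm1 (by omega) hvm).trans
      (tailLength_eq_of_le_neg (P.sliceCoord_breakpoint_le_neg hκ h1 h2 hm1 hm hvm))
  · exact setLIntegral_congr_fun measurableSet_Ioc fun v hv =>
      P.sliceMeasure_Ioo_eq h1 (by omega) (by omega) (P.Ioc_height_penult.ge hv)
  · exact setLIntegral_congr_fun measurableSet_Ioc fun v hv =>
      P.sliceMeasure_Ioo_eq h1 (by omega) le_rfl (P.Ioc_height_last.ge hv)

end RosenParam

/-! ### Contraction along fibres and approximation coefficients -/

section Contraction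

variable {lam α x v v' : ℝ}

lemma iterate_Tnat_fst (lam α : ℝ) (z : ℝ × ℝ) (n : ℕ) :
    ((Tnat lam α)^[n] z).1 = (Tmap lam α)^[n] z.1 :=
  (Function.Semiconj.iterate_right (f := Prod.fst) (fun _ => rfl) n) z

lemma abs_real_sign (hx : x ≠ 0) : |Real.sign x| = 1 :=
  (mul_self_eq_one_iff.mp (real_sign_mul_self hx)).elim (fun h => by rw [h, abs_one])
    fun h => by rw [h, abs_neg, abs_one]

lemma tendsto_zero_of_frequently_le {u r : ℕ → ℝ} {c : ℝ} (hc : c < 1) (hu : ∀ n, 0 ≤ u n)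
    (hur : ∀ n, u (n + 1) ≤ u n * r n) (hr : ∀ n, r n ≤ 1) (hrc : ∃ᶠ n in Filter.atTop, r n ≤ c) :
    Filter.Tendsto u Filter.atTop (nhds 0) := by
  have hanti : Antitone u := antitone_nat_of_succ_le fun n =>
    (hur n).trans (mul_le_of_le_one_right (hu n) (hr n))
  have hbdd : BddBelow (range u) := ⟨0, forall_mem_range.mpr hu⟩
  have hlim := tendsto_atTop_ciInf hanti hbdd
  rcases (le_ciInf hu).eq_or_lt with h0 | h0
  · rwa [← h0] at hlim
  · obtain ⟨n, hrn, hn⟩ := (hrc.and_eventually ((hlim.mul_const c).eventually_lt_const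
      (mul_lt_of_lt_one_right h0 hc))).exists
    have := (hur n).trans (mul_le_mul_of_nonneg_left hrn (hu n))
    exact absurd (ciInf_le hbdd (n + 1)) (this.trans_lt hn).not_ge

lemma add_two_sub_lam_le_Tmap (hx : x < 0) (hd : dfun lam α x = 1) :
    x + (2 - lam) ≤ Tmap lam α x := by
  have hsq : -(1 / x) - x - 2 = (1 + x) ^ 2 / -x := by
    have := hx.ne
    field_simp
    ring
  have : 0 ≤ (1 + x) ^ 2 / -x := div_nonneg (sq_nonneg _) (neg_nonneg.mpr hx.le)
  rw [Tmap_of_ne hx.ne, hd, abs_of_neg (one_div_neg.mpr hx), Int.cast_one, mul_one]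
  linarith

lemma Tnat_snd_sub (hv : (dfun lam α x : ℝ) * lam + Real.sign x * v ≠ 0)
    (hv' : (dfun lam α x : ℝ) * lam + Real.sign x * v' ≠ 0) :
    (Tnat lam α (x, v)).2 - (Tnat lam α (x, v')).2 =
      Real.sign x * (v' - v) * ((Tnat lam α (x, v)).2 * (Tnat lam α (x, v')).2) := by
  simp only [Tnat]
  field_simp
  ring

end Contraction

section Convergents

variable {lam α x : ℝ}

lemma mul_Spair_add_eq (hne : ∀ n, (Tmap lam α)^[n] x ≠ 0) (n : ℕ) :
    x * ((Spair lam α x n).1 + (Tmap lam α)^[n] x * (Spair lam α x n).2) =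
      (Rpair lam α x n).1 + (Tmap lam α)^[n] x * (Rpair lam α x n).2 := by
  induction n with
  | zero => simp [Spair, Rpair]
  | succ n ih =>
    rw [Function.iterate_succ_apply', Tmap_of_ne (hne n), abs_one_div_eq_sign_div]
    simp only [Spair, Rpair]
    have := hne n
    generalize Real.sign ((Tmap lam α)^[n] x) = ε
    field_simp
    linear_combination ε * ih

lemma abs_Rpair_mul_Spair_sub (hne : ∀ n, (Tmap lam α)^[n] x ≠ 0) (n : ℕ) :
    |(Rpair lam α x n).1 * (Spair lam α x n).2 - (Rpair lam α x n).2 * (Spair lam α x n).1| =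
      1 := by
  induction n with
  | zero => simp [Spair, Rpair]
  | succ n ih =>
    rw [← ih, ← abs_neg ((Rpair lam α x n).1 * _ - _), ← one_mul |-_|,
      ← abs_real_sign (hne n), ← abs_mul]
    simp only [Spair, Rpair]
    ring_nf

end Convergents

namespace RosenParam

variable (P : RosenParam) {x v v' : ℝ} {z : ℝ × ℝ}

lemma iterate_Tnat_mem_domain (hz : z ∈ P.domain) (hne : ∀ n, (Tmap P.lam P.α)^[n] z.1 ≠ 0)
    (n : ℕ) : (Tnat P.lam P.α)^[n] z ∈ P.domain := by
  induction n with
  | zero => exact hz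
  | succ n ih =>
    rw [Function.iterate_succ_apply']
    exact P.Tnat_mem_domain ih (by rw [iterate_Tnat_fst]; exact hne n)

lemma Tnat_snd_le (hz : z ∈ P.domain) (hne : z.1 ≠ 0)
    (h : ¬(z.1 < 0 ∧ dfun P.lam P.α z.1 = 1)) : (Tnat P.lam P.α z).2 ≤ 1 / P.lam := by
  obtain ⟨hI, hv⟩ := P.domain_subset hz
  have hlam := P.seven_fifths_lt_lam
  have hd := P.one_le_dfun hne hI
  refine one_div_le_one_div_of_le P.lam_pos ?_
  rcases hne.lt_or_gt with hneg | hpos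
  · have hd2 : (2 : ℝ) ≤ dfun P.lam P.α z.1 := by
      exact_mod_cast lt_of_le_of_ne hd fun h1 => h ⟨hneg, h1.symm⟩
    rw [Real.sign_of_neg hneg]
    nlinarith [hv.2]
  · have hd1 : (1 : ℝ) ≤ dfun P.lam P.α z.1 := by exact_mod_cast hd
    rw [Real.sign_of_pos hpos]
    nlinarith [hv.1]

/- Otherwise every step eventually has digit `1` and sign `-1`, and then the first coordinate
increases by at least `2 - lam` each time. -/
lemma frequently_iterate_Tnat_snd_le (hz : z ∈ P.domain)
    (hne : ∀ n, (Tmap P.lam P.α)^[n] z.1 ≠ 0) :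
    ∃ᶠ n in Filter.atTop, ((Tnat P.lam P.α)^[n + 1] z).2 ≤ 1 / P.lam := by
  rw [Filter.frequently_atTop]
  intro n
  by_contra! hlarge
  have hdigit : ∀ k ≥ n, (Tmap P.lam P.α)^[k] z.1 < 0 ∧
      dfun P.lam P.α ((Tmap P.lam P.α)^[k] z.1) = 1 := fun k hk => by
    by_contra h
    rw [← iterate_Tnat_fst] at h
    have := P.Tnat_snd_le (P.iterate_Tnat_mem_domain hz hne k)
      (by rw [iterate_Tnat_fst]; exact hne k) h
    rw [← Function.iterate_succ_apply' (Tnat P.lam P.α)] at this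
    exact this.not_gt (hlarge k hk)
  have hgrow : ∀ j : ℕ,
      (Tmap P.lam P.α)^[n] z.1 + j * (2 - P.lam) ≤ (Tmap P.lam P.α)^[n + j] z.1 := fun j => by
    induction j with
    | zero => simp
    | succ j ih =>
      obtain ⟨hneg, hd⟩ := hdigit (n + j) (Nat.le_add_right n j)
      rw [← add_assoc, Function.iterate_succ_apply']
      push_cast
      linarith [add_two_sub_lam_le_Tmap hneg hd]
  obtain ⟨j, hj⟩ := exists_nat_gt (-(Tmap P.lam P.α)^[n] z.1 / (2 - P.lam))
  rw [div_lt_iff₀ (by linarith [P.lam_lt_two])] at hj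
  linarith [hgrow j, (hdigit (n + j) (Nat.le_add_right n j)).1]

lemma one_div_lam_lt_one : 1 / P.lam < 1 := by
  rw [div_lt_one P.lam_pos]
  linarith [P.seven_fifths_lt_lam]

lemma abs_Tnat_snd_sub_le (hz : (x, v) ∈ P.domain) (hz' : (x, v') ∈ P.domain) (hne : x ≠ 0) :
    |(Tnat P.lam P.α (x, v)).2 - (Tnat P.lam P.α (x, v')).2| ≤
      |v - v'| * (Tnat P.lam P.α (x, v)).2 := by
  have hmem := (P.domain_subset (P.Tnat_mem_domain hz hne)).2
  have hmem' := (P.domain_subset (P.Tnat_mem_domain hz' hne)).2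
  rw [Tnat_snd_sub (P.denominator_pos hz hne).ne' (P.denominator_pos hz' hne).ne', abs_mul,
    abs_mul, abs_real_sign hne, one_mul, abs_sub_comm,
    abs_of_nonneg (mul_nonneg hmem.1 hmem'.1)]
  exact mul_le_mul_of_nonneg_left (mul_le_of_le_one_right hmem.1 hmem'.2) (abs_nonneg _)

lemma tendsto_abs_iterate_Tnat_snd_sub (hz : (x, v) ∈ P.domain) (hz' : (x, v') ∈ P.domain)
    (hne : ∀ n, (Tmap P.lam P.α)^[n] x ≠ 0) :
    Filter.Tendsto
      (fun n => |((Tnat P.lam P.α)^[n] (x, v)).2 - ((Tnat P.lam P.α)^[n] (x, v')).2|)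
      Filter.atTop (nhds 0) := by
  have hmem := P.iterate_Tnat_mem_domain hz hne
  have hmem' := P.iterate_Tnat_mem_domain hz' hne
  refine tendsto_zero_of_frequently_le P.one_div_lam_lt_one (fun n => abs_nonneg _) (fun n => ?_)
    (fun n => (P.domain_subset (hmem (n + 1))).2.2) (P.frequently_iterate_Tnat_snd_le hz hne)
  have hsplit : ∀ w, (Tnat P.lam P.α)^[n] (x, w) =
      ((Tmap P.lam P.α)^[n] x, ((Tnat P.lam P.α)^[n] (x, w)).2) := fun w =>
    Prod.ext (iterate_Tnat_fst _ _ _ _) rfl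
  have h := hmem n
  have h' := hmem' n
  rw [hsplit] at h h'
  rw [Function.iterate_succ_apply', Function.iterate_succ_apply', hsplit v, hsplit v']
  exact P.abs_Tnat_snd_sub_le h h' (hne n)

lemma Spair_pos_and_snd_eq (hx : x ∈ P.interval) (hne : ∀ n, (Tmap P.lam P.α)^[n] x ≠ 0)
    (n : ℕ) : 0 < (Spair P.lam P.α x n).1 ∧
      (Spair P.lam P.α x n).2 = ((Tnat P.lam P.α)^[n] (x, 0)).2 * (Spair P.lam P.α x n).1 := by
  induction n with
  | zero => simp [Spair]
  | succ n ih =>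
    have hfst : ((Tnat P.lam P.α)^[n] (x, 0)).1 = (Tmap P.lam P.α)^[n] x :=
      iterate_Tnat_fst _ _ _ _
    have hden := P.denominator_pos (P.iterate_Tnat_mem_domain (P.mk_zero_mem_domain hx) hne n)
      (hfst ▸ hne n)
    rw [Function.iterate_succ_apply']
    simp only [Spair, Tnat, ih.2, hfst] at hden ⊢
    refine ⟨by linarith [mul_pos ih.1 hden], ?_⟩
    field_simp

theorem Theta_eq (hx : x ∈ P.interval) (hne : ∀ n, (Tmap P.lam P.α)^[n] x ≠ 0) (n : ℕ) :
    Theta P.lam P.α x n =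
      |sliceCoord ((Tnat P.lam P.α)^[n] (x, 0)).2 ((Tnat P.lam P.α)^[n] (x, 0)).1| := by
  obtain ⟨hS, hS'⟩ := P.Spair_pos_and_snd_eq hx hne n
  obtain ⟨htI, hv⟩ :=
    P.domain_subset (P.iterate_Tnat_mem_domain (P.mk_zero_mem_domain hx) hne n)
  have hpos := P.one_add_mul_pos htI hv
  have hrel := mul_Spair_add_eq hne n
  have hdet := abs_Rpair_mul_Spair_sub hne n
  rw [Theta, sliceCoord, iterate_Tnat_fst] at *
  generalize ((Tnat P.lam P.α)^[n] (x, 0)).2 = v at *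
  generalize (Tmap P.lam P.α)^[n] x = t at *
  generalize (Spair P.lam P.α x n).1 = S at *
  generalize (Rpair P.lam P.α x n).1 = R at *
  have herror : S ^ 2 * (x - R / S) =
      -(R * (Spair P.lam P.α x n).2 - (Rpair P.lam P.α x n).2 * S) * (t / (1 + t * v)) := by
    rw [mul_div_assoc', eq_div_iff hpos.ne', mul_sub, pow_two, mul_assoc S S (R / S),
      mul_div_cancel₀ R hS.ne', hS']
    rw [hS'] at hrel
    linear_combination S * hrel
  rw [← abs_of_pos (pow_pos hS 2), ← abs_mul, herror, abs_mul, abs_neg, hdet, one_mul]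

lemma tendsto_one_div_Spair (hx : x ∈ P.interval) (hne : ∀ n, (Tmap P.lam P.α)^[n] x ≠ 0) :
    Filter.Tendsto (fun n => 1 / (Spair P.lam P.α x n).1) Filter.atTop (nhds 0) := by
  have hz := P.mk_zero_mem_domain hx
  have hS := P.Spair_pos_and_snd_eq hx hne
  refine tendsto_zero_of_frequently_le P.one_div_lam_lt_one
    (fun n => (one_div_pos.mpr (hS n).1).le) (fun n => le_of_eq ?_)
    (fun n => (P.domain_subset (P.iterate_Tnat_mem_domain hz hne (n + 1))).2.2)
    (P.frequently_iterate_Tnat_snd_le hz hne)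
  have hprev : (Spair P.lam P.α x n).1 =
    ((Tnat P.lam P.α)^[n + 1] (x, 0)).2 * (Spair P.lam P.α x (n + 1)).1 := (hS (n + 1)).2
  rw [div_mul_eq_mul_div, one_mul, eq_div_iff (hS n).1.ne', hprev, mul_comm, mul_div_assoc',
    mul_one, mul_div_cancel_right₀ _ (hS (n + 1)).1.ne']

end RosenParam

/-! ### Functions invariant under the map -/

/-- The Möbius map `y ↦ (2y - λ)/(2 - λy)`. It is hyperbolic with fixed points `±1`, lies in the
group generated by `y ↦ -1/y` and `y ↦ y + λ`, and commutes with `y ↦ 1/y`. -/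
noncomputable def hyperbolicStep (lam y : ℝ) : ℝ := (2 * y - lam) / (2 - lam * y)

section HyperbolicStep

variable {lam y β θ : ℝ}

lemma hyperbolicStep_one_div (hy : y ≠ 0) :
    hyperbolicStep lam (1 / y) = 1 / hyperbolicStep lam y := by
  unfold hyperbolicStep
  rw [one_div_div, ← mul_div_mul_right _ _ hy]
  congr 1 <;> field_simp

lemma hyperbolicStep_sub_one_div_add_one (hy : 2 - lam * y ≠ 0) :
    (hyperbolicStep lam y - 1) / (hyperbolicStep lam y + 1) =
      (2 + lam) / (2 - lam) * ((y - 1) / (y + 1)) := by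
  have hsub : hyperbolicStep lam y - 1 = (2 + lam) * (y - 1) / (2 - lam * y) := by
    rw [hyperbolicStep, div_sub_one hy]; congr 1; ring
  have hadd : hyperbolicStep lam y + 1 = (2 - lam) * (y + 1) / (2 - lam * y) := by
    rw [hyperbolicStep, div_add_one hy]; congr 1; ring
  rw [hsub, hadd, div_div_div_cancel_right₀ hy, mul_div_mul_comm]

lemma hyperbolicStep_one_div_sineRatio (hβ : Real.sin (2 * β) ≠ 0) (hθ : Real.sin θ ≠ 0) :
    hyperbolicStep (2 * Real.cos (2 * β)) (1 / sineRatio β θ) =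
      -sineRatio β (θ - Real.pi / 2) := by
  have hnum : 2 * (Real.sin (θ + 2 * β) / Real.sin θ) - 2 * Real.cos (2 * β) =
      2 * Real.sin (2 * β) * Real.cos θ / Real.sin θ := by
    rw [Real.sin_add]; field_simp; ring
  have hden : 2 - 2 * Real.cos (2 * β) * (Real.sin (θ + 2 * β) / Real.sin θ) =
      2 * Real.sin (2 * β) * -Real.cos (θ + 2 * β) / Real.sin θ := by
    rw [Real.sin_add, Real.cos_add]
    field_simp
    linear_combination -Real.sin θ * Real.sin_sq_add_cos_sq (2 * β)
  rw [sineRatio, one_div_div, hyperbolicStep, hnum, hden, div_div_div_cancel_right₀ hθ,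
    mul_div_mul_left _ _ (mul_ne_zero two_ne_zero hβ), sineRatio,
    show θ - Real.pi / 2 + 2 * β = θ + 2 * β - Real.pi / 2 by ring, Real.sin_sub_pi_div_two,
    Real.sin_sub_pi_div_two, neg_div_neg_eq, div_neg]

end HyperbolicStep

namespace RosenParam

/-- Invariance of a function on the line under `x ↦ x + λ` and, on the interval of `T_α`, under
`x ↦ |1/x|`; for a `λ`-periodic function the latter is invariance under `T_α`. -/
structure RosenInvariant {γ : Type*} (P : RosenParam) (Q : ℝ → γ) : Prop where
  periodic : Function.Periodic Q P.lam
  apply_abs_one_div : ∀ x ∈ P.interval, Q |1 / x| = Q x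

section Angles

variable (P : RosenParam)

lemma lam_sub_sineRatio {θ : ℝ} (hθ : Real.sin (θ + 2 * P.β) ≠ 0) :
    P.lam - sineRatio P.β θ = sineRatio P.β (Real.pi - 4 * P.β - θ) := by
  rw [← one_div_one_div (P.lam - _), lam_eq, ← sineRatio_add_two_mul hθ, sineRatio, sineRatio,
    one_div_div, show Real.pi - 4 * P.β - θ = Real.pi - (θ + 2 * P.β + 2 * P.β) by ring,
    Real.sin_pi_sub, show Real.pi - (θ + 2 * P.β + 2 * P.β) + 2 * P.β = Real.pi - (θ + 2 * P.β)
    by ring, Real.sin_pi_sub]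

lemma exists_sineRatio_eq {m n : ℕ} (hmn : m ≤ n) (hn : n ≤ 2 * P.p - 1) {y : ℝ}
    (hy : y ∈ Ioo (-P.breakpoint n) (-P.breakpoint m)) :
    ∃ θ ∈ Ioo (P.angle n) (P.angle m), sineRatio P.β θ = y := by
  have hcont : ContinuousOn (sineRatio P.β) (Icc (P.angle n) (P.angle m)) := by
    refine ContinuousOn.div (by fun_prop) (by fun_prop) fun x hx => ?_
    have hlo := (P.angle_mem_Ioo hn).1
    have hhi := (P.angle_mem_Ioo (hmn.trans hn)).2
    exact (Real.sin_pos_of_pos_of_lt_pi (by linarith [hx.1]) (by linarith [hx.2])).ne'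
  rw [breakpoint, breakpoint, neg_neg, neg_neg] at hy
  exact intermediate_value_Ioo (P.antitone_angle hmn) hcont hy

end Angles

namespace RosenInvariant

variable {γ : Type*} {P : RosenParam} {Q : ℝ → γ} {x y θ : ℝ}

lemma apply_one_div_of_nonneg (hQ : P.RosenInvariant Q) (hx0 : 0 ≤ x) (hx : x ≤ P.lam * P.α) :
    Q (1 / x) = Q x := by
  have hmem : x ∈ P.interval := ⟨by nlinarith [P.α_lt_one, P.lam_pos], hx⟩
  rw [← hQ.apply_abs_one_div x hmem, abs_of_nonneg (one_div_nonneg.mpr hx0)]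

lemma apply_neg_one_div_of_nonpos (hQ : P.RosenInvariant Q) (hx0 : x ≤ 0)
    (hx : P.lam * (P.α - 1) ≤ x) : Q (-1 / x) = Q x := by
  have hmem : x ∈ P.interval := ⟨hx, by nlinarith [P.half_le_α, P.lam_pos]⟩
  rw [← hQ.apply_abs_one_div x hmem, abs_of_nonpos (one_div_nonpos.mpr hx0), neg_div]

lemma apply_neg_sineRatio_sub_two_mul (hQ : P.RosenInvariant Q) (h0 : 0 < θ)
    (h1 : θ ≤ P.angle 1) :
    Q (-sineRatio P.β (θ - 2 * P.β)) = Q (-sineRatio P.β θ) := by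
  have hβ := P.β_pos
  have hangle := P.angle_mem_Ioo (show 1 ≤ 2 * P.p - 1 by have := P.two_le_p; omega)
  have hsin : 0 < Real.sin θ := Real.sin_pos_of_pos_of_lt_pi h0 (by linarith [hangle.2])
  have hsin' : 0 < Real.sin (θ + 2 * P.β) :=
    Real.sin_pos_of_pos_of_lt_pi (by linarith) (by linarith [hangle.2])
  have hle : P.lam * (P.α - 1) ≤ -sineRatio P.β θ := by
    rw [← P.breakpoint_one]
    exact neg_le_neg ((strictMonoOn_sineRatio P.sin_two_mul_β_pos).monotoneOn
      ⟨by linarith, by linarith [hangle.2]⟩ hangle h1)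
  have hneg : -sineRatio P.β θ ≤ 0 := neg_nonpos.mpr (div_pos hsin hsin').le
  rw [neg_sineRatio_sub_two_mul hsin.ne', ← lam_eq, hQ.periodic.sub_eq,
    hQ.apply_neg_one_div_of_nonpos hneg hle]

lemma apply_neg_sineRatio_sub_nat_mul (hQ : P.RosenInvariant Q) (j : ℕ)
    (h0 : 2 * P.β * ((j : ℝ) - 1) < θ) (h1 : θ ≤ P.angle 1) :
    Q (-sineRatio P.β (θ - 2 * P.β * j)) = Q (-sineRatio P.β θ) := by
  have hβ := P.β_pos
  induction j with
  | zero => simp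
  | succ j ih =>
    push_cast at h0
    have hj : 0 ≤ 2 * P.β * (j : ℝ) := by positivity
    rw [← ih (by linarith), ← hQ.apply_neg_sineRatio_sub_two_mul (θ := θ - 2 * P.β * j)
      (by linarith) (by linarith)]
    push_cast
    ring_nf

lemma apply_neg_sineRatio_neg (hQ : P.RosenInvariant Q) (h0 : 0 ≤ θ) (h1 : θ ≤ P.δ) :
    Q (-sineRatio P.β (-θ)) = Q (-sineRatio P.β θ) := by
  rcases h0.eq_or_lt with rfl | h0
  · rw [neg_zero]
  have hβ := P.β_pos
  have hδ := P.δ_le_β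
  have hpi := P.eight_mul_β_le_pi
  have hinv : -sineRatio P.β (θ - 2 * P.β) = 1 / -sineRatio P.β (-θ) := by
    rw [sineRatio, sineRatio, sub_add_cancel, Real.sin_neg, neg_div, neg_neg, one_div_div,
      neg_add_eq_sub, ← neg_div, ← Real.sin_neg, neg_sub]
  have hnonneg : 0 ≤ -sineRatio P.β (-θ) := by
    rw [sineRatio, Real.sin_neg, neg_div, neg_neg]
    exact div_nonneg (Real.sin_nonneg_of_nonneg_of_le_pi h0.le (by linarith))
      (Real.sin_nonneg_of_nonneg_of_le_pi (by linarith) (by linarith))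
  have hle : -sineRatio P.β (-θ) ≤ P.lam * P.α := by
    refine le_trans (neg_le_neg ?_) P.breakpoint_last_le
    rw [P.angle_last]
    exact (strictMonoOn_sineRatio P.sin_two_mul_β_pos).monotoneOn ⟨by linarith, by linarith⟩
      ⟨by linarith, by linarith⟩ (neg_le_neg h1)
  rw [← hQ.apply_neg_sineRatio_sub_two_mul h0 (by rw [P.angle_one]; linarith), hinv,
    hQ.apply_one_div_of_nonneg hnonneg hle]

lemma apply_sineRatio (hQ : P.RosenInvariant Q) (hθ : θ ∈ Icc (P.angle 1) (P.angle 0)) :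
    Q (sineRatio P.β θ) = Q (-sineRatio P.β (θ - (Real.pi / 2 - 2 * P.β))) := by
  have hβ := P.β_pos
  have hδ := P.δ_le_β
  have hpi := P.eight_mul_β_le_pi
  have hp := P.two_mul_p_mul_β
  have hmem := P.angle_mem_Ioo (Nat.zero_le _)
  have hθ1 := hθ.1
  have hθ0 := hθ.2
  rw [P.angle_one] at hθ1
  have hle : sineRatio P.β θ ≤ P.lam * P.α := by
    rw [← neg_le_neg_iff, ← P.breakpoint_zero]
    exact neg_le_neg ((strictMonoOn_sineRatio P.sin_two_mul_β_pos).monotoneOn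
      ⟨by linarith, by linarith [hmem.2]⟩ hmem hθ0)
  rw [P.angle_zero] at hθ0
  have hsin : 0 < Real.sin θ := Real.sin_pos_of_pos_of_lt_pi (by linarith) (by linarith)
  have hnonneg : 0 ≤ sineRatio P.β θ :=
    (div_pos hsin (Real.sin_pos_of_pos_of_lt_pi (by linarith) (by linarith))).le
  have hcast : ((P.p - 2 : ℕ) : ℝ) = P.p - 2 := by rw [Nat.cast_sub P.two_le_p, Nat.cast_ofNat]
  have hstep : Q (sineRatio P.β θ) = Q (-sineRatio P.β (θ - 2 * P.β)) := by
    rw [neg_sineRatio_sub_two_mul hsin.ne', ← lam_eq, hQ.periodic.sub_eq, neg_div_neg_eq,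
      hQ.apply_one_div_of_nonneg hnonneg hle]
  rw [hstep, ← hQ.apply_neg_sineRatio_sub_nat_mul (P.p - 2) (by rw [hcast]; linarith)
    (by rw [P.angle_one]; linarith), hcast, ← hp]
  ring_nf

lemma apply_neg_of_mem_Ioo (hQ : P.RosenInvariant Q)
    (hy : y ∈ Ioo (P.lam * (1 - P.α)) (P.lam * P.α)) : Q (-y) = Q y := by
  have hβ := P.β_pos
  have hδ := P.δ_le_β
  have hpi := P.eight_mul_β_le_pi
  obtain ⟨θ, hθ, rfl⟩ := P.exists_sineRatio_eq zero_le_one (by have := P.two_le_p; omega)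
    (y := y) (by rwa [P.breakpoint_zero, P.breakpoint_one, neg_neg, ← mul_neg, neg_sub])
  have hθ' := hθ
  rw [P.angle_zero, P.angle_one] at hθ'
  have hsin : Real.sin (θ + 2 * P.β) ≠ 0 :=
    (Real.sin_pos_of_pos_of_lt_pi (by linarith [hθ'.1]) (by linarith [hθ'.2])).ne'
  have hreflect : Q (-sineRatio P.β θ) = Q (sineRatio P.β (Real.pi - 4 * P.β - θ)) := by
    rw [← P.lam_sub_sineRatio hsin, sub_eq_add_neg, add_comm, hQ.periodic]
  rw [hreflect, hQ.apply_sineRatio (Ioo_subset_Icc_self hθ), hQ.apply_sineRatio (by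
    rw [P.angle_zero, P.angle_one]; constructor <;> linarith [hθ'.1, hθ'.2]),
    show Real.pi - 4 * P.β - θ - (Real.pi / 2 - 2 * P.β) = -(θ - (Real.pi / 2 - 2 * P.β)) by ring]
  set ω := θ - (Real.pi / 2 - 2 * P.β) with hω
  rcases le_total 0 ω with h | h
  · exact hQ.apply_neg_sineRatio_neg h (by linarith [hθ'.2])
  · simpa using (hQ.apply_neg_sineRatio_neg (θ := -ω) (by linarith) (by linarith [hθ'.1])).symm

lemma apply_neg (hQ : P.RosenInvariant Q) (y : ℝ) : Q (-y) = Q y := by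
  have hpair : Function.Periodic (fun y => (Q (-y), Q y)) P.lam := fun y => by
    simp only [neg_add', hQ.periodic.sub_eq, hQ.periodic y]
  obtain ⟨x, hx, heq⟩ := hpair.exists_mem_Ico P.lam_pos y (P.lam * (P.α - 1))
  simp only [Prod.mk.injEq] at heq
  rw [heq.1, heq.2]
  rcases lt_or_ge (P.lam * (1 - P.α)) x with h | h
  · exact hQ.apply_neg_of_mem_Ioo ⟨h, by linarith [hx.2]⟩
  have hhalf := P.half_lam_le_lam_mul_α
  rw [← hQ.apply_abs_one_div x ⟨hx.1, by linarith⟩,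
    ← hQ.apply_abs_one_div (-x) ⟨by linarith, by linarith [hx.1]⟩, div_neg, abs_neg]

lemma apply_hyperbolicStep (hQ : P.RosenInvariant Q)
    (hy : y ∈ Ioo (P.lam * P.α) (1 / (P.lam * P.α))) : Q (hyperbolicStep P.lam y) = Q y := by
  have hβ := P.β_pos
  have hδ := P.δ_nonneg
  have hpi := P.eight_mul_β_le_pi
  have hp := P.two_mul_p_mul_β
  have hp2 := P.two_le_p
  obtain ⟨θ, hθ, hθy⟩ := P.exists_sineRatio_eq one_le_two (by omega) (y := P.lam - y) (by
    rw [P.breakpoint_one, P.breakpoint_two]; constructor <;> linarith [hy.1, hy.2])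
  have hθ' := hθ
  rw [show (2 : ℕ) = 0 + 2 from rfl, P.angle_add_two, P.angle_zero, P.angle_one] at hθ'
  have hsin : Real.sin (θ + 2 * P.β) ≠ 0 :=
    (Real.sin_pos_of_pos_of_lt_pi (by linarith [hθ'.1, P.δ_le_β]) (by linarith [hθ'.2])).ne'
  have hy_eq : y = 1 / sineRatio P.β (θ + 2 * P.β) := by
    rw [sineRatio_add_two_mul hsin, one_div_one_div, hθy, ← lam_eq, sub_sub_cancel]
  have hcast : ((P.p - 1 : ℕ) : ℝ) = P.p - 1 := by rw [Nat.cast_sub (by omega), Nat.cast_one]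
  have hstep : hyperbolicStep P.lam y = -sineRatio P.β (θ - 2 * P.β * (P.p - 1 : ℕ)) := by
    rw [hy_eq, lam_eq, hyperbolicStep_one_div_sineRatio P.sin_two_mul_β_pos.ne' hsin, hcast, ← hp]
    ring_nf
  rw [hstep, hQ.apply_neg_sineRatio_sub_nat_mul (P.p - 1) (by rw [hcast]; linarith [hθ'.1])
    hθ.2.le, hθy, neg_sub, hQ.periodic.sub_eq]

-- `(y - 1)/(y + 1)` grows geometrically under `hyperbolicStep`, so after at most `n` steps
-- `y` or `1/y` has dropped below `λα`, where the invariance under inversion is known.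
lemma apply_one_div_of_one_le_pow_mul (hQ : P.RosenInvariant Q) (n : ℕ) (hy : 0 < y)
    (hn : 1 ≤ ((2 + P.lam) / (2 - P.lam)) ^ n * |(y - 1) / (y + 1)|) : Q (1 / y) = Q y := by
  have hlam := P.lam_pos
  have hlam2 := P.lam_lt_two
  have hhalf := P.half_lam_le_lam_mul_α
  induction n generalizing y with
  | zero =>
    rw [pow_zero, one_mul, abs_div, abs_of_pos (by linarith : 0 < y + 1),
      le_div_iff₀ (by linarith), one_mul, le_abs] at hn
    rcases hn with hn | hn <;> linarith
  | succ n ih =>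
    rcases le_or_gt y (P.lam * P.α) with hyα | hyα
    · exact hQ.apply_one_div_of_nonneg hy.le hyα
    rcases le_or_gt (1 / y) (P.lam * P.α) with hyα' | hyα'
    · simpa using (hQ.apply_one_div_of_nonneg (one_div_pos.mpr hy).le hyα').symm
    have hden : 0 < 2 - P.lam * y := by
      have : P.lam / 2 < 1 / y := by linarith
      rw [lt_div_iff₀ hy] at this
      linarith
    have hlt : y < 1 / (P.lam * P.α) := by
      rwa [lt_one_div hy (by linarith)]
    have hlt' : 1 / y < 1 / (P.lam * P.α) := one_div_lt_one_div_of_lt (by linarith) hyα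
    rw [← hQ.apply_hyperbolicStep ⟨hyα, hlt⟩, ← hQ.apply_hyperbolicStep ⟨hyα', hlt'⟩,
      hyperbolicStep_one_div hy.ne']
    refine ih (div_pos (by linarith) hden) ?_
    rwa [hyperbolicStep_sub_one_div_add_one hden.ne', abs_mul,
      abs_of_pos (div_pos (by linarith) (by linarith)), ← mul_assoc, ← pow_succ]

lemma apply_one_div (hQ : P.RosenInvariant Q) (y : ℝ) : Q (1 / y) = Q y := by
  have hpos : ∀ y, 0 < y → Q (1 / y) = Q y := fun y hy => by
    rcases eq_or_ne y 1 with rfl | hy1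
    · rw [one_div_one]
    have habs : 0 < |(y - 1) / (y + 1)| :=
      abs_pos.mpr (div_ne_zero (sub_ne_zero.mpr hy1) (by linarith))
    have hratio : 1 < (2 + P.lam) / (2 - P.lam) := by
      rw [lt_div_iff₀ (by linarith [P.lam_lt_two])]; linarith [P.lam_pos]
    obtain ⟨n, hn⟩ := pow_unbounded_of_one_lt (1 / |(y - 1) / (y + 1)|) hratio
    exact hQ.apply_one_div_of_one_le_pow_mul n hy ((div_lt_iff₀ habs).mp hn).le
  rcases lt_trichotomy y 0 with hy | rfl | hy
  · rw [← hQ.apply_neg (1 / y), ← hQ.apply_neg y, ← div_neg, hpos (-y) (by linarith)]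
  · rw [div_zero]
  · exact hpos y hy

end RosenInvariant

end RosenParam

/-! ### Bounded distortion and the zero-one law -/

/-- The branch of `T_α^{-n}` through `x`, as a Möbius map in the value `u` of `T_α^n`. -/
noncomputable def inverseBranch (lam α x : ℝ) (n : ℕ) (u : ℝ) : ℝ :=
  ((Rpair lam α x n).1 + u * (Rpair lam α x n).2) / ((Spair lam α x n).1 + u * (Spair lam α x n).2)

section InverseBranch

variable {lam α x u u' : ℝ} {n : ℕ}

lemma inverseBranch_iterate_Tmap (hne : ∀ n, (Tmap lam α)^[n] x ≠ 0)
    (hS : (Spair lam α x n).1 + (Tmap lam α)^[n] x * (Spair lam α x n).2 ≠ 0) :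
    inverseBranch lam α x n ((Tmap lam α)^[n] x) = x := by
  rw [inverseBranch, div_eq_iff hS, mul_Spair_add_eq hne]

lemma abs_inverseBranch_sub (hne : ∀ n, (Tmap lam α)^[n] x ≠ 0)
    (hu : (Spair lam α x n).1 + u * (Spair lam α x n).2 ≠ 0)
    (hu' : (Spair lam α x n).1 + u' * (Spair lam α x n).2 ≠ 0) :
    |inverseBranch lam α x n u - inverseBranch lam α x n u'| =
      |u - u'| / |((Spair lam α x n).1 + u * (Spair lam α x n).2) *
        ((Spair lam α x n).1 + u' * (Spair lam α x n).2)| := by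
  unfold inverseBranch
  rw [div_sub_div _ _ hu hu', abs_div, ← mul_one |u - u'|, ← abs_Rpair_mul_Spair_sub hne n,
    ← abs_mul, abs_sub_comm]
  ring_nf

lemma hasDerivAt_inverseBranch (hu : (Spair lam α x n).1 + u * (Spair lam α x n).2 ≠ 0) :
    HasDerivAt (inverseBranch lam α x n)
      (-((Rpair lam α x n).1 * (Spair lam α x n).2 - (Rpair lam α x n).2 * (Spair lam α x n).1) /
        ((Spair lam α x n).1 + u * (Spair lam α x n).2) ^ 2) u := by
  have haffine : ∀ a b : ℝ, HasDerivAt (fun u => a + u * b) b u := fun a b => by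
    simpa using ((hasDerivAt_id u).mul_const b).const_add a
  refine ((haffine _ _).div (haffine _ _) hu).congr_deriv ?_
  ring

end InverseBranch

namespace RosenParam

section Distortion

variable (P : RosenParam) {x u : ℝ}

lemma Spair_add_mul_mem_Icc (hx : x ∈ P.interval) (hne : ∀ n, (Tmap P.lam P.α)^[n] x ≠ 0)
    (hu : u ∈ P.interval) (n : ℕ) :
    (Spair P.lam P.α x n).1 + u * (Spair P.lam P.α x n).2 ∈
      Icc ((Spair P.lam P.α x n).1 * (1 - P.lam / 2)) ((Spair P.lam P.α x n).1 * 2) := by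
  obtain ⟨hS, hS'⟩ := P.Spair_pos_and_snd_eq hx hne n
  have hv := (P.domain_subset (P.iterate_Tnat_mem_domain (P.mk_zero_mem_domain hx) hne n)).2
  have hle : u * ((Tnat P.lam P.α)^[n] (x, 0)).2 ≤ 1 := by
    nlinarith [hu.2, hv.1, hv.2, P.lam_mul_α_le_one]
  rw [hS', ← mul_assoc, mul_comm _ (Spair P.lam P.α x n).1, ← mul_one_add]
  exact ⟨mul_le_mul_of_nonneg_left (P.one_sub_half_lam_le hu hv) hS.le,
    mul_le_mul_of_nonneg_left (by linarith) hS.le⟩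

lemma Spair_add_mul_pos (hx : x ∈ P.interval) (hne : ∀ n, (Tmap P.lam P.α)^[n] x ≠ 0)
    (hu : u ∈ P.interval) (n : ℕ) :
    0 < (Spair P.lam P.α x n).1 + u * (Spair P.lam P.α x n).2 :=
  (mul_pos (P.Spair_pos_and_snd_eq hx hne n).1 (by linarith [P.lam_lt_two])).trans_le
    (P.Spair_add_mul_mem_Icc hx hne hu n).1

lemma injOn_inverseBranch (hx : x ∈ P.interval) (hne : ∀ n, (Tmap P.lam P.α)^[n] x ≠ 0) (n : ℕ) :
    InjOn (inverseBranch P.lam P.α x n) P.interval := by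
  intro u hu u' hu' heq
  have hpos := P.Spair_add_mul_pos hx hne hu n
  have hpos' := P.Spair_add_mul_pos hx hne hu' n
  have hsub := abs_inverseBranch_sub hne hpos.ne' hpos'.ne'
  rw [heq, sub_self, abs_zero, eq_comm, div_eq_zero_iff, abs_eq_zero, abs_eq_zero] at hsub
  exact sub_eq_zero.mp (hsub.resolve_right (mul_pos hpos hpos').ne')

lemma ofReal_mul_volume_le_volume_image_inverseBranch (hx : x ∈ P.interval)
    (hne : ∀ n, (Tmap P.lam P.α)^[n] x ≠ 0) (n : ℕ) {B : Set ℝ} (hB : MeasurableSet B)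
    (hBI : B ⊆ P.interval) :
    ENNReal.ofReal (1 / (4 * (Spair P.lam P.α x n).1 ^ 2)) * volume B ≤
      volume (inverseBranch P.lam P.α x n '' B) := by
  have hpos : ∀ u ∈ B, 0 < (Spair P.lam P.α x n).1 + u * (Spair P.lam P.α x n).2 :=
    fun u hu => P.Spair_add_mul_pos hx hne (hBI hu) n
  have himage := lintegral_image_eq_lintegral_abs_deriv_mul hB
    (fun u hu => (hasDerivAt_inverseBranch (hpos u hu).ne').hasDerivWithinAt)
    ((P.injOn_inverseBranch hx hne n).mono hBI) 1
  simp only [Pi.one_apply, lintegral_one, Measure.restrict_apply MeasurableSet.univ, univ_inter,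
    mul_one] at himage
  rw [himage, ← setLIntegral_const]
  refine setLIntegral_mono' hB fun u hu => ENNReal.ofReal_le_ofReal ?_
  rw [abs_div, abs_neg, abs_Rpair_mul_Spair_sub hne n, abs_of_pos (pow_pos (hpos u hu) 2)]
  refine one_div_le_one_div_of_le (pow_pos (hpos u hu) 2) ?_
  linarith [pow_le_pow_left₀ (hpos u hu).le (P.Spair_add_mul_mem_Icc hx hne (hBI hu) n).2 2]

/-- The radius of a ball around `x` that contains the whole image of the inverse branch of order
`n` through `x`, while that image fills a fixed proportion of it. -/
noncomputable def branchRadius (x : ℝ) (n : ℕ) : ℝ :=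
  P.lam / (1 - P.lam / 2) ^ 2 * (1 / (Spair P.lam P.α x n).1) ^ 2

lemma branchRadius_pos (hx : x ∈ P.interval) (hne : ∀ n, (Tmap P.lam P.α)^[n] x ≠ 0) (n : ℕ) :
    0 < P.branchRadius x n :=
  mul_pos (div_pos P.lam_pos (pow_pos (by linarith [P.lam_lt_two]) 2))
    (pow_pos (one_div_pos.mpr (P.Spair_pos_and_snd_eq hx hne n).1) 2)

lemma tendsto_branchRadius (hx : x ∈ P.interval) (hne : ∀ n, (Tmap P.lam P.α)^[n] x ≠ 0) :
    Filter.Tendsto (P.branchRadius x) Filter.atTop (nhdsWithin 0 (Ioi 0)) := by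
  refine tendsto_nhdsWithin_iff.mpr ⟨?_, Filter.Eventually.of_forall (P.branchRadius_pos hx hne)⟩
  have hlim := ((P.tendsto_one_div_Spair hx hne).pow 2).const_mul (P.lam / (1 - P.lam / 2) ^ 2)
  rwa [zero_pow two_ne_zero, mul_zero] at hlim

lemma inverseBranch_mem_closedBall (hx : x ∈ P.interval) (hne : ∀ n, (Tmap P.lam P.α)^[n] x ≠ 0)
    (hu : u ∈ P.interval) (n : ℕ) :
    inverseBranch P.lam P.α x n u ∈ Metric.closedBall x (P.branchRadius x n) := by
  have ht : (Tmap P.lam P.α)^[n] x ∈ P.interval := by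
    have := (P.domain_subset (P.iterate_Tnat_mem_domain (P.mk_zero_mem_domain hx) hne n)).1
    rwa [iterate_Tnat_fst] at this
  have hpos_u := P.Spair_add_mul_pos hx hne hu n
  have hpos_t := P.Spair_add_mul_pos hx hne ht n
  have hS : 0 < (Spair P.lam P.α x n).1 * (1 - P.lam / 2) :=
    mul_pos (P.Spair_pos_and_snd_eq hx hne n).1 (by linarith [P.lam_lt_two])
  have hradius : P.branchRadius x n = P.lam / ((Spair P.lam P.α x n).1 * (1 - P.lam / 2) *
      ((Spair P.lam P.α x n).1 * (1 - P.lam / 2))) := by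
    rw [branchRadius, div_pow, one_pow, div_mul_div_comm, mul_one]
    ring_nf
  have hsub := abs_inverseBranch_sub hne hpos_u.ne' hpos_t.ne'
  rw [inverseBranch_iterate_Tmap hne hpos_t.ne'] at hsub
  rw [Metric.mem_closedBall, Real.dist_eq, hsub, abs_of_pos (mul_pos hpos_u hpos_t), hradius]
  refine div_le_div₀ P.lam_pos.le ?_ (mul_pos hS hS)
    (mul_le_mul (P.Spair_add_mul_mem_Icc hx hne hu n).1
      (P.Spair_add_mul_mem_Icc hx hne ht n).1 hS.le hpos_u.le)
  exact abs_le.mpr ⟨by linarith [hu.1, ht.2], by linarith [hu.2, ht.1]⟩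

end Distortion

section ZeroOne

variable {γ : Type*} {P : RosenParam} {Q : ℝ → γ} {x : ℝ}

-- In homogeneous coordinates no denominator has to be nonzero.
lemma RosenInvariant.apply_convergents_div (hQ : P.RosenInvariant Q)
    (hne : ∀ n, (Tmap P.lam P.α)^[n] x ≠ 0) (n : ℕ) (a b : ℝ) :
    Q ((a * (Rpair P.lam P.α x n).1 + b * (Rpair P.lam P.α x n).2) /
      (a * (Spair P.lam P.α x n).1 + b * (Spair P.lam P.α x n).2)) = Q (b / a) := by
  induction n generalizing a b with
  | zero => simp [Rpair, Spair]
  | succ n ih =>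
    simp only [Rpair, Spair]
    generalize dfun P.lam P.α ((Tmap P.lam P.α)^[n] x) = d
    generalize hε : Real.sign ((Tmap P.lam P.α)^[n] x) = ε
    have hsign : ∀ y, Q (ε * y) = Q y := fun y => by
      rcases Real.sign_apply_eq_of_ne_zero _ (hne n) with h | h <;>
        simp [← hε, h, hQ.apply_neg]
    have hinv : Q (a / (a * (d * P.lam) + b)) = Q (b / a) := by
      rcases eq_or_ne a 0 with rfl | ha
      · simp
      rw [← hQ.apply_one_div, one_div_div, add_div, mul_div_cancel_left₀ _ ha, add_comm,
        hQ.periodic.int_mul]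
    rw [← hinv, ← hsign (a / (a * (d * P.lam) + b)), ← mul_div_assoc,
      ← ih (a * (d * P.lam) + b) (ε * a)]
    congr 2 <;> ring

lemma RosenInvariant.apply_inverseBranch (hQ : P.RosenInvariant Q)
    (hne : ∀ n, (Tmap P.lam P.α)^[n] x ≠ 0) (n : ℕ) (u : ℝ) :
    Q (inverseBranch P.lam P.α x n u) = Q u := by
  simpa [inverseBranch] using hQ.apply_convergents_div hne n 1 u

lemma RosenInvariant.ofReal_mul_volume_le (hx : x ∈ P.interval)
    (hne : ∀ n, (Tmap P.lam P.α)^[n] x ≠ 0) {B : Set ℝ} (hB : MeasurableSet B)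
    (hQ : P.RosenInvariant (· ∈ B)) (n : ℕ) :
    ENNReal.ofReal (1 / (8 * (P.lam / (1 - P.lam / 2) ^ 2))) * volume (P.interval \ B) ≤
      volume (Bᶜ ∩ Metric.closedBall x (P.branchRadius x n)) /
        volume (Metric.closedBall x (P.branchRadius x n)) := by
  have hr := P.branchRadius_pos hx hne n
  have hS := (P.Spair_pos_and_snd_eq hx hne n).1
  have hsub : inverseBranch P.lam P.α x n '' (P.interval \ B) ⊆
      Bᶜ ∩ Metric.closedBall x (P.branchRadius x n) := by
    rintro _ ⟨u, hu, rfl⟩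
    exact ⟨fun hmem => hu.2 ((hQ.apply_inverseBranch hne n u).mp hmem),
      P.inverseBranch_mem_closedBall hx hne hu.1 n⟩
  rw [Real.volume_closedBall, ENNReal.le_div_iff_mul_le (Or.inl (by simpa using hr))
    (Or.inl ENNReal.ofReal_ne_top), mul_right_comm, ← ENNReal.ofReal_mul (by
      have := P.lam_pos; positivity)]
  have hconst : 1 / (8 * (P.lam / (1 - P.lam / 2) ^ 2)) * (2 * P.branchRadius x n) =
      1 / (4 * (Spair P.lam P.α x n).1 ^ 2) := by
    have := P.lam_pos.ne'
    have : P.lam / (1 - P.lam / 2) ^ 2 ≠ 0 :=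
      (div_pos P.lam_pos (pow_pos (by linarith [P.lam_lt_two]) 2)).ne'
    rw [branchRadius]
    generalize P.lam / (1 - P.lam / 2) ^ 2 = κ at *
    field_simp
    norm_num
  rw [hconst]
  exact (P.ofReal_mul_volume_le_volume_image_inverseBranch hx hne n
    (measurableSet_Icc.diff hB) sdiff_subset).trans (measure_mono hsub)

end ZeroOne

end RosenParam

section Subfield

variable {lam α x : ℝ} {K : Subfield ℝ}

lemma Tmap_notMem (hlam : lam ∈ K) (hx : x ∉ K) : Tmap lam α x ∉ K := by
  rw [Tmap_of_ne (ne_of_mem_of_not_mem K.zero_mem hx).symm]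
  intro hmem
  have habs := K.add_mem hmem (K.mul_mem hlam (intCast_mem K (dfun lam α x)))
  rw [sub_add_cancel, abs_mem_iff, one_div, inv_mem_iff] at habs
  exact hx habs

lemma iterate_Tmap_ne_zero (hlam : lam ∈ K) (hx : x ∉ K) (n : ℕ) : (Tmap lam α)^[n] x ≠ 0 :=
  have hmaps : MapsTo (Tmap lam α) (K : Set ℝ)ᶜ (K : Set ℝ)ᶜ := fun _ => Tmap_notMem hlam
  (ne_of_mem_of_not_mem K.zero_mem (hmaps.iterate n hx)).symm

end Subfield

namespace RosenParam

section ZeroOne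

variable (P : RosenParam) {x : ℝ}

/-- The field generated by `λ` and `α`. It is countable, and off it `T_α` can be iterated without
ever meeting `0` or an endpoint of its interval. -/
noncomputable def paramField : Subfield ℝ := Subfield.closure {P.lam, P.α}

lemma lam_mem_paramField : P.lam ∈ P.paramField :=
  Subfield.subset_closure (mem_insert _ _)

lemma α_mem_paramField : P.α ∈ P.paramField :=
  Subfield.subset_closure (mem_insert_of_mem _ (mem_singleton _))

lemma countable_paramField : (P.paramField : Set ℝ).Countable := by
  rw [← Cardinal.le_aleph0_iff_set_countable]
  refine (Subfield.cardinalMk_closure_le_max _).trans (max_le ?_ le_rfl)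
  exact Cardinal.le_aleph0_iff_set_countable.mpr (Set.toFinite _).countable

lemma ae_notMem_paramField : ∀ᵐ x : ℝ, x ∉ P.paramField :=
  P.countable_paramField.ae_notMem volume

lemma RosenInvariant.volume_inter_eq_zero_or {P : RosenParam} {B : Set ℝ}
    (hQ : P.RosenInvariant (· ∈ B)) (hB : MeasurableSet B) :
    volume (P.interval ∩ B) = 0 ∨ volume (P.interval \ B) = 0 := by
  refine or_iff_not_imp_left.mpr fun hpos => ?_
  have hae := (Besicovitch.ae_tendsto_measure_inter_div_of_measurableSet volume hB.compl).and
    P.ae_notMem_paramField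
  obtain ⟨x, hx, hdensity, hxK⟩ := ((frequently_ae_mem_iff.mpr hpos).and_eventually hae).exists
  rw [indicator_of_notMem (notMem_compl_iff.mpr hx.2)] at hdensity
  have hne := iterate_Tmap_ne_zero (α := P.α) P.lam_mem_paramField hxK
  have hle := ge_of_tendsto' (hdensity.comp (P.tendsto_branchRadius hx.1 hne))
    (hQ.ofReal_mul_volume_le hx.1 hne hB)
  refine (mul_eq_zero.mp (nonpos_iff_eq_zero.mp hle)).resolve_left ?_
  have hbase : 0 < P.lam / (1 - P.lam / 2) ^ 2 :=
    div_pos P.lam_pos (pow_pos (by linarith [P.lam_lt_two]) 2)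
  exact (ENNReal.ofReal_pos.mpr (by positivity)).ne'

/-- The `λ`-periodic extension of `A`, with the points of `P.paramField` removed. -/
def periodicExtension (A : Set ℝ) : Set ℝ :=
  {y | y ∉ P.paramField ∧ toIcoMod P.lam_pos (P.lam * (P.α - 1)) y ∈ A}

variable {A : Set ℝ}

lemma measurableSet_periodicExtension (hA : MeasurableSet A) :
    MeasurableSet (P.periodicExtension A) := by
  have hmod : Measurable (toIcoMod P.lam_pos (P.lam * (P.α - 1))) := by
    have : toIcoMod P.lam_pos (P.lam * (P.α - 1)) = _ := funext (toIcoMod_eq_add_fract_mul _ _)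
    rw [this]
    fun_prop
  exact P.countable_paramField.measurableSet.compl.inter (hmod hA)

lemma mem_periodicExtension_iff (hx : x ∈ P.interval) (hxK : x ∉ P.paramField) :
    x ∈ P.periodicExtension A ↔ x ∈ A := by
  have hne : x ≠ P.lam * P.α := by
    rintro rfl
    exact hxK (mul_mem P.lam_mem_paramField P.α_mem_paramField)
  have hmod : toIcoMod P.lam_pos (P.lam * (P.α - 1)) x = x :=
    (toIcoMod_eq_self P.lam_pos).mpr ⟨hx.1, (hx.2.lt_of_ne hne).trans_eq (by ring)⟩
  simp only [periodicExtension, mem_ofPred_eq, hxK, not_false_eq_true, true_and, hmod]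

lemma rosenInvariant_periodicExtension
    (hA : ∀ x ∈ P.interval, x ∉ P.paramField → (Tmap P.lam P.α x ∈ A ↔ x ∈ A)) :
    P.RosenInvariant (· ∈ P.periodicExtension A) where
  periodic y := by
    simp only [periodicExtension, mem_ofPred_eq, toIcoMod_add_right,
      add_mem_cancel_right P.lam_mem_paramField]
  apply_abs_one_div x hx := by
    by_cases hxK : x ∈ P.paramField
    · simp only [periodicExtension, mem_ofPred_eq, abs_mem_iff, one_div, inv_mem_iff, hxK,
        not_true_eq_false, false_and]
    have hx0 : x ≠ 0 := iterate_Tmap_ne_zero (α := P.α) P.lam_mem_paramField hxK 0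
    have hmod : toIcoMod P.lam_pos (P.lam * (P.α - 1)) |1 / x| = Tmap P.lam P.α x := by
      rw [← toIcoMod_sub_zsmul _ _ _ (dfun P.lam P.α x), zsmul_eq_mul, mul_comm (dfun _ _ x : ℝ),
        ← Tmap_of_ne hx0, toIcoMod_eq_self, ← mul_add_one, sub_add_cancel]
      exact Tmap_mem_Ico P.lam_pos hx0
    rw [P.mem_periodicExtension_iff hx hxK, ← hA x hx hxK]
    simp only [periodicExtension, mem_ofPred_eq, abs_mem_iff, one_div, inv_mem_iff, hxK,
      not_false_eq_true, true_and, ← hmod]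

theorem volume_inter_eq_zero_or (hA : MeasurableSet A)
    (hinv : ∀ x ∈ P.interval, x ∉ P.paramField → (Tmap P.lam P.α x ∈ A ↔ x ∈ A)) :
    volume (P.interval ∩ A) = 0 ∨ volume (P.interval \ A) = 0 := by
  have hae : ∀ᵐ x, x ∈ P.interval → (x ∈ P.periodicExtension A ↔ x ∈ A) :=
    P.ae_notMem_paramField.mono fun x hxK hx => P.mem_periodicExtension_iff hx hxK
  rcases (P.rosenInvariant_periodicExtension hinv).volume_inter_eq_zero_or
    (P.measurableSet_periodicExtension hA) with h | h
  · exact Or.inl ((measure_congr (hae.mono fun x hx => propext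
      (and_congr_right fun hI => (hx hI).symm))).trans h)
  · exact Or.inr ((measure_congr (hae.mono fun x hx => propext
      (and_congr_right fun hI => not_congr (hx hI).symm))).trans h)

end ZeroOne

end RosenParam

/-! ### Birkhoff averages -/

lemma abs_birkhoffAverage_le {X : Type*} {T : X → X} {f : X → ℝ} {M : ℝ} (hf : ∀ z, |f z| ≤ M)
    (n : ℕ) (x : X) : |birkhoffAverage ℝ T f n x| ≤ M := by
  rcases n.eq_zero_or_pos with rfl | hn
  · simpa using (abs_nonneg _).trans (hf x)
  have hn' : (0 : ℝ) < n := Nat.cast_pos.mpr hn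
  rw [birkhoffAverage, smul_eq_mul, ← div_eq_inv_mul, abs_div, Nat.abs_cast, div_le_iff₀ hn',
    mul_comm, ← nsmul_eq_mul]
  simpa [birkhoffSum] using
    Finset.abs_sum_le_sum_abs (fun i => f (T^[i] x)) (Finset.range n) |>.trans
      (Finset.sum_le_card_nsmul _ _ M fun i _ => hf _)

lemma mul_measureReal_univ_le_integral {X : Type*} [MeasurableSpace X] {μ : Measure X}
    [IsFiniteMeasure μ] {T : X → X} {f : X → ℝ} {c : ℝ} (hT : MeasurePreserving T μ μ)
    (hfm : Measurable f) (hf : Integrable f μ)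
    (hc : ∀ᵐ x ∂μ, ∃ n, 0 < n ∧ c < birkhoffAverage ℝ T f n x) :
    c * μ.real univ ≤ ∫ x, f x ∂μ := by
  have hnonneg := integral_nonneg_of_ae_exists_birkhoffSum_pos hT (hfm.sub_const c)
    (hf.sub (integrable_const c)) (hc.mono fun x ⟨n, hn, hlt⟩ => ⟨n, ?_⟩)
  · rw [integral_sub hf (integrable_const c), integral_const, smul_eq_mul] at hnonneg
    linarith
  · have hn' : (0 : ℝ) < n := Nat.cast_pos.mpr hn
    rw [birkhoffAverage, smul_eq_mul, ← div_eq_inv_mul, lt_div_iff₀ hn'] at hlt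
    simp only [birkhoffSum, Finset.sum_sub_distrib, Finset.sum_const, Finset.card_range,
      nsmul_eq_mul] at hlt ⊢
    linarith

lemma limsup_le_limsup_of_tendsto_sub {ι : Type*} {l : Filter ι} [l.NeBot] {u v : ι → ℝ}
    (hv : Filter.IsBoundedUnder (· ≤ ·) l fun i => |v i|)
    (huv : Filter.Tendsto (fun i => u i - v i) l (nhds 0)) :
    Filter.limsup u l ≤ Filter.limsup v l := by
  obtain ⟨hle, hge⟩ := Filter.isBoundedUnder_le_abs.mp hv
  calc Filter.limsup u l = Filter.limsup (v + fun i => u i - v i) l :=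
        congrArg (Filter.limsup · l) (funext fun i => (add_sub_cancel (v i) (u i)).symm)
    _ ≤ Filter.limsup v l + Filter.limsup (fun i => u i - v i) l :=
        limsup_add_le hge hle huv.isCoboundedUnder_le huv.isBoundedUnder_le
    _ = Filter.limsup v l := by rw [huv.limsup_eq, add_zero]

lemma limsup_eq_limsup_of_tendsto_sub {ι : Type*} {l : Filter ι} [l.NeBot] {u v : ι → ℝ}
    (hu : Filter.IsBoundedUnder (· ≤ ·) l fun i => |u i|)
    (hv : Filter.IsBoundedUnder (· ≤ ·) l fun i => |v i|)
    (huv : Filter.Tendsto (fun i => u i - v i) l (nhds 0)) :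
    Filter.limsup u l = Filter.limsup v l := by
  refine (limsup_le_limsup_of_tendsto_sub hv huv).antisymm (limsup_le_limsup_of_tendsto_sub hu ?_)
  simpa using huv.neg

namespace RosenParam

section Ergodic

variable (P : RosenParam)

/-- Bounded measurable functions on the natural extension that are Lipschitz along its fibres. Their
Birkhoff averages depend asymptotically only on the first coordinate of the starting point. -/
structure IsObservable (f : ℝ × ℝ → ℝ) : Prop where
  measurable : Measurable f
  exists_abs_le : ∃ M, ∀ z, |f z| ≤ M
  exists_abs_sub_le : ∃ C, ∀ t v v', (t, v) ∈ P.domain → (t, v') ∈ P.domain →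
    |f (t, v) - f (t, v')| ≤ C * |v - v'|

variable {P} {f : ℝ × ℝ → ℝ} {x v v' : ℝ}

namespace IsObservable

lemma neg (hf : P.IsObservable f) : P.IsObservable (-f) := by
  obtain ⟨M, hM⟩ := hf.exists_abs_le
  obtain ⟨C, hC⟩ := hf.exists_abs_sub_le
  refine ⟨hf.measurable.neg, ⟨M, fun z => by simpa using hM z⟩, ⟨C, fun t v v' hz hz' => ?_⟩⟩
  rw [Pi.neg_apply, Pi.neg_apply, neg_sub_neg, abs_sub_comm]
  exact hC t v v' hz hz'

lemma integrable (hf : P.IsObservable f) : Integrable f P.measure := by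
  obtain ⟨M, hM⟩ := hf.exists_abs_le
  have := P.isFiniteMeasure_measure
  exact Integrable.of_bound hf.measurable.aestronglyMeasurable M (Filter.Eventually.of_forall hM)

lemma measurable_birkhoffAverage (hf : P.IsObservable f) (n : ℕ) :
    Measurable (birkhoffAverage ℝ (Tnat P.lam P.α) f n) :=
  (measurable_birkhoffSum (measurable_Tnat P.lam P.α) hf.measurable n).const_smul (n : ℝ)⁻¹

lemma isBoundedUnder_abs_birkhoffAverage (hf : P.IsObservable f) (z : ℝ × ℝ) :
    Filter.IsBoundedUnder (· ≤ ·) Filter.atTop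
      fun n => |birkhoffAverage ℝ (Tnat P.lam P.α) f n z| := by
  obtain ⟨M, hM⟩ := hf.exists_abs_le
  exact Filter.isBoundedUnder_of ⟨M, fun n => abs_birkhoffAverage_le hM n z⟩

lemma tendsto_birkhoffAverage_sub (hf : P.IsObservable f) (hz : (x, v) ∈ P.domain)
    (hz' : (x, v') ∈ P.domain) (hne : ∀ n, (Tmap P.lam P.α)^[n] x ≠ 0) :
    Filter.Tendsto (fun n => birkhoffAverage ℝ (Tnat P.lam P.α) f n (x, v) -
      birkhoffAverage ℝ (Tnat P.lam P.α) f n (x, v')) Filter.atTop (nhds 0) := by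
  obtain ⟨C, hC⟩ := hf.exists_abs_sub_le
  have hterm : Filter.Tendsto (fun n => f ((Tnat P.lam P.α)^[n] (x, v)) -
      f ((Tnat P.lam P.α)^[n] (x, v'))) Filter.atTop (nhds 0) := by
    have hcontract := (P.tendsto_abs_iterate_Tnat_snd_sub hz hz' hne).const_mul C
    rw [mul_zero] at hcontract
    refine squeeze_zero_norm (fun n => ?_) hcontract
    have hmem := P.iterate_Tnat_mem_domain hz hne n
    have hmem' := P.iterate_Tnat_mem_domain hz' hne n
    rw [← Prod.mk.eta (p := (Tnat P.lam P.α)^[n] (x, v)), iterate_Tnat_fst] at hmem ⊢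
    rw [← Prod.mk.eta (p := (Tnat P.lam P.α)^[n] (x, v')), iterate_Tnat_fst] at hmem' ⊢
    exact hC _ _ _ hmem hmem'
  refine hterm.cesaro_smul.congr fun n => ?_
  rw [birkhoffAverage, birkhoffAverage, ← smul_sub, birkhoffSum, birkhoffSum,
    Finset.sum_sub_distrib]

lemma tendsto_birkhoffAverage_Tnat_sub (hf : P.IsObservable f) (z : ℝ × ℝ) :
    Filter.Tendsto (fun n => birkhoffAverage ℝ (Tnat P.lam P.α) f n (Tnat P.lam P.α z) -
      birkhoffAverage ℝ (Tnat P.lam P.α) f n z) Filter.atTop (nhds 0) := by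
  obtain ⟨M, hM⟩ := hf.exists_abs_le
  exact tendsto_birkhoffAverage_apply_sub_birkhoffAverage' ℝ
    (isBounded_iff_forall_norm_le.mpr ⟨M, forall_mem_range.mpr hM⟩) _ _

lemma limsup_birkhoffAverage_eq (hf : P.IsObservable f) (hz : (x, v) ∈ P.domain)
    (hz' : (x, v') ∈ P.domain) (hne : ∀ n, (Tmap P.lam P.α)^[n] x ≠ 0) :
    Filter.limsup (fun n => birkhoffAverage ℝ (Tnat P.lam P.α) f n (x, v)) Filter.atTop =
      Filter.limsup (fun n => birkhoffAverage ℝ (Tnat P.lam P.α) f n (x, v')) Filter.atTop :=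
  limsup_eq_limsup_of_tendsto_sub (hf.isBoundedUnder_abs_birkhoffAverage _)
    (hf.isBoundedUnder_abs_birkhoffAverage _) (hf.tendsto_birkhoffAverage_sub hz hz' hne)

lemma limsup_birkhoffAverage_Tmap (hf : P.IsObservable f) (hx : x ∈ P.interval)
    (hne : ∀ n, (Tmap P.lam P.α)^[n] x ≠ 0) :
    Filter.limsup (fun n => birkhoffAverage ℝ (Tnat P.lam P.α) f n (Tmap P.lam P.α x, 0))
        Filter.atTop =
      Filter.limsup (fun n => birkhoffAverage ℝ (Tnat P.lam P.α) f n (x, 0)) Filter.atTop := by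
  have hfibre : Filter.limsup (fun n => birkhoffAverage ℝ (Tnat P.lam P.α) f n
      (Tmap P.lam P.α x, 0)) Filter.atTop = Filter.limsup (fun n =>
        birkhoffAverage ℝ (Tnat P.lam P.α) f n (Tnat P.lam P.α (x, 0))) Filter.atTop :=
    hf.limsup_birkhoffAverage_eq (P.mk_zero_mem_domain (P.Tmap_mem_interval x))
      (P.Tnat_mem_domain (P.mk_zero_mem_domain hx) (hne 0)) fun n => hne (n + 1)
  rw [hfibre]
  exact limsup_eq_limsup_of_tendsto_sub (hf.isBoundedUnder_abs_birkhoffAverage _)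
    (hf.isBoundedUnder_abs_birkhoffAverage _) (hf.tendsto_birkhoffAverage_Tnat_sub _)

lemma ae_limsup_birkhoffAverage_le_of_integral_lt (hf : P.IsObservable f) {c : ℝ}
    (hc : ∫ z, f z ∂P.measure < c * P.measure.real univ) :
    ∀ᵐ x, x ∈ P.interval →
      Filter.limsup (fun n => birkhoffAverage ℝ (Tnat P.lam P.α) f n (x, 0)) Filter.atTop ≤ c := by
  set A : Set ℝ := {x | c < Filter.limsup
    (fun n => birkhoffAverage ℝ (Tnat P.lam P.α) f n (x, 0)) Filter.atTop}
  have hA : MeasurableSet A := measurableSet_lt measurable_const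
    (Measurable.limsup fun n => (hf.measurable_birkhoffAverage n).comp (by fun_prop))
  have hne := fun x (hx : x ∉ P.paramField) =>
    iterate_Tmap_ne_zero (α := P.α) P.lam_mem_paramField hx
  rcases P.volume_inter_eq_zero_or hA fun x hx hxK => by
    simp only [A, mem_ofPred_eq, hf.limsup_birkhoffAverage_Tmap hx (hne x hxK)] with hnull | hfull
  · exact (measure_eq_zero_iff_ae_notMem.mp hnull).mono fun x hx hxI =>
      not_lt.mp fun hlt => hx ⟨hxI, hlt⟩
  have := P.isFiniteMeasure_measure
  have hfst : ∀ᵐ z ∂P.measure, z.1 ∉ P.interval \ A ∧ z.1 ∉ P.paramField :=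
    P.measure_absolutelyContinuous.ae_le (Measure.quasiMeasurePreserving_fst.ae
      ((measure_eq_zero_iff_ae_notMem.mp hfull).and P.ae_notMem_paramField))
  refine absurd (mul_measureReal_univ_le_integral (c := c) P.measurePreserving_Tnat hf.measurable
    hf.integrable ?_) hc.not_ge
  filter_upwards [hfst, P.ae_mem_domain] with z ⟨hzA, hzK⟩ hz
  have hzI := (P.domain_subset hz).1
  have hlt : c < Filter.limsup _ _ := not_not.mp fun h => hzA ⟨hzI, h⟩
  rw [hf.limsup_birkhoffAverage_eq (P.mk_zero_mem_domain hzI) hz (hne _ hzK)] at hlt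
  have hbdd := Filter.isBoundedUnder_le_abs.mp (hf.isBoundedUnder_abs_birkhoffAverage z)
  have hfreq := Filter.frequently_lt_of_lt_limsup hbdd.2.isCoboundedUnder_le hlt
  exact (hfreq.and_eventually (Filter.eventually_gt_atTop 0)).exists.imp fun n h => h.symm

lemma ae_limsup_birkhoffAverage_le (hf : P.IsObservable f) :
    ∀ᵐ x, x ∈ P.interval →
      Filter.limsup (fun n => birkhoffAverage ℝ (Tnat P.lam P.α) f n (x, 0)) Filter.atTop ≤
        ⨍ z, f z ∂P.measure := by
  have hrat : ∀ᵐ x, ∀ c : ℚ, ⨍ z, f z ∂P.measure < c → x ∈ P.interval →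
      Filter.limsup (fun n => birkhoffAverage ℝ (Tnat P.lam P.α) f n (x, 0)) Filter.atTop ≤ c := by
    refine ae_all_iff.mpr fun c => ae_all_iff.mpr fun hc =>
      hf.ae_limsup_birkhoffAverage_le_of_integral_lt ?_
    rwa [average_eq, smul_eq_mul, ← div_eq_inv_mul, div_lt_iff₀ P.measureReal_univ_pos] at hc
  filter_upwards [hrat] with x hx hxI
  exact le_of_forall_lt_rat_imp_le fun c hc => hx c hc hxI

theorem ae_tendsto_birkhoffAverage (hf : P.IsObservable f) :
    ∀ᵐ x, x ∈ P.interval →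
      Filter.Tendsto (fun n => birkhoffAverage ℝ (Tnat P.lam P.α) f n (x, 0)) Filter.atTop
        (nhds (⨍ z, f z ∂P.measure)) := by
  filter_upwards [hf.ae_limsup_birkhoffAverage_le, hf.neg.ae_limsup_birkhoffAverage_le]
    with x hle hge hx
  obtain ⟨hb, hb'⟩ := Filter.isBoundedUnder_le_abs.mp (hf.isBoundedUnder_abs_birkhoffAverage (x, 0))
  refine tendsto_of_le_liminf_of_limsup_le ?_ (hle hx) hb hb'
  have hneg := hge hx
  simp only [birkhoffAverage_neg, Pi.neg_apply, average_neg,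
    ← zero_sub (birkhoffAverage ..)] at hneg
  rw [limsup_const_sub _ _ _ hb.isCoboundedUnder_ge hb'] at hneg
  linarith

end IsObservable

end Ergodic

end RosenParam

/-! ### Frequencies -/

section Cutoff

variable {a b s κ : ℝ}

/-- The piecewise linear function equal to `1` on `(-∞, a]` and to `0` on `[b, ∞)`. -/
noncomputable def cutoff (a b s : ℝ) : ℝ := max 0 (min 1 ((b - s) / (b - a)))

lemma cutoff_nonneg (a b s : ℝ) : 0 ≤ cutoff a b s := le_max_left _ _

lemma cutoff_le_one (a b s : ℝ) : cutoff a b s ≤ 1 := max_le zero_le_one (min_le_left _ _)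

lemma continuous_cutoff (a b : ℝ) : Continuous (cutoff a b) := by
  unfold cutoff
  fun_prop

lemma indicator_Iio_le_cutoff (hab : a < b) (hκ : κ ≤ a) :
    (Iio κ).indicator 1 s ≤ cutoff a b s := by
  refine indicator_apply_le' (fun hs => ?_) fun _ => cutoff_nonneg a b s
  have hs' : s < κ := hs
  exact le_max_of_le_right (le_min le_rfl ((one_le_div (by linarith)).mpr (by linarith)))

lemma cutoff_le_indicator_Iio (hab : a < b) (hκ : b ≤ κ) :
    cutoff a b s ≤ (Iio κ).indicator 1 s := by
  rcases lt_or_ge s κ with hs | hs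
  · rw [indicator_of_mem (mem_Iio.mpr hs)]
    exact cutoff_le_one a b s
  · rw [indicator_of_notMem (notMem_Iio.mpr hs)]
    exact max_le le_rfl (min_le_of_right_le
      (div_nonpos_of_nonpos_of_nonneg (by linarith) (by linarith)))

lemma abs_cutoff_sub_le (hab : a < b) (s s' : ℝ) :
    |cutoff a b s - cutoff a b s'| ≤ |s - s'| / (b - a) := by
  have hba : 0 < b - a := sub_pos.mpr hab
  calc |cutoff a b s - cutoff a b s'|
      ≤ max 0 (max 0 |(b - s) / (b - a) - (b - s') / (b - a)|) := by
        refine (abs_max_sub_max_le_max _ _ _ _).trans (max_le_max (by simp) ?_)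
        exact (abs_min_sub_min_le_max _ _ _ _).trans (max_le_max (by simp) le_rfl)
    _ = |s - s'| / (b - a) := by
        rw [← sub_div, sub_sub_sub_cancel_left, abs_div, abs_of_pos hba, abs_sub_comm,
          max_eq_right (by positivity), max_eq_right (by positivity)]

lemma sum_indicator_Iio_eq_card {ι : Type*} (F : Finset ι) (θ : ι → ℝ) (κ : ℝ) :
    ∑ i ∈ F, (Iio κ).indicator (1 : ℝ → ℝ) (θ i) = (F.filter fun i => θ i < κ).card := by
  simp only [indicator_apply, mem_Iio, Pi.one_apply, Finset.sum_boole]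

-- Only countably many cutoffs are available almost everywhere, hence the rational parameters.
theorem tendsto_card_filter_lt_div_of_tendsto_sum_cutoff {ι : Type*} {F : ℕ → Finset ι}
    {θ : ι → ℝ} {I : ℚ → ℚ → ℝ} {r : ℝ} (hr : 0 < r) (hκ : 0 < κ)
    (hlim : ∀ a b : ℚ, 0 < a → a < b → Filter.Tendsto
      (fun N : ℕ => (∑ i ∈ F N, cutoff a b (θ i)) / N) Filter.atTop (nhds (I a b)))
    (hle : ∀ a b : ℚ, 0 < a → a < b → I a b ≤ r * b)
    (hge : ∀ a b : ℚ, 0 < a → a < b → a ≤ κ → r * a ≤ I a b) :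
    Filter.Tendsto (fun N : ℕ => (((F N).filter fun i => θ i < κ).card : ℝ) / N)
      Filter.atTop (nhds (r * κ)) := by
  simp only [← sum_indicator_Iio_eq_card]
  refine tendsto_order.mpr ⟨fun η hη => ?_, fun η hη => ?_⟩
  · have hηκ : max 0 (η / r) < κ := max_lt hκ ((div_lt_iff₀' hr).mpr hη)
    obtain ⟨a, ha, haκ⟩ := exists_rat_btwn hηκ
    obtain ⟨b, hab, hbκ⟩ := exists_rat_btwn haκ
    have ha0 : 0 < a := Rat.cast_pos.mp (lt_of_le_of_lt (le_max_left _ _) ha)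
    have hab' : a < b := Rat.cast_lt.mp hab
    have hηI : η < I a b := ((div_lt_iff₀' hr).mp (lt_of_le_of_lt (le_max_right _ _) ha)).trans_le
      (hge a b ha0 hab' haκ.le)
    filter_upwards [(hlim a b ha0 hab').eventually_const_lt hηI] with N hN
    refine hN.trans_le (div_le_div_of_nonneg_right (Finset.sum_le_sum fun i _ => ?_) N.cast_nonneg)
    exact cutoff_le_indicator_Iio hab hbκ.le
  · obtain ⟨b, hκb, hb⟩ := exists_rat_btwn ((lt_div_iff₀' hr).mpr hη)
    obtain ⟨a, hκa, hab⟩ := exists_rat_btwn hκb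
    have ha0 : 0 < a := Rat.cast_pos.mp (hκ.trans hκa)
    have hab' : a < b := Rat.cast_lt.mp hab
    have hIη : I a b < η := (hle a b ha0 hab').trans_lt ((lt_div_iff₀' hr).mp hb)
    filter_upwards [(hlim a b ha0 hab').eventually_lt_const hIη] with N hN
    refine (div_le_div_of_nonneg_right (Finset.sum_le_sum fun i _ => ?_) N.cast_nonneg).trans_lt hN
    exact indicator_Iio_le_cutoff hab hκa.le

end Cutoff

/-- The observable whose value at the `n`-th point of the orbit of `(x, 0)` is the cutoff of
`Θ_n(x)`; see `RosenParam.Theta_eq`. -/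
noncomputable def cutoffObservable (a b : ℝ) (z : ℝ × ℝ) : ℝ := cutoff a b |sliceCoord z.2 z.1|

lemma sliceCoord_sub_left {t v v' : ℝ} (hv : 1 + t * v ≠ 0) (hv' : 1 + t * v' ≠ 0) :
    sliceCoord v t - sliceCoord v' t = t ^ 2 * (v' - v) / ((1 + t * v) * (1 + t * v')) := by
  rw [sliceCoord, sliceCoord, div_sub_div _ _ hv hv']
  ring

namespace RosenParam

section Frequency

variable (P : RosenParam) {a b x κ t v v' : ℝ}

lemma abs_sliceCoord_sub_le (hz : (t, v) ∈ P.domain) (hz' : (t, v') ∈ P.domain) :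
    |sliceCoord v t - sliceCoord v' t| ≤ |v - v'| / (1 - P.lam / 2) ^ 2 := by
  obtain ⟨htI, hv⟩ := P.domain_subset hz
  obtain ⟨-, hv'⟩ := P.domain_subset hz'
  have hpos : 0 < 1 - P.lam / 2 := by linarith [P.lam_lt_two]
  have hden := P.one_add_mul_pos htI hv
  have hden' := P.one_add_mul_pos htI hv'
  have ht : t ^ 2 ≤ 1 := (sq_le_one_iff_abs_le_one t).mpr
    ((P.abs_le_of_mem_interval htI).trans P.lam_mul_α_le_one)
  rw [sliceCoord_sub_left hden.ne' hden'.ne', abs_div, abs_of_pos (mul_pos hden hden'), abs_mul,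
    abs_of_nonneg (sq_nonneg t), abs_sub_comm v' v, sq (1 - P.lam / 2)]
  refine div_le_div₀ (abs_nonneg _) (mul_le_of_le_one_left (abs_nonneg _) ht) (mul_pos hpos hpos) ?_
  exact mul_le_mul (P.one_sub_half_lam_le htI hv) (P.one_sub_half_lam_le htI hv') hpos.le hden.le

lemma isObservable_cutoffObservable (hab : a < b) : P.IsObservable (cutoffObservable a b) where
  measurable := (continuous_cutoff a b).measurable.comp measurable_sliceCoord.abs
  exists_abs_le := ⟨1, fun _ => abs_le.mpr
    ⟨neg_one_lt_zero.le.trans (cutoff_nonneg _ _ _), cutoff_le_one _ _ _⟩⟩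
  exists_abs_sub_le := by
    refine ⟨1 / (1 - P.lam / 2) ^ 2 / (b - a), fun t v v' hz hz' => ?_⟩
    refine (abs_cutoff_sub_le hab _ _).trans ?_
    rw [div_mul_eq_mul_div, one_div_mul_eq_div]
    exact div_le_div_of_nonneg_right
      ((abs_abs_sub_abs_le _ _).trans (P.abs_sliceCoord_sub_le hz hz')) (sub_pos.mpr hab).le

lemma integrable_indicator_abs_sliceCoord (κ : ℝ) :
    Integrable (fun z : ℝ × ℝ => (Iio κ).indicator (1 : ℝ → ℝ) |sliceCoord z.2 z.1|) P.measure :=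
  have := P.isFiniteMeasure_measure
  (integrable_const (1 : ℝ)).indicator (measurable_sliceCoord.abs measurableSet_Iio)

lemma integral_indicator_abs_sliceCoord (κ : ℝ) :
    ∫ z, (Iio κ).indicator (1 : ℝ → ℝ) |sliceCoord z.2 z.1| ∂P.measure =
      P.measure.real {z | sliceCoord z.2 z.1 ∈ Ioo (-κ) κ} := by
  have hset : {z : ℝ × ℝ | sliceCoord z.2 z.1 ∈ Ioo (-κ) κ} =
      (fun z : ℝ × ℝ => |sliceCoord z.2 z.1|) ⁻¹' Iio κ := ext fun z => abs_lt.symm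
  rw [hset, ← integral_indicator_one (measurable_sliceCoord.abs measurableSet_Iio)]
  rfl

lemma integral_cutoffObservable_le (hab : a < b) (hb : 0 ≤ b) :
    ∫ z, cutoffObservable a b z ∂P.measure ≤ P.lam * b := by
  refine (integral_mono (P.isObservable_cutoffObservable hab).integrable
    (P.integrable_indicator_abs_sliceCoord b) fun z => cutoff_le_indicator_Iio hab le_rfl).trans ?_
  rw [integral_indicator_abs_sliceCoord]
  exact ENNReal.toReal_le_of_le_ofReal (mul_nonneg P.lam_pos.le hb)
    (P.measure_sliceCoord_mem_Ioo_le hb)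

lemma le_integral_cutoffObservable (hab : a < b) (ha : 0 ≤ a) (h1 : a ≤ P.lam / (P.lam + 2))
    (h2 : a ≤ P.lam * (2 - P.α * P.lam ^ 2) / (4 - P.lam ^ 2)) :
    P.lam * a ≤ ∫ z, cutoffObservable a b z ∂P.measure := by
  refine le_trans ?_ (integral_mono (P.integrable_indicator_abs_sliceCoord a)
    (P.isObservable_cutoffObservable hab).integrable fun z => indicator_Iio_le_cutoff hab le_rfl)
  rw [integral_indicator_abs_sliceCoord, measureReal_def, P.measure_sliceCoord_mem_Ioo_eq ha h1 h2,
    ENNReal.toReal_ofReal (mul_nonneg P.lam_pos.le ha)]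

lemma ae_tendsto_sum_cutoff_Theta (hab : a < b) :
    ∀ᵐ x, x ∈ P.interval → (∀ n, (Tmap P.lam P.α)^[n] x ≠ 0) →
      Filter.Tendsto
        (fun N : ℕ => (∑ n ∈ Finset.Icc 1 N, cutoff a b (Theta P.lam P.α x n)) / N)
        Filter.atTop (nhds (⨍ z, cutoffObservable a b z ∂P.measure)) := by
  have hobs := P.isObservable_cutoffObservable hab
  filter_upwards [hobs.ae_tendsto_birkhoffAverage] with x hx hxI hne
  have hshift := (hobs.tendsto_birkhoffAverage_Tnat_sub (x, 0)).add (hx hxI)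
  rw [zero_add] at hshift
  refine hshift.congr fun N => ?_
  rw [sub_add_cancel, birkhoffAverage, smul_eq_mul, ← div_eq_inv_mul, birkhoffSum]
  simp only [cutoffObservable, ← Function.iterate_succ_apply, ← P.Theta_eq hxI hne]
  rw [Finset.range_eq_Ico, Finset.sum_Ico_add' (fun n => cutoff a b (Theta P.lam P.α x n)) 0 N 1,
    Finset.Ico_add_one_right_eq_Icc]

theorem ae_tendsto_card_filter_Theta_lt :
    ∀ᵐ x, x ∈ P.interval → (∀ n, (Tmap P.lam P.α)^[n] x ≠ 0) →
      ∀ κ, 0 < κ → κ ≤ P.lam / (P.lam + 2) →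
        κ ≤ P.lam * (2 - P.α * P.lam ^ 2) / (4 - P.lam ^ 2) →
        Filter.Tendsto
          (fun N : ℕ => (((Finset.Icc 1 N).filter fun n => Theta P.lam P.α x n < κ).card : ℝ) / N)
          Filter.atTop (nhds (P.lam / P.measure.real univ * κ)) := by
  have hm := P.measureReal_univ_pos
  have hrat : ∀ᵐ x, ∀ a b : ℚ, a < b → x ∈ P.interval → (∀ n, (Tmap P.lam P.α)^[n] x ≠ 0) →
      Filter.Tendsto
        (fun N : ℕ => (∑ n ∈ Finset.Icc 1 N, cutoff a b (Theta P.lam P.α x n)) / N)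
        Filter.atTop (nhds (⨍ z, cutoffObservable a b z ∂P.measure)) :=
    ae_all_iff.mpr fun a => ae_all_iff.mpr fun b => ae_all_iff.mpr fun hab =>
      P.ae_tendsto_sum_cutoff_Theta (Rat.cast_lt.mpr hab)
  filter_upwards [hrat] with x hx hxI hne κ hκ h1 h2
  refine tendsto_card_filter_lt_div_of_tendsto_sum_cutoff (div_pos P.lam_pos hm) hκ
    (fun a b _ hab => hx a b hab hxI hne) (fun a b ha hab => ?_) fun a b ha hab haκ => ?_
  · rw [average_eq, smul_eq_mul, ← div_eq_inv_mul, div_mul_eq_mul_div]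
    exact div_le_div_of_nonneg_right (P.integral_cutoffObservable_le (Rat.cast_lt.mpr hab)
      (Rat.cast_nonneg.mpr (ha.trans hab).le)) hm.le
  · rw [average_eq, smul_eq_mul, ← div_eq_inv_mul, div_mul_eq_mul_div]
    exact div_le_div_of_nonneg_right (P.le_integral_cutoffObservable (Rat.cast_lt.mpr hab)
      (Rat.cast_nonneg.mpr ha.le) (haκ.trans h1) (haκ.trans h2)) hm.le

end Frequency

end RosenParam

/-- Proposition 4.3: for even `q ≥ 4`, `1/2 ≤ α ≤ 1/λ` and every `c ≥ 1/ℒ_α`, for almost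
every `x` the asymptotic frequency of `n` with `Θₙ(x) < 1/c` equals `λ C_{q,α}/c`. -/
theorem stmt19 (q : ℕ) (hq : 4 ≤ q) (hqeven : Even q) (lam α : ℝ)
    (hlam : lam = 2 * Real.cos (Real.pi / q))
    (hα1 : 1 / 2 ≤ α) (hα2 : α ≤ 1 / lam)
    (L C : ℝ)
    (hL : L = min (lam / (lam + 2)) (lam * (2 - α * lam ^ 2) / (4 - lam ^ 2)))
    (hC : C = 1 / Real.log ((1 + Real.cos (Real.pi / q)) / Real.sin (Real.pi / q))) :
    ∀ᵐ x ∂(volume : Measure ℝ),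
      x ∈ Icc (lam * (α - 1)) (α * lam) →
      (∀ n : ℕ, (Tmap lam α)^[n] x ≠ 0) →
      ∀ c : ℝ, 1 / L ≤ c →
        Filter.Tendsto
          (fun N : ℕ =>
            (((Finset.Icc 1 N).filter fun n => Theta lam α x n < 1 / c).card : ℝ) / N)
          Filter.atTop (nhds (lam * C / c)) := by
  obtain ⟨P, hqp, rfl, rfl⟩ := RosenParam.exists_eq q hq hqeven lam α hlam hα1 hα2
  have hmass : P.measure.real univ = 1 / C := by
    rw [hC, one_div_one_div, P.measureReal_univ, P.two_mul_β, hqp, Nat.cast_mul, Nat.cast_two]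
  have hLpos : 0 < L := by
    have := P.lam_pos
    rw [hL]
    exact lt_min (by positivity)
      (div_pos (mul_pos P.lam_pos P.two_sub_α_mul_lam_sq_pos) P.four_sub_lam_sq_pos)
  filter_upwards [P.ae_tendsto_card_filter_Theta_lt] with x hx hxI hne c hc
  have hcpos : 0 < c := (one_div_pos.mpr hLpos).trans_le hc
  have hcL : 1 / c ≤ L := (one_div_le hLpos hcpos).mp hc
  rw [mul_comm P.α] at hxI
  have hlim := hx hxI hne (1 / c) (one_div_pos.mpr hcpos)
    (hcL.trans (hL.trans_le (min_le_left _ _))) (hcL.trans (hL.trans_le (min_le_right _ _)))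
  rwa [hmass, div_div_eq_mul_div, div_one, mul_one_div] at hlim
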